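/- arXiv:2403.11470 — 3 statements merged into one kernel-verified Lean document; each statement's English description precedes it below -/
import Mathlib

section
/- If H is a spanning subgraph of a contractibly orderable graph, then every graph with no H⁺-minor is (|V(H⁺)|−1)-list-colorable, i.e., for every assignment of a list of at least |V(H⁺)|−1 colors to each vertex there is a proper coloring choosing each vertex's color from its list. -/
open SimpleGraph

section Defs

variable {V W : Type*}

/-- An `H`-minor in `G` given by branch sets `μ`: the branch sets are pairwise disjoint,
each induces a connected subgraph of `G`, and every edge of `H` is realized by an edge of `G`
between the corresponding branch sets. -/
def IsMinorMap (G : SimpleGraph V) (H : SimpleGraph W) (μ : W → Set V) : Prop :=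
  (∀ w, (G.induce (μ w)).Connected) ∧
  (Pairwise fun w₁ w₂ => Disjoint (μ w₁) (μ w₂)) ∧
  (∀ ⦃w₁ w₂⦄, H.Adj w₁ w₂ → ∃ a ∈ μ w₁, ∃ b ∈ μ w₂, G.Adj a b)

/-- The apex graph `H⁺`: a new vertex (`none`) joined to every vertex of `H`. -/
def apexGraph (H : SimpleGraph W) : SimpleGraph (Option W) :=
  SimpleGraph.fromRel fun a b =>
    a = none ∨ ∃ u v, a = some u ∧ b = some v ∧ H.Adj u v

/-- The set `ω_{[s]}` of the first `s` vertices of the ordering `ω`. -/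
def prevSet {t : ℕ} (ω : Fin t ≃ V) (s : ℕ) : Set V := ω '' {i | (i : ℕ) < s}

/-- The neighbours of the vertex `ω s` among the earlier vertices `ω_{[s]}`. -/
def nbrs (H : SimpleGraph V) {t : ℕ} (ω : Fin t ≃ V) (s : Fin t) : Set V :=
  {v | v ∈ prevSet ω (s : ℕ) ∧ H.Adj (ω s) v}

/-- A recursive ordering: every vertex has at most two neighbours among the earlier
vertices, and if it has exactly two then those two are adjacent. -/
def IsRecursiveOrdering (H : SimpleGraph V) {t : ℕ} (ω : Fin t ≃ V) : Prop :=
  ∀ s : Fin t, (nbrs H ω s).ncard ≤ 2 ∧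
    ∀ a ∈ nbrs H ω s, ∀ b ∈ nbrs H ω s, a ≠ b → H.Adj a b

/-- The graph `H[S]/ab` obtained from the induced subgraph on `S` by contracting the
edge `ab` (the vertex `b` is merged into `a`). -/
def contractOn (H : SimpleGraph V) (S : Set V) (a b : V) :
    SimpleGraph ↥(S \ {b}) :=
  SimpleGraph.fromRel fun x y =>
    H.Adj (x : V) (y : V) ∨ ((x : V) = a ∧ H.Adj b (y : V)) ∨
      ((y : V) = a ∧ H.Adj (x : V) b)

variable [Fintype V]

/-- A contractible ordering of `H`. -/
def IsContractibleOrdering (H : SimpleGraph V)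
    (Ω : Set (Fin (Fintype.card V) ≃ V)) : Prop :=
  Ω.Nonempty ∧ (∀ ω ∈ Ω, IsRecursiveOrdering H ω) ∧
    ∀ ω ∈ Ω, ∀ s : Fin (Fintype.card V), ∀ a ∈ nbrs H ω s, ∀ b ∈ nbrs H ω s, a ≠ b →
      ∃ ω' ∈ Ω,
        Nonempty ((H.induce (prevSet ω' ((s : ℕ) - 1))) ≃g
          contractOn H (prevSet ω (s : ℕ)) a b)

/-- A graph is contractibly orderable if it admits a contractible ordering. -/
def ContractiblyOrderable (H : SimpleGraph V) : Prop :=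
  ∃ Ω, IsContractibleOrdering H Ω

end Defs

/-!
A graph that cannot be coloured greedily has an induced subgraph `G` of minimum degree at least
`t = |V|`, so it suffices to find an `H⁺`-minor in such a `G` when `H` is contractibly orderable.
Maintain a minor model in `G` of the graph on the first `s` vertices of an ordering, together with
a set `C` of free vertices whose neighbourhood meets every branch set and nothing else. Shrinking
`C` and rerouting by Menger's theorem, we may assume that no nonempty proper subset of `C` has as
few neighbours in the contracted graph as `C`. The next vertex of the ordering has at most two
earlier neighbours, adjacent if there are two. If some `x ∈ C` is adjacent to their branch sets,
then `x` becomes the next branch set and `C` shrinks. Otherwise no vertex of `C` sees both branch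
sets, so contracting the edge between them lowers no degree in `C`; contractibility of the ordering
then yields a model on `s - 1` vertices. Since `(|C|, s)` decreases lexicographically, all of `H`
is eventually modelled, and `C`, being connected, is the branch set of the apex.
-/

section

variable {V W X Y ι ι' : Type*} {G : SimpleGraph W}

lemma IsMinorMap.comp_hom {H : SimpleGraph X} {H' : SimpleGraph Y} {μ : X → Set W}
    (hμ : IsMinorMap G H μ) (f : H' →g H) (hf : Function.Injective f) :
    IsMinorMap G H' (μ ∘ f) :=
  ⟨fun _ => hμ.1 _, hμ.2.1.comp_of_injective hf, fun _ _ h => hμ.2.2 (f.map_rel h)⟩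

lemma IsMinorMap.image {G' : SimpleGraph V} {H : SimpleGraph X} {μ : X → Set V}
    (hμ : IsMinorMap G' H μ) (f : G' →g G) (hf : Function.Injective f) :
    IsMinorMap G H fun x => f '' μ x := by
  refine ⟨fun x => ?_, fun x y hxy => (Set.disjoint_image_iff hf).2 (hμ.2.1 hxy),
    fun x y hxy => ?_⟩
  · let g : G'.induce (μ x) →g G.induce (f '' μ x) :=
      ⟨fun v => ⟨f v, Set.mem_image_of_mem f v.2⟩, fun h => f.map_rel h⟩
    refine (hμ.1 x).map g ?_
    rintro ⟨_, v, hv, rfl⟩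
    exact ⟨⟨v, hv⟩, rfl⟩
  · obtain ⟨a, ha, b, hb, hab⟩ := hμ.2.2 hxy
    exact ⟨f a, Set.mem_image_of_mem f ha, f b, Set.mem_image_of_mem f hb, f.map_rel hab⟩

lemma apexGraph_adj_none_some (H : SimpleGraph X) (v : X) : (apexGraph H).Adj none (some v) := by
  simp [apexGraph]

lemma apexGraph_adj_some_some {H : SimpleGraph X} {u v : X} :
    (apexGraph H).Adj (some u) (some v) ↔ H.Adj u v := by
  simp only [apexGraph, fromRel_adj, ne_eq, Option.some.injEq, reduceCtorEq, false_or,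
    ↓existsAndEq, true_and, H.adj_comm v u, or_self, and_iff_right_iff_imp]
  exact fun h => h.ne

lemma IsMinorMap.apexGraph_comp_hom {H : SimpleGraph X} {H' : SimpleGraph Y} {μ : Option X → Set W}
    (hμ : IsMinorMap G (apexGraph H) μ) (f : H' →g H) (hf : Function.Injective f) :
    IsMinorMap G (apexGraph H') (μ ∘ Option.map f) := by
  refine hμ.comp_hom ⟨Option.map f, ?_⟩ (Option.map_injective hf)
  rintro (_ | u) (_ | v) h
  · exact absurd rfl h.ne
  · exact apexGraph_adj_none_some H (f v)
  · exact (apexGraph_adj_none_some H (f u)).symm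
  · exact apexGraph_adj_some_some.2 (f.map_rel (apexGraph_adj_some_some.1 h))

/-- The map `f` identifies the two points `p` and `q` and is otherwise injective: on the vertices of
a graph, the effect of contracting an edge `pq`. -/
def Merges (f : X → Y) (p q : X) : Prop :=
  ∀ x y, f x = f y ↔ x = y ∨ (x = p ∧ y = q) ∨ (x = q ∧ y = p)

lemma merges_update [DecidableEq X] (p q : X) : Merges (Function.update id p q) p q := by
  intro x y
  simp only [Function.update_apply, id_eq]
  grind

namespace Merges

variable {f : X → Y} {p q : X}

lemma symm (h : Merges f p q) : Merges f q p :=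
  fun x y => (h x y).trans (or_congr_right or_comm)

lemma sumMap_id (h : Merges f p q) (Z : Type*) :
    Merges (Sum.map f (id : Z → Z)) (Sum.inl p) (Sum.inl q) := by
  rintro (x | x) (y | y)
  · simp [h x y]
  all_goals simp

lemma injOn (h : Merges f p q) : Set.InjOn f {p}ᶜ := by
  intro x hx y hy hxy
  rcases (h x y).1 hxy with hxy | ⟨hxp, -⟩ | ⟨-, hyp⟩
  exacts [hxy, absurd hxp hx, absurd hyp hy]

lemma ncard_image_eq (h : Merges f p q) {S : Set X} (hS : p ∈ S → q ∉ S) :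
    (f '' S).ncard = S.ncard := by
  refine Set.InjOn.ncard_image ?_
  by_cases hp : p ∈ S
  · exact h.symm.injOn.mono (Set.subset_compl_singleton_iff.2 (hS hp))
  · exact h.injOn.mono (Set.subset_compl_singleton_iff.2 hp)

lemma ncard_le_ncard_image_add_one [Finite X] (h : Merges f p q) (S : Set X) :
    S.ncard ≤ (f '' S).ncard + 1 := by
  have hinj : (f '' (S \ {p})).ncard = (S \ {p}).ncard :=
    (h.injOn.mono fun _ hx => hx.2).ncard_image
  have hsub : (f '' (S \ {p})).ncard ≤ (f '' S).ncard :=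
    Set.ncard_le_ncard (Set.image_mono Set.sdiff_subset) (S.toFinite.image f)
  have hdiff := Set.pred_ncard_le_ncard_sdiff_singleton S p
  omega

lemma le_ncard_image [Finite X] (h : Merges f p q) {S : Set X} {n : ℕ} (hn : n ≤ S.ncard)
    (hp : p ∈ S → n < S.ncard) : n ≤ (f '' S).ncard := by
  by_cases hpS : p ∈ S
  · exact Nat.le_of_lt_succ ((hp hpS).trans_le (h.ncard_le_ncard_image_add_one S))
  · rwa [h.ncard_image_eq fun h => absurd h hpS]

lemma connected_fiber {ℓ : W → X} (h : Merges f p q) (hpq : (G.map ℓ).Adj p q) {x : X}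
    (hconn : ∀ y, f y = f x → (G.induce (ℓ ⁻¹' {y})).Connected) :
    (G.induce (f ∘ ℓ ⁻¹' {f x})).Connected := by
  by_cases hx : x = p ∨ x = q
  · obtain ⟨-, a, b, hab, ha, hb⟩ := hpq
    have hfiber : f ∘ ℓ ⁻¹' {f x} = ℓ ⁻¹' {p} ∪ ℓ ⁻¹' {q} := by
      ext w
      simp only [Set.mem_preimage, Function.comp_apply, Set.mem_singleton_iff, Set.mem_union,
        h (ℓ w) x]
      grind
    rw [hfiber]
    exact connected_induce_union (hconn p ((h p x).2 (by tauto))).preconnected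
      (hconn q ((h q x).2 (by tauto))).preconnected ha hb hab
  · have hfiber : f ∘ ℓ ⁻¹' {f x} = ℓ ⁻¹' {x} := by
      ext w
      simp only [Set.mem_preimage, Function.comp_apply, Set.mem_singleton_iff, h (ℓ w) x]
      tauto
    rw [hfiber]
    exact hconn x rfl

end Merges

/-- The contraction of the edge `ab` of `J`, as a map on vertices, up to deleting edges of the
contracted graph. -/
structure IsEdgeContraction (J : SimpleGraph ι) (J' : SimpleGraph ι') (π : ι → ι') (a b : ι) :
    Prop where
  adj : J.Adj a b
  surjective : Function.Surjective π
  merges : Merges π a b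
  le_map : J' ≤ J.map π

lemma IsEdgeContraction.card_lt [Finite ι] {J : SimpleGraph ι} {J' : SimpleGraph ι'} {π : ι → ι'}
    {a b : ι} (h : IsEdgeContraction J J' π a b) : Nat.card ι' < Nat.card ι := by
  have := Fintype.ofFinite ι
  have := Finite.of_surjective π h.surjective
  have := Fintype.ofFinite ι'
  rw [Nat.card_eq_fintype_card, Nat.card_eq_fintype_card]
  refine Fintype.card_lt_of_surjective_not_injective π h.surjective fun hinj => h.adj.ne (hinj ?_)
  exact (h.merges a b).2 (by tauto)

lemma IsEdgeContraction.comp_iso {J : SimpleGraph ι} {J' : SimpleGraph X} {K : SimpleGraph ι'}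
    {π : ι → X} {a b : ι} (h : IsEdgeContraction J J' π a b) (φ : K ≃g J') :
    IsEdgeContraction J K (φ.symm ∘ π) a b where
  adj := h.adj
  surjective := φ.symm.surjective.comp h.surjective
  merges x y := φ.symm.injective.eq_iff.trans (h.merges x y)
  le_map i j hij := by
    obtain ⟨-, x, y, hxy, hx, hy⟩ := h.le_map (φ.map_adj_iff.2 hij)
    exact ⟨hij.ne, x, y, hxy, by simp [hx], by simp [hy]⟩

lemma exists_isEdgeContraction_contractOn {H : SimpleGraph V} {S : Set V} {a b : V} (ha : a ∈ S)
    (hb : b ∈ S) (hab : H.Adj a b) :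
    ∃ π, IsEdgeContraction (H.induce S) (contractOn H S a b) π ⟨a, ha⟩ ⟨b, hb⟩ := by
  classical
  let π (x : S) : ↥(S \ {b}) := if h : (x : V) = b then ⟨a, ha, hab.ne⟩ else ⟨x, x.2, h⟩
  have hπb : π ⟨b, hb⟩ = ⟨a, ha, hab.ne⟩ := by simp [π]
  have hπ (y : ↥(S \ {b})) : π ⟨y, y.2.1⟩ = y := dif_neg y.2.2
  refine ⟨π, hab, fun y => ⟨_, hπ y⟩, fun x y => ?_, fun x y hxy => ⟨hxy.ne, ?_⟩⟩
  · grind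
  · have hπa {z : ↥(S \ {b})} (hz : (z : V) = a) : π ⟨b, hb⟩ = z := hπb.trans (Subtype.ext hz.symm)
    obtain ⟨-, (h | ⟨h, h'⟩ | ⟨h, h'⟩) | (h | ⟨h, h'⟩ | ⟨h, h'⟩)⟩ := (fromRel_adj _ x y).1 hxy
    · exact ⟨⟨x, x.2.1⟩, ⟨y, y.2.1⟩, h, hπ x, hπ y⟩
    · exact ⟨⟨b, hb⟩, ⟨y, y.2.1⟩, h', hπa h, hπ y⟩
    · exact ⟨⟨x, x.2.1⟩, ⟨b, hb⟩, h', hπ x, hπa h⟩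
    · exact ⟨⟨x, x.2.1⟩, ⟨y, y.2.1⟩, h.symm, hπ x, hπ y⟩
    · exact ⟨⟨x, x.2.1⟩, ⟨b, hb⟩, h'.symm, hπ x, hπa h⟩
    · exact ⟨⟨b, hb⟩, ⟨y, y.2.1⟩, h'.symm, hπa h, hπ y⟩

/-- The outer vertex boundary of `Z`: the vertices outside `Z` with a neighbour in `Z`. -/
def boundary (G : SimpleGraph W) (Z : Set W) : Set W :=
  {y | y ∉ Z ∧ ∃ z ∈ Z, G.Adj y z}

lemma boundary_singleton (G : SimpleGraph W) (x : W) : boundary G {x} = G.neighborSet x := by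
  ext y
  simpa [boundary, G.adj_comm y x] using fun h : G.Adj x y => h.ne'

lemma boundary_sdiff_singleton_subset (G : SimpleGraph W) (C : Set W) (x : W) :
    boundary G (C \ {x}) ⊆ insert x (boundary G C) := by
  rintro y ⟨hy, z, hz, hyz⟩
  by_cases hyx : y = x
  · exact Or.inl hyx
  · exact Or.inr ⟨fun hyC => hy ⟨hyC, hyx⟩, z, hz.1, hyz⟩

lemma connected_of_forall_ssubset_exists_mem_boundary {C : Set W} (hC : C.Nonempty)
    (h : ∀ Z ⊂ C, Z.Nonempty → (boundary G Z ∩ C).Nonempty) : (G.induce C).Connected := by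
  obtain ⟨x, hx⟩ := hC
  let Z : Set W := Subtype.val '' {y | (G.induce C).Reachable ⟨x, hx⟩ y}
  have hZC : Z ⊆ C := by
    rintro _ ⟨y, -, rfl⟩
    exact y.2
  have hZ : Z = C := by
    by_contra hne
    obtain ⟨y, ⟨hyZ, _, ⟨z, hz, rfl⟩, hyz⟩, hyC⟩ :=
      h Z (hZC.ssubset_of_ne hne) ⟨x, ⟨x, hx⟩, Reachable.refl _, rfl⟩
    have hzy : (G.induce C).Adj z ⟨y, hyC⟩ := hyz.symm
    exact hyZ ⟨⟨y, hyC⟩, hz.trans hzy.reachable, rfl⟩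
  refine connected_iff_exists_forall_reachable _ |>.2 ⟨⟨x, hx⟩, fun y => ?_⟩
  obtain ⟨y', hy', hyy'⟩ : (y : W) ∈ Z := hZ.ge y.2
  exact Subtype.ext hyy' ▸ hy'

lemma map_comp_adj {ℓ : W → X} {f : X → Y} {u v : X} (h : (G.map ℓ).Adj u v) (hne : f u ≠ f v) :
    (G.map (f ∘ ℓ)).Adj (f u) (f v) := by
  rw [← SimpleGraph.map_map]
  exact ⟨hne, u, v, h, rfl, rfl⟩

/-- The relabelling `ι ⊕ W → ι' ⊕ W` that turns the free vertex `x` into the new branch set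
`e none`. -/
def addVertexMap [DecidableEq W] (e : Option ι ≃ ι') (x : W) : ι ⊕ W → ι' ⊕ W :=
  Sum.elim (fun i => Sum.inl (e (some i))) (Function.update Sum.inr x (Sum.inl (e none)))

lemma addVertexMap_injective [DecidableEq W] (e : Option ι ≃ ι') (x : W) :
    Function.Injective (addVertexMap e x) := by
  rintro (i | v) (j | w) h <;>
    simp only [addVertexMap, Sum.elim_inl, Sum.elim_inr, Function.update_apply] at h <;>
    grind [e.injective.eq_iff]

lemma eq_inr_of_addVertexMap_eq_inr [DecidableEq W] {e : Option ι ≃ ι'} {x v : W} {u : ι ⊕ W}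
    (h : addVertexMap e x u = Sum.inr v) : u = Sum.inr v := by
  rcases u with i | w <;>
    simp only [addVertexMap, Sum.elim_inl, Sum.elim_inr, Function.update_apply] at h <;>
    grind

/-- A model of `J` in `G` with branch sets `ℓ ⁻¹' {inl i}`, disjoint from `C` and all adjacent
to `C`, such that no other vertex outside `C` is adjacent to `C`. The labelling `ℓ` contracts the
branch sets: it fixes the remaining vertices, so that `ℓ '' boundary G Z` is the neighbourhood of
`Z ⊆ C` in the contracted graph. -/
structure IsAttachedMinor (G : SimpleGraph W) (J : SimpleGraph ι) (ℓ : W → ι ⊕ W) (C : Set W) :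
    Prop where
  connected_fiber : ∀ i, (G.induce (ℓ ⁻¹' {Sum.inl i})).Connected
  adj : ∀ ⦃i j⦄, J.Adj i j → (G.map ℓ).Adj (Sum.inl i) (Sum.inl j)
  eq_of_inr : ∀ ⦃w v⦄, ℓ w = Sum.inr v → w = v
  free : ∀ ⦃w⦄, w ∈ C → ℓ w = Sum.inr w
  image_boundary : ℓ '' boundary G C = Set.range Sum.inl

lemma ncard_range_inl (ι W : Type*) : (Set.range (Sum.inl : ι → ι ⊕ W)).ncard = Nat.card ι :=
  Set.ncard_range_of_injective Sum.inl_injective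

namespace IsAttachedMinor

variable {J : SimpleGraph ι} {J' : SimpleGraph ι'} {ℓ : W → ι ⊕ W} {C : Set W}

lemma finite [Finite W] (h : IsAttachedMinor G J ℓ C) : Finite ι := by
  have hfin : (Set.range (Sum.inl : ι → ι ⊕ W)).Finite :=
    h.image_boundary ▸ (Set.toFinite _).image ℓ
  exact (Set.finite_range_iff Sum.inl_injective).1 hfin

lemma preimage_inr (h : IsAttachedMinor G J ℓ C) {x : W} (hx : x ∈ C) :
    ℓ ⁻¹' {Sum.inr x} = {x} :=
  Set.eq_singleton_iff_unique_mem.2 ⟨h.free hx, fun _ hw => h.eq_of_inr hw⟩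

lemma image_boundary_subset_range_of_sdiff_singleton
    (h : IsAttachedMinor G J ℓ C) {x : W} {f : ι ⊕ W → ι' ⊕ W} {n : ι'}
    (hf : ∀ i, f (Sum.inl i) ∈ Set.range Sum.inl) (hx : f (ℓ x) = Sum.inl n) :
    (f ∘ ℓ) '' boundary G (C \ {x}) ⊆ Set.range Sum.inl := by
  rintro _ ⟨w, hw, rfl⟩
  rcases boundary_sdiff_singleton_subset G C x hw with rfl | hw
  · exact ⟨n, hx.symm⟩
  · obtain ⟨i, hi⟩ : ℓ w ∈ Set.range Sum.inl := h.image_boundary ▸ Set.mem_image_of_mem ℓ hw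
    simpa only [Function.comp_apply, ← hi] using hf i

lemma inl_mem_image_boundary_mono (h : IsAttachedMinor G J ℓ C) {Z Z' : Set W} (hZ : Z ⊆ Z')
    (hZ' : Z' ⊆ C) {i : ι} (hi : Sum.inl i ∈ ℓ '' boundary G Z) :
    Sum.inl i ∈ ℓ '' boundary G Z' := by
  obtain ⟨w, ⟨-, z, hz, hwz⟩, hwi⟩ := hi
  refine ⟨w, ⟨fun hw => ?_, z, hZ hz, hwz⟩, hwi⟩
  simp [h.free (hZ' hw)] at hwi

lemma exists_mem_boundary (h : IsAttachedMinor G J ℓ C) (i : ι) :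
    ∃ x ∈ C, Sum.inl i ∈ ℓ '' boundary G {x} := by
  obtain ⟨w, ⟨hw, x, hx, hwx⟩, hwi⟩ : Sum.inl i ∈ ℓ '' boundary G C := by
    rw [h.image_boundary]
    exact ⟨i, rfl⟩
  exact ⟨x, hx, w, ⟨fun hwx' => hw (hwx' ▸ hx), x, rfl, hwx⟩, hwi⟩

lemma of_subset [Finite W] (h : IsAttachedMinor G J ℓ C) {X : Set W} (hX : X ⊆ C)
    (hinl : ∀ i, Sum.inl i ∈ ℓ '' boundary G X)
    (hcard : (ℓ '' boundary G X).ncard ≤ Nat.card ι) : IsAttachedMinor G J ℓ X where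
  connected_fiber := h.connected_fiber
  adj := h.adj
  eq_of_inr := h.eq_of_inr
  free _ hw := h.free (hX hw)
  image_boundary := (Set.eq_of_subset_of_ncard_le (Set.range_subset_iff.2 hinl)
    (hcard.trans (ncard_range_inl ι W).ge) ((Set.toFinite _).image ℓ)).symm

lemma absorb [Finite W] [DecidableEq (ι ⊕ W)] (h : IsAttachedMinor G J ℓ C) {y : W} (hy : y ∈ C)
    {k : ι} (hk : Sum.inl k ∈ ℓ '' boundary G {y})
    (hcard : Nat.card ι ≤
      ((Function.update id (Sum.inr y) (Sum.inl k) ∘ ℓ) '' boundary G (C \ {y})).ncard) :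
    IsAttachedMinor G J (Function.update id (Sum.inr y) (Sum.inl k) ∘ ℓ) (C \ {y}) := by
  have := h.finite
  set f : ι ⊕ W → ι ⊕ W := Function.update id (Sum.inr y) (Sum.inl k)
  have hfy : f (Sum.inr y) = Sum.inl k := Function.update_self ..
  have hfne {u : ι ⊕ W} (hu : u ≠ Sum.inr y) : f u = u := Function.update_of_ne hu ..
  have hinl (i : ι) : f (Sum.inl i) = Sum.inl i := hfne Sum.inl_ne_inr
  obtain ⟨w, ⟨-, y', rfl : y' = y, hwy⟩, hwk⟩ := hk
  refine ⟨fun i => ?_, fun i j hij => ?_, fun w v hwv => ?_, fun w hw => ?_, ?_⟩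
  · rw [← hinl i]
    refine (merges_update (Sum.inr y') (Sum.inl k)).connected_fiber
      ⟨Sum.inr_ne_inl, _, w, hwy.symm, h.free hy, hwk⟩ fun u (hu : f u = f (Sum.inl i)) => ?_
    rcases u with j | v
    · exact h.connected_fiber j
    · obtain rfl : v = y' := by
        by_contra hv
        simp [hfne (Sum.inr_injective.ne hv), hinl] at hu
      rw [h.preimage_inr hy]
      exact Connected.of_subsingleton
  · simpa only [hinl] using map_comp_adj (f := f) (h.adj hij) (by simpa [hinl] using hij.ne)
  · refine h.eq_of_inr ((hfne fun hℓ => ?_).symm.trans hwv)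
    simp [hℓ, hfy] at hwv
  · simp [h.free hw.1, hfne (Sum.inr_injective.ne hw.2)]
  · exact Set.eq_of_subset_of_ncard_le
      (h.image_boundary_subset_range_of_sdiff_singleton (fun i => ⟨i, (hinl i).symm⟩)
        ((congrArg f (h.free hy)).trans hfy))
      ((ncard_range_inl ι W).trans_le hcard) (Set.finite_range _)

lemma add_vertex [Finite W] [DecidableEq W] (h : IsAttachedMinor G J ℓ C) (e : Option ι ≃ ι')
    {x : W} (hx : x ∈ C) (hold : ∀ ⦃i j⦄, J'.Adj (e (some i)) (e (some j)) → J.Adj i j)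
    (hnew : ∀ i, J'.Adj (e none) (e (some i)) → Sum.inl i ∈ ℓ '' boundary G {x})
    (hcard : Nat.card ι' ≤ ((addVertexMap e x ∘ ℓ) '' boundary G (C \ {x})).ncard) :
    IsAttachedMinor G J' (addVertexMap e x ∘ ℓ) (C \ {x}) := by
  have := h.finite
  have := Finite.of_equiv _ e
  have hf := addVertexMap_injective e x
  have hfiber (u : ι ⊕ W) : (addVertexMap e x ∘ ℓ) ⁻¹' {addVertexMap e x u} = ℓ ⁻¹' {u} := by
    ext w
    exact hf.eq_iff
  have hfx : addVertexMap e x (Sum.inr x) = Sum.inl (e none) := Function.update_self ..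
  have hfne {v : W} (hv : v ≠ x) : addVertexMap e x (Sum.inr v) = Sum.inr v :=
    Function.update_of_ne hv ..
  have hadj {i : ι} (hi : Sum.inl i ∈ ℓ '' boundary G {x}) :
      (G.map (addVertexMap e x ∘ ℓ)).Adj (Sum.inl (e (some i))) (Sum.inl (e none)) := by
    obtain ⟨w, ⟨-, _, rfl, hwx⟩, hwi⟩ := hi
    exact hfx ▸ map_comp_adj ⟨Sum.inl_ne_inr, w, _, hwx, hwi, h.free hx⟩
      (hf.ne Sum.inl_ne_inr)
  refine ⟨?_, ?_, fun w v hwv => ?_, fun w hw => ?_, ?_⟩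
  · rw [e.surjective.forall]
    rintro (_ | i)
    · rw [← hfx, hfiber, h.preimage_inr hx]
      exact Connected.of_subsingleton
    · exact hfiber (Sum.inl i) ▸ h.connected_fiber i
  · rw [e.surjective.forall₂]
    rintro (_ | i) (_ | j) hij
    · exact absurd rfl hij.ne
    · exact (hadj (hnew j hij)).symm
    · exact hadj (hnew i hij.symm)
    · exact map_comp_adj (h.adj (hold hij)) (Sum.inl_injective.ne hij.ne)
  · exact h.eq_of_inr (eq_inr_of_addVertexMap_eq_inr hwv)
  · simp [h.free hw.1, hfne hw.2]
  · exact Set.eq_of_subset_of_ncard_le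
      (h.image_boundary_subset_range_of_sdiff_singleton (fun i => ⟨e (some i), rfl⟩)
        ((congrArg _ (h.free hx)).trans hfx))
      ((ncard_range_inl ι' W).trans_le hcard) (Set.finite_range _)

/-- Menger's theorem, by contraction: a vertex `y` of `C \ X` adjacent to the branch set `k` is
absorbed into it. This fails only if it leaves some `Z ⊇ X` with too few neighbours; such a `Z` is
tight, so one can link `C` to `Z` and then `Z` to `X`. -/
lemma exists_linked [Finite W] (h : IsAttachedMinor G J ℓ C) {X : Set W} (hX : X ⊆ C)
    (hXcard : (ℓ '' boundary G X).ncard ≤ Nat.card ι)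
    (hcard : ∀ Z, X ⊆ Z → Z ⊆ C → Nat.card ι ≤ (ℓ '' boundary G Z).ncard) :
    ∃ ℓ' : W → ι ⊕ W, IsAttachedMinor G J ℓ' X ∧
      ∀ Z ⊆ X, (ℓ' '' boundary G Z).ncard = (ℓ '' boundary G Z).ncard := by
  classical
  have := h.finite
  induction hn : C.ncard - X.ncard using Nat.strong_induction_on generalizing C X ℓ with | _ n ih =>
  subst hn
  by_cases hall : ∀ i, Sum.inl i ∈ ℓ '' boundary G X
  · exact ⟨ℓ, h.of_subset hX hall hXcard, fun _ _ => rfl⟩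
  obtain ⟨k, hk⟩ := not_forall.1 hall
  obtain ⟨y, hyC, hyk⟩ := h.exists_mem_boundary k
  have hyX : y ∉ X := fun hyX =>
    hk (h.inl_mem_image_boundary_mono (Set.singleton_subset_iff.2 hyX) hX hyk)
  have hXy : X ⊆ C \ {y} := Set.subset_sdiff_singleton hX hyX
  have hXy_card := Set.ncard_le_ncard hXy
  have hCy_card := Set.ncard_sdiff_singleton_lt_of_mem hyC
  by_cases htight : ∃ Z, X ⊆ Z ∧ Z ⊆ C \ {y} ∧ Sum.inl k ∈ ℓ '' boundary G Z ∧
      (ℓ '' boundary G Z).ncard ≤ Nat.card ι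
  · obtain ⟨Z, hXZ, hZy, hkZ, hZcard⟩ := htight
    have hZC : Z ⊆ C := hZy.trans Set.sdiff_subset
    have hXZ_card := Set.ncard_lt_ncard (hXZ.ssubset_of_ne fun hXZ => hk (hXZ ▸ hkZ))
    have hZy_card := Set.ncard_le_ncard hZy
    obtain ⟨ℓ₁, h₁, hℓ₁⟩ := ih _ (by omega) h hZC hZcard
      (fun T hZT hTC => hcard T (hXZ.trans hZT) hTC) rfl
    obtain ⟨ℓ₂, h₂, hℓ₂⟩ := ih _ (by omega) h₁ hXZ ((hℓ₁ X hXZ).trans_le hXcard)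
      (fun T hXT hTZ => (hcard T hXT (hTZ.trans hZC)).trans_eq (hℓ₁ T hTZ).symm) rfl
    exact ⟨ℓ₂, h₂, fun T hTX => (hℓ₂ T hTX).trans (hℓ₁ T (hTX.trans hXZ))⟩
  · set f : ι ⊕ W → ι ⊕ W := Function.update id (Sum.inr y) (Sum.inl k)
    have hf : Merges f (Sum.inl k) (Sum.inr y) := (merges_update _ _).symm
    have hcard' (Z : Set W) (hXZ : X ⊆ Z) (hZy : Z ⊆ C \ {y}) :
        Nat.card ι ≤ ((f ∘ ℓ) '' boundary G Z).ncard := by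
      rw [Set.image_comp]
      refine hf.le_ncard_image (hcard Z hXZ (hZy.trans Set.sdiff_subset)) fun hkZ => ?_
      exact not_le.1 fun hle => htight ⟨Z, hXZ, hZy, hkZ, hle⟩
    have hpreserve (Z : Set W) (hZX : Z ⊆ X) :
        ((f ∘ ℓ) '' boundary G Z).ncard = (ℓ '' boundary G Z).ncard := by
      rw [Set.image_comp, hf.ncard_image_eq fun hkZ =>
        absurd (h.inl_mem_image_boundary_mono hZX hX hkZ) hk]
    obtain ⟨ℓ', h', hℓ'⟩ := ih _ (by omega) (h.absorb hyC hyk (hcard' _ hXy subset_rfl)) hXy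
      ((hpreserve X subset_rfl).trans_le hXcard) hcard' rfl
    exact ⟨ℓ', h', fun Z hZX => (hℓ' Z hZX).trans (hpreserve Z hZX)⟩

end IsAttachedMinor

/-- A tight attached minor: every vertex of `C` has at least `t` neighbours in the contracted graph,
and no nonempty proper subset of `C` has as few neighbours there as `C` itself. -/
structure IsCriticalMinor (G : SimpleGraph W) (t : ℕ) (J : SimpleGraph ι) (ℓ : W → ι ⊕ W)
    (C : Set W) : Prop extends IsAttachedMinor G J ℓ C where
  nonempty : C.Nonempty
  le_degree : ∀ x ∈ C, t ≤ (ℓ '' boundary G {x}).ncard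
  card_lt : ∀ Z ⊂ C, Z.Nonempty → Nat.card ι < (ℓ '' boundary G Z).ncard

lemma IsAttachedMinor.exists_isCriticalMinor [Finite W] {t : ℕ} {J : SimpleGraph ι}
    {ℓ : W → ι ⊕ W} {C : Set W} (h : IsAttachedMinor G J ℓ C) (hC : C.Nonempty)
    (hdeg : ∀ x ∈ C, t ≤ (ℓ '' boundary G {x}).ncard)
    (hcard : ∀ Z ⊆ C, Z.Nonempty → Nat.card ι ≤ (ℓ '' boundary G Z).ncard) :
    ∃ X ⊆ C, ∃ ℓ' : W → ι ⊕ W, IsCriticalMinor G t J ℓ' X := by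
  have hCtight : (ℓ '' boundary G C).ncard ≤ Nat.card ι :=
    (congrArg Set.ncard h.image_boundary).trans (ncard_range_inl ι W) |>.le
  obtain ⟨X, ⟨hXC, hX, hXtight⟩, hmin⟩ := (Set.toFinite {X : Set W | X ⊆ C ∧ X.Nonempty ∧
    (ℓ '' boundary G X).ncard ≤ Nat.card ι}).exists_minimal ⟨C, subset_rfl, hC, hCtight⟩
  obtain ⟨ℓ', h', hℓ'⟩ := h.exists_linked hXC hXtight fun Z hXZ hZC => hcard Z hZC (hX.mono hXZ)
  refine ⟨X, hXC, ℓ', h', hX, fun x hx => ?_, fun Z hZX hZ => ?_⟩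
  · rw [hℓ' _ (Set.singleton_subset_iff.2 hx)]
    exact hdeg x (hXC hx)
  · rw [hℓ' Z hZX.subset]
    by_contra! hle
    exact hZX.not_subset (hmin ⟨hZX.subset.trans hXC, hZ, hle⟩ hZX.subset)

namespace IsCriticalMinor

variable {t : ℕ} {J : SimpleGraph ι} {J' : SimpleGraph ι'} {ℓ : W → ι ⊕ W} {C : Set W}

lemma connected [Finite W] (h : IsCriticalMinor G t J ℓ C) : (G.induce C).Connected := by
  have := h.finite
  refine connected_of_forall_ssubset_exists_mem_boundary h.nonempty fun Z hZC hZ => ?_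
  by_contra hempty
  have hsub : boundary G Z ⊆ boundary G C := fun y hy =>
    ⟨fun hyC => hempty ⟨y, hy, hyC⟩, hy.2.imp fun z hz => ⟨hZC.subset hz.1, hz.2⟩⟩
  have hle : (ℓ '' boundary G Z).ncard ≤ (ℓ '' boundary G C).ncard :=
    Set.ncard_le_ncard (Set.image_mono hsub) (Set.toFinite _)
  rw [h.image_boundary, ncard_range_inl] at hle
  exact (h.card_lt Z hZC hZ).not_ge hle

lemma isMinorMap_apexGraph [Finite W] (h : IsCriticalMinor G t J ℓ C) :
    IsMinorMap G (apexGraph J) fun o => o.elim C fun i => ℓ ⁻¹' {Sum.inl i} := by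
  have hdisj (i : ι) : Disjoint C (ℓ ⁻¹' {Sum.inl i}) :=
    Set.disjoint_left.2 fun w hw hwi => Sum.inr_ne_inl ((h.free hw).symm.trans hwi)
  have hadj (i : ι) : ∃ a ∈ C, ∃ b ∈ ℓ ⁻¹' {Sum.inl i}, G.Adj a b := by
    obtain ⟨x, hx, w, ⟨-, _, rfl, hwx⟩, hwi⟩ := h.exists_mem_boundary i
    exact ⟨_, hx, w, hwi, hwx.symm⟩
  refine ⟨?_, ?_, ?_⟩
  · rintro (_ | i)
    exacts [h.connected, h.connected_fiber i]
  · rintro (_ | i) (_ | j) hij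
    · exact absurd rfl hij
    · exact hdisj j
    · exact (hdisj i).symm
    · exact Set.disjoint_singleton.2 (by simpa using hij) |>.preimage ℓ
  · rintro (_ | i) (_ | j) hij
    · exact absurd rfl hij.ne
    · exact hadj j
    · obtain ⟨a, ha, b, hb, hab⟩ := hadj i
      exact ⟨b, hb, a, ha, hab.symm⟩
    · obtain ⟨-, a, b, hab, ha, hb⟩ := h.adj (apexGraph_adj_some_some.1 hij)
      exact ⟨a, ha, b, hb, hab⟩

lemma contract [Finite W] {π : ι → ι'} {a b : ι} (h : IsCriticalMinor G t J ℓ C)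
    (hπ : IsEdgeContraction J J' π a b)
    (hab : ∀ x ∈ C, Sum.inl a ∈ ℓ '' boundary G {x} → Sum.inl b ∉ ℓ '' boundary G {x}) :
    IsCriticalMinor G t J' (Sum.map π id ∘ ℓ) C := by
  have := h.finite
  have hf : Merges (Sum.map π (id : W → W)) (Sum.inl a) (Sum.inl b) := hπ.merges.sumMap_id W
  have hcard := hπ.card_lt
  refine ⟨⟨fun i => ?_, fun i j hij => ?_, fun w v hwv => ?_, fun w hw => ?_, ?_⟩, h.nonempty,
    fun x hx => ?_, fun Z hZC hZ => ?_⟩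
  · obtain ⟨i, rfl⟩ := hπ.surjective i
    refine hf.connected_fiber (x := Sum.inl i) (h.adj hπ.adj) fun y hy => ?_
    rcases y with j | v
    · exact h.connected_fiber j
    · exact absurd hy Sum.inr_ne_inl
  · obtain ⟨-, x, y, hxy, rfl, rfl⟩ := hπ.le_map hij
    exact map_comp_adj (h.adj hxy) (Sum.inl_injective.ne hij.ne)
  · rcases hℓ : ℓ w with i | u
    · simp [hℓ] at hwv
    · exact h.eq_of_inr (by simpa [hℓ] using hwv)
  · simp [h.free hw]
  · rw [Set.image_comp, h.image_boundary, ← Set.range_comp]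
    exact hπ.surjective.range_comp Sum.inl
  · rw [Set.image_comp, hf.ncard_image_eq (hab x hx)]
    exact h.le_degree x hx
  · have hlt := h.card_lt Z hZC hZ
    rw [Set.image_comp]
    exact hcard.trans_le (hf.le_ncard_image hlt.le fun _ => hlt)

lemma add_vertex [Finite W] (h : IsCriticalMinor G t J ℓ C) (ht : Nat.card ι < t)
    (e : Option ι ≃ ι') {x : W} (hx : x ∈ C)
    (hold : ∀ ⦃i j⦄, J'.Adj (e (some i)) (e (some j)) → J.Adj i j)
    (hnew : ∀ i, J'.Adj (e none) (e (some i)) → Sum.inl i ∈ ℓ '' boundary G {x}) :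
    ∃ X ⊂ C, ∃ ℓ' : W → ι' ⊕ W, IsCriticalMinor G t J' ℓ' X := by
  classical
  have := h.finite
  have hcard : Nat.card ι' = Nat.card ι + 1 := (Nat.card_congr e).symm.trans Finite.card_option
  have hf (Z : Set W) :
      ((addVertexMap e x ∘ ℓ) '' boundary G Z).ncard = (ℓ '' boundary G Z).ncard := by
    rw [Set.image_comp, Set.ncard_image_of_injective _ (addVertexMap_injective e x)]
  have hle (Z : Set W) (hZ : Z ⊆ C \ {x}) (hZne : Z.Nonempty) :
      Nat.card ι' ≤ ((addVertexMap e x ∘ ℓ) '' boundary G Z).ncard := by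
    rw [hf, hcard]
    exact h.card_lt Z (hZ.trans_ssubset (Set.sdiff_singleton_ssubset.2 hx)) hZne
  have hne : (C \ {x}).Nonempty := by
    by_contra! hempty
    have hC : C = {x} := (Set.sdiff_eq_empty.1 hempty).antisymm (Set.singleton_subset_iff.2 hx)
    have hdeg := h.le_degree x hx
    rw [← hC, h.image_boundary, ncard_range_inl] at hdeg
    omega
  obtain ⟨X, hX, ℓ', h'⟩ :=
    (h.toIsAttachedMinor.add_vertex e hx hold hnew (hle _ subset_rfl hne)).exists_isCriticalMinor
      hne (fun y hy => (h.le_degree y hy.1).trans_eq (hf _).symm) hle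
  exact ⟨X, ⟨hX.trans Set.sdiff_subset, fun hCX => (hX (hCX hx)).2 rfl⟩, ℓ', h'⟩

end IsCriticalMinor

lemma mem_prevSet_iff {t : ℕ} {ω : Fin t ≃ V} {s : ℕ} {v : V} :
    v ∈ prevSet ω s ↔ (ω.symm v : ℕ) < s := by
  rw [prevSet, Equiv.image_eq_preimage_symm]
  rfl

lemma card_prevSet {t : ℕ} (ω : Fin t ≃ V) {s : ℕ} (hs : s ≤ t) : Nat.card (prevSet ω s) = s := by
  rw [prevSet, ← Fin.range_castLE hs, Nat.card_image_of_injective ω.injective,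
    Nat.card_range_of_injective (Fin.castLE_injective hs), Nat.card_fin]

lemma exists_equiv_option_prevSet_succ {t : ℕ} (ω : Fin t ≃ V) (s : Fin t) :
    ∃ e : Option (prevSet ω s) ≃ prevSet ω (s + 1),
      (∀ v, (e (some v) : V) = v) ∧ (e none : V) = ω s := by
  classical
  have hs : ω s ∉ prevSet ω s := by simp [mem_prevSet_iff]
  have hsucc : insert (ω s) (prevSet ω s) = prevSet ω (s + 1) := by
    ext v
    rw [Set.mem_insert_iff, mem_prevSet_iff, mem_prevSet_iff, Nat.lt_succ_iff_lt_or_eq, or_comm,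
      ← Fin.ext_iff, Equiv.symm_apply_eq]
  refine ⟨(Set.subtypeInsertEquivOption hs).symm.trans (Equiv.setCongr hsucc), fun _ => rfl, rfl⟩

lemma IsRecursiveOrdering.subsingleton_nbrs_or_eq_pair {H : SimpleGraph V} {t : ℕ} {ω : Fin t ≃ V}
    (h : IsRecursiveOrdering H ω) (s : Fin t) :
    (nbrs H ω s).Subsingleton ∨ ∃ a b, H.Adj a b ∧ nbrs H ω s = {a, b} := by
  refine or_iff_not_imp_left.2 fun hns => ?_
  obtain ⟨a, ha, b, hb, hab⟩ := Set.not_subsingleton_iff.1 hns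
  have hfin : (nbrs H ω s).Finite := (Set.toFinite _).image ω |>.subset Set.inter_subset_left
  refine ⟨a, b, (h s).2 a ha b hb hab, (Set.eq_of_subset_of_ncard_le ?_ ?_ hfin).symm⟩
  · exact Set.insert_subset ha (Set.singleton_subset_iff.2 hb)
  · exact (h s).1.trans (Set.ncard_pair hab).ge

namespace IsCriticalMinor

variable {H : SimpleGraph V} {t : ℕ} {C : Set W}

lemma add_next_vertex [Finite W] {ω : Fin t ≃ V} {s : Fin t} {ℓ : W → prevSet ω s ⊕ W}
    (h : IsCriticalMinor G t (H.induce (prevSet ω s)) ℓ C) {x : W} (hx : x ∈ C)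
    (hnbrs : ∀ v : prevSet ω s, ↑v ∈ nbrs H ω s → Sum.inl v ∈ ℓ '' boundary G {x}) :
    ∃ X ⊂ C, ∃ ℓ' : W → prevSet ω (s + 1) ⊕ W,
      IsCriticalMinor G t (H.induce (prevSet ω (s + 1))) ℓ' X := by
  obtain ⟨e, hold, hnew⟩ := exists_equiv_option_prevSet_succ ω s
  refine h.add_vertex ((card_prevSet ω s.2.le).trans_lt s.2) e hx (fun u v huv => ?_) fun v hv => ?_
  · simpa [hold] using huv
  · exact hnbrs v ⟨v.2, by simpa [hold, hnew] using hv⟩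

lemma exists_succ_or_pred [Fintype V] [Finite W] {Ω : Set (Fin (Fintype.card V) ≃ V)}
    (hΩ : IsContractibleOrdering H Ω) {ω : Fin (Fintype.card V) ≃ V} (hω : ω ∈ Ω)
    {s : Fin (Fintype.card V)} {ℓ : W → prevSet ω s ⊕ W}
    (h : IsCriticalMinor G (Fintype.card V) (H.induce (prevSet ω s)) ℓ C) :
    (∃ X ⊂ C, ∃ ℓ' : W → prevSet ω (s + 1) ⊕ W,
      IsCriticalMinor G (Fintype.card V) (H.induce (prevSet ω (s + 1))) ℓ' X) ∨
    (0 < (s : ℕ) ∧ ∃ ω' ∈ Ω, ∃ ℓ' : W → prevSet ω' (s - 1) ⊕ W,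
      IsCriticalMinor G (Fintype.card V) (H.induce (prevSet ω' (s - 1))) ℓ' C) := by
  obtain ⟨-, hrec, hcontract⟩ := hΩ
  rcases (hrec ω hω).subsingleton_nbrs_or_eq_pair s with hsub | ⟨a, b, hab, hnbrs⟩
  · left
    obtain ⟨x, hx, hxnbrs⟩ : ∃ x ∈ C, ∀ v : prevSet ω s, ↑v ∈ nbrs H ω s →
        Sum.inl v ∈ ℓ '' boundary G {x} := by
      rcases hsub.eq_empty_or_singleton with hempty | ⟨a, ha⟩
      · exact h.nonempty.imp fun x hx => ⟨hx, by simp [hempty]⟩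
      · have hmem : a ∈ nbrs H ω s := ha ▸ rfl
        obtain ⟨x, hx, hxa⟩ := h.exists_mem_boundary ⟨a, hmem.1⟩
        exact ⟨x, hx, fun v hv => by rwa [Subtype.ext (a2 := ⟨a, hmem.1⟩) (hsub hv hmem)]⟩
    exact h.add_next_vertex hx hxnbrs
  · have ha : a ∈ nbrs H ω s := hnbrs ▸ Set.mem_insert a {b}
    have hb : b ∈ nbrs H ω s := hnbrs ▸ Set.mem_insert_of_mem a rfl
    by_cases hcommon : ∃ x ∈ C, Sum.inl ⟨a, ha.1⟩ ∈ ℓ '' boundary G {x} ∧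
        Sum.inl ⟨b, hb.1⟩ ∈ ℓ '' boundary G {x}
    · left
      obtain ⟨x, hx, hxa, hxb⟩ := hcommon
      refine h.add_next_vertex hx ?_
      rintro ⟨v, hv⟩ hvn
      rcases hnbrs.subset hvn with rfl | rfl
      exacts [hxa, hxb]
    · right
      obtain ⟨ω', hω', ⟨φ⟩⟩ := hcontract ω hω s a ha b hb hab.ne
      obtain ⟨π, hπ⟩ := exists_isEdgeContraction_contractOn ha.1 hb.1 hab
      exact ⟨(Nat.zero_le _).trans_lt (mem_prevSet_iff.1 ha.1), ω', hω', _,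
        h.contract (hπ.comp_iso φ) fun x hx hxa hxb => hcommon ⟨x, hx, hxa, hxb⟩⟩

end IsCriticalMinor

theorem IsCriticalMinor.exists_isMinorMap_apexGraph [Fintype V] [Finite W]
    {H : SimpleGraph V} {C : Set W} {Ω : Set (Fin (Fintype.card V) ≃ V)}
    (hΩ : IsContractibleOrdering H Ω) {ω : Fin (Fintype.card V) ≃ V} (hω : ω ∈ Ω) {s : ℕ}
    (hs : s ≤ Fintype.card V) {ℓ : W → prevSet ω s ⊕ W}
    (h : IsCriticalMinor G (Fintype.card V) (H.induce (prevSet ω s)) ℓ C) :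
    ∃ μ : Option V → Set W, IsMinorMap G (apexGraph H) μ := by
  rcases hs.eq_or_lt with rfl | hs
  · let f : H →g H.induce (prevSet ω (Fintype.card V)) :=
      ⟨fun v => ⟨v, mem_prevSet_iff.2 (ω.symm v).2⟩, id⟩
    exact ⟨_, h.isMinorMap_apexGraph.apexGraph_comp_hom f fun u v huv => congrArg Subtype.val huv⟩
  · rcases h.exists_succ_or_pred (s := ⟨s, hs⟩) hΩ hω with
      ⟨X, hXC, ℓ', h'⟩ | ⟨hpos, ω', hω', ℓ', h'⟩
    · have := Set.ncard_lt_ncard hXC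
      exact exists_isMinorMap_apexGraph hΩ hω hs h'
    · have := Nat.sub_one_lt hpos.ne'
      exact exists_isMinorMap_apexGraph hΩ hω' ((Nat.pred_le s).trans hs.le) h'
termination_by (C.ncard, s)

theorem ContractiblyOrderable.exists_isMinorMap_apexGraph_of_le_degree [Fintype V] [Finite W]
    [Nonempty W] {H : SimpleGraph V} (hH : ContractiblyOrderable H)
    (hdeg : ∀ x, Fintype.card V ≤ (G.neighborSet x).ncard) :
    ∃ μ : Option V → Set W, IsMinorMap G (apexGraph H) μ := by
  obtain ⟨Ω, hΩ⟩ := hH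
  obtain ⟨ω, hω⟩ := hΩ.1
  have : IsEmpty (prevSet ω 0) := by simp [prevSet]
  have hattached : IsAttachedMinor G (H.induce (prevSet ω 0)) Sum.inr Set.univ :=
    ⟨isEmptyElim, fun i => isEmptyElim i, fun _ _ h => Sum.inr_injective h, fun _ _ => rfl,
      by simp [boundary, Set.range_eq_empty]⟩
  obtain ⟨C, -, ℓ, h⟩ := hattached.exists_isCriticalMinor (t := Fintype.card V) Set.univ_nonempty
    (fun x _ => by
      rw [boundary_singleton, Set.ncard_image_of_injective _ Sum.inr_injective]
      exact hdeg x)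
    fun Z _ _ => by simp
  exact h.exists_isMinorMap_apexGraph hΩ hω (Nat.zero_le _)

lemma exists_list_coloring [Finite W] {α : Type*} (L : W → Finset α)
    (h : ∀ U : Set W, U.Nonempty → ∃ x ∈ U, (G.neighborSet x ∩ U).ncard < (L x).card) :
    ∃ c : W → α, (∀ w, c w ∈ L w) ∧ ∀ ⦃u v⦄, G.Adj u v → c u ≠ c v := by
  classical
  have hL (w : W) : (L w).Nonempty := by
    obtain ⟨_, rfl, hw⟩ := h {w} (Set.singleton_nonempty w)
    exact Finset.card_pos.1 ((Nat.zero_le _).trans_lt hw)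
  suffices hU : ∀ U : Set W, ∃ c : W → α, (∀ w, c w ∈ L w) ∧
      ∀ u ∈ U, ∀ v ∈ U, G.Adj u v → c u ≠ c v by
    obtain ⟨c, hcL, hc⟩ := hU Set.univ
    exact ⟨c, hcL, fun u v => hc u trivial v trivial⟩
  intro U
  induction U using WellFoundedLT.induction with | _ U ih
  rcases U.eq_empty_or_nonempty with rfl | hU
  · choose c hc using hL
    exact ⟨c, hc, by simp⟩
  obtain ⟨x, hxU, hx⟩ := h U hU
  obtain ⟨c, hcL, hc⟩ := ih (U \ {x}) (Set.sdiff_singleton_ssubset.2 hxU)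
  obtain ⟨a, haL, ha⟩ : ∃ a ∈ L x, a ∉ c '' (G.neighborSet x ∩ U) :=
    Set.exists_mem_notMem_of_ncard_lt_ncard
      ((Set.ncard_image_le (Set.toFinite _)).trans_lt (hx.trans_eq (Set.ncard_coe_finset _).symm))
  have hne {v : W} (hv : v ∈ U) (hxv : G.Adj x v) :
      Function.update c x a x ≠ Function.update c x a v := by
    rw [Function.update_self, Function.update_of_ne hxv.ne']
    exact fun hav => ha ⟨v, ⟨hxv, hv⟩, hav.symm⟩
  refine ⟨Function.update c x a, fun w => ?_, fun u hu v hv huv => ?_⟩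
  · rcases eq_or_ne w x with rfl | hw
    · rwa [Function.update_self]
    · rw [Function.update_of_ne hw]
      exact hcL w
  · rcases eq_or_ne u x with rfl | hux
    · exact hne hv huv
    rcases eq_or_ne v x with rfl | hvx
    · exact (hne hu huv.symm).symm
    rw [Function.update_of_ne hux, Function.update_of_ne hvx]
    exact hc u ⟨hu, hux⟩ v ⟨hv, hvx⟩ huv

end

/-- If `H` is a spanning subgraph of a contractibly orderable graph, then every graph with no
`H⁺`-minor is `(|V(H⁺)|-1)`-list-colorable: for every assignment of a list of at least
`|V(H)|` colors to each vertex there is a proper coloring choosing each vertex's color from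
its own list. -/
theorem no_apex_minor_implies_list_colorable
    {V W : Type*} [Fintype V] [Fintype W]
    (H H₁ : SimpleGraph V) (hle : H ≤ H₁) (hco : ContractiblyOrderable H₁)
    (G : SimpleGraph W)
    (hminor : ¬ ∃ μ : Option V → Set W, IsMinorMap G (apexGraph H) μ)
    (α : Type*) (L : W → Finset α) (hL : ∀ w, Fintype.card V ≤ (L w).card) :
    ∃ c : W → α, (∀ w, c w ∈ L w) ∧ ∀ ⦃u v : W⦄, G.Adj u v → c u ≠ c v := by
  refine exists_list_coloring L fun U hU => ?_
  by_contra! hdeg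
  have := hU.to_subtype
  obtain ⟨μ, hμ⟩ := hco.exists_isMinorMap_apexGraph_of_le_degree (G := G.induce U) fun x => by
    have hx : Subtype.val '' (G.induce U).neighborSet x = G.neighborSet x ∩ U := by
      rw [neighborSet_induce, Subtype.image_preimage_coe, Set.inter_comm]
    rw [← Set.ncard_image_of_injective _ Subtype.val_injective, hx]
    exact (hL x).trans (hdeg x x.2)
  have hμG := hμ.image (Embedding.induce U).toHom Subtype.val_injective
  exact hminor ⟨_, hμG.apexGraph_comp_hom (Hom.ofLE hle) Function.injective_id⟩
end

section
/- Let t be a positive integer and let H be a graph on t vertices admitting a contractible ordering Ω. If G is a graph and S ⊆ V(G) is well-connected in G such that every vertex in V(G)∖S has degree at least t in G and G[S] contains a spanning subgraph isomorphic to H[ω_{[|S|]}] for some ω ∈ Ω, then G contains an H⁺-minor such that the branch set of the apex is a singleton contained in V(G)∖S. -/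
open SimpleGraph

section Sep

variable {V : Type*}

/-- A separation of `G`: a pair of sets covering `V(G)` with no edge from `A∖B` to `B∖A`. -/
def IsSeparation (G : SimpleGraph V) (A B : Set V) : Prop :=
  A ∪ B = Set.univ ∧ ∀ a ∈ A \ B, ∀ b ∈ B \ A, ¬ G.Adj a b

/-- `S` is well-connected in `G`: `S ≠ V(G)` and there is no nontrivial separation `(A,B)`
with `S ⊆ A` of order less than `|S|`. -/
def WellConnected (G : SimpleGraph V) (S : Set V) : Prop :=
  S ≠ Set.univ ∧
    ¬ ∃ A B : Set V, IsSeparation G A B ∧ (A \ B).Nonempty ∧ (B \ A).Nonempty ∧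
      S ⊆ A ∧ (A ∩ B).ncard < S.ncard

end Sep

/-!
Call `(G, S)` anchored if it satisfies the hypotheses of the theorem, and take `S` maximal for `G`.

If `|S| ≥ t`, then `G[S]` contains a spanning copy of `H`. Pick `w ∉ S`; by well-connectedness and
Menger's theorem there are `|S|` disjoint connected sets in `G - w` joining `S` to the neighbours of
`w`, and together with `{w}` they are the branch sets of an `H⁺`-minor.

If `|S| < t`, we find an anchored minor of `G` on fewer vertices whose vertices outside the anchor
are vertices of `G` outside `S`. Suppose first that some nontrivial separation `(A, B)` with `S ⊆ A`
has order at most `|S|`. Menger's theorem links `S` to `A ∩ B` within `A`, and contracting the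
linkage puts the copy of `H[ω_{[|S|]}]` on `A ∩ B` in a minor with vertex set `B`. Otherwise
`S ∪ {v}` is well-connected for every `v ∉ S`, so by maximality no `v ∉ S` is adjacent to the images
of all earlier neighbours of the next vertex of `ω`. Hence there are earlier neighbours; if there
were only one, then its image would have no neighbour outside `S`, again giving a separation of
order at most `|S|`. So there are two, `a` and `b`, and they are adjacent. Contracting the edge
between their images preserves all degrees outside `S`, because no vertex outside `S` sees both of
its ends, and `H[ω_{[|S|]}]/ab` is again an initial segment of an ordering in `Ω`.
-/

section Connectivity

variable {W U : Type*} {G : SimpleGraph W}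

theorem induce_singleton_connected (G : SimpleGraph W) (w : W) :
    (G.induce ({w} : Set W)).Connected :=
  Connected.of_subsingleton

theorem induce_biUnion_connected {K : SimpleGraph U} {X : Set U} {Q : U → Set W}
    (hX : (K.induce X).Connected) (hQ : ∀ u ∈ X, (G.induce (Q u)).Connected)
    (hadj : ∀ u ∈ X, ∀ v ∈ X, K.Adj u v → ∃ a ∈ Q u, ∃ b ∈ Q v, G.Adj a b) :
    (G.induce (⋃ u ∈ X, Q u)).Connected := by
  have hsub (u : X) : Q u ⊆ ⋃ u ∈ X, Q u := Set.subset_biUnion_of_mem u.2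
  have within (u : X) {a b : W} (ha : a ∈ Q u) (hb : b ∈ Q u) :
      (G.induce (⋃ u ∈ X, Q u)).Reachable ⟨a, hsub u ha⟩ ⟨b, hsub u hb⟩ :=
    ((hQ u u.2).preconnected ⟨a, ha⟩ ⟨b, hb⟩).map (G.induceHomOfLE (hsub u)).toHom
  have along {u v : X} (p : (K.induce X).Walk u v) :
      ∀ {a b : W} (ha : a ∈ Q u) (hb : b ∈ Q v),
        (G.induce (⋃ u ∈ X, Q u)).Reachable ⟨a, hsub u ha⟩ ⟨b, hsub v hb⟩ := by
    induction p with
    | nil => exact within _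
    | @cons u u' v huu' _ ih =>
      intro a b ha hb
      obtain ⟨c, hc, d, hd, hcd⟩ := hadj u u.2 u' u'.2 huu'
      have hcd' : (G.induce (⋃ u ∈ X, Q u)).Adj ⟨c, hsub u hc⟩ ⟨d, hsub u' hd⟩ := hcd
      exact (within u ha hc).trans (hcd'.reachable.trans (ih hd hb))
  obtain ⟨u₀⟩ := hX.nonempty
  obtain ⟨a₀, ha₀⟩ := (hQ u₀ u₀.2).nonempty
  rw [connected_iff_exists_forall_reachable]
  refine ⟨⟨a₀, hsub u₀ ha₀⟩, fun ⟨b, hb⟩ => ?_⟩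
  obtain ⟨v, hv, hbv⟩ := Set.mem_iUnion₂.1 hb
  obtain ⟨p⟩ := hX.preconnected u₀ ⟨v, hv⟩
  exact along p ha₀ hbv

theorem spanningCoe_induce_adj {C : Set W} {a b : W} :
    (G.induce C).spanningCoe.Adj a b ↔ G.Adj a b ∧ a ∈ C ∧ b ∈ C := by
  simp only [map_adj, comap_adj, Function.Embedding.subtype_apply, Subtype.exists]
  grind

theorem subset_of_spanningCoe_induce_connected {C X : Set W}
    (hX : ((G.induce C).spanningCoe.induce X).Connected) {a : W} (ha : a ∈ X) (haC : a ∈ C) :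
    X ⊆ C := by
  intro b hb
  obtain ⟨p⟩ := hX.preconnected ⟨b, hb⟩ ⟨a, ha⟩
  cases p with
  | nil => exact haC
  | cons h _ => exact (spanningCoe_induce_adj.1 h).2.1

end Connectivity

section Separations

variable {W : Type*} {G : SimpleGraph W} {A B : Set W}

namespace IsSeparation

theorem symm (h : IsSeparation G A B) : IsSeparation G B A :=
  ⟨Set.union_comm A B ▸ h.1, fun b hb a ha hba => h.2 a ha b hb hba.symm⟩

theorem mem_or_mem (h : IsSeparation G A B) (w : W) : w ∈ A ∨ w ∈ B :=
  h.1.symm.subset (Set.mem_univ w)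

theorem anti {G' : SimpleGraph W} (hle : G ≤ G') (h : IsSeparation G' A B) : IsSeparation G A B :=
  ⟨h.1, fun a ha b hb hab => h.2 a ha b hb (hle hab)⟩

theorem insert_right (h : IsSeparation G A B) (w : W) : IsSeparation G A (insert w B) := by
  refine ⟨by rw [Set.union_insert, h.1, Set.insert_eq_of_mem (Set.mem_univ w)], ?_⟩
  rintro a ⟨ha, haB⟩ b ⟨-, hbA⟩
  exact h.2 a ⟨ha, fun ha' => haB (.inr ha')⟩ b ⟨(h.mem_or_mem b).resolve_left hbA, hbA⟩

theorem neighborSet_subset (h : IsSeparation G A B) {w : W} (hw : w ∈ B \ A) :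
    G.neighborSet w ⊆ B := by
  intro z hz
  by_contra hzB
  exact h.2 z ⟨(h.mem_or_mem z).resolve_right hzB, hzB⟩ w hw hz.symm

theorem of_deleteEdges {x y : W} (h : IsSeparation (G.deleteEdges {s(x, y)}) A B)
    (hx : x ∈ B) (hy : y ∈ B) : IsSeparation G A B := by
  refine ⟨h.1, fun a ha b hb hab => h.2 a ha b hb (deleteEdges_adj.2 ⟨hab, fun he => ha.2 ?_⟩)⟩
  rcases Sym2.eq_iff.1 he with ⟨rfl, -⟩ | ⟨rfl, -⟩
  exacts [hx, hy]

theorem inter_union {E F : Set W} (h : IsSeparation G A B)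
    (h' : IsSeparation (G.induce A).spanningCoe E F) :
    IsSeparation G (E ∩ A) (F ∪ B) := by
  refine ⟨?_, ?_⟩
  · ext w
    have := h.mem_or_mem w
    have := h'.mem_or_mem w
    simp only [Set.mem_union, Set.mem_inter_iff, Set.mem_univ, iff_true]
    tauto
  · rintro a ⟨⟨haE, haA⟩, ha⟩ b ⟨-, hb⟩ hab
    have haF : a ∉ F := fun h => ha (.inl h)
    have haB : a ∉ B := fun h => ha (.inr h)
    have hbA : b ∈ A := by
      by_contra hbA
      exact h.2 a ⟨haA, haB⟩ b ⟨(h.mem_or_mem b).resolve_left hbA, hbA⟩ hab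
    have hbE : b ∉ E := fun hbE => hb ⟨hbE, hbA⟩
    exact h'.2 a ⟨haE, haF⟩ b ⟨(h'.mem_or_mem b).resolve_left hbE, hbE⟩
      (spanningCoe_induce_adj.2 ⟨hab, haA, hbA⟩)

end IsSeparation

theorem isSeparation_compl_singleton (G : SimpleGraph W) (w : W) :
    IsSeparation G {w}ᶜ (insert w (G.neighborSet w)) := by
  refine ⟨Set.eq_univ_of_forall fun z => ?_, ?_⟩
  · by_cases hz : z = w
    exacts [.inr (.inl hz), .inl hz]
  · rintro a ⟨-, ha⟩ b ⟨-, hb⟩ hab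
    obtain rfl : b = w := not_not.1 hb
    exact ha (.inr hab.symm)

theorem inter_inter_union_subset {E F : Set W} (hF : A ∩ B ⊆ F) : E ∩ A ∩ (F ∪ B) ⊆ E ∩ F := by
  rintro w ⟨⟨hwE, hwA⟩, hwF | hwB⟩
  exacts [⟨hwE, hwF⟩, ⟨hwE, hF ⟨hwA, hwB⟩⟩]

end Separations

section Linkages

variable {W : Type*} {G : SimpleGraph W} {S T Q : Set W}

/-- A linkage from `S` to `T`: pairwise disjoint connected sets `P s`, one for each `s ∈ S`, with
`s ∈ P s` and `P s` meeting `T`. Connected sets replace the disjoint `S`–`T` paths of Menger's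
theorem, because they are what becomes a branch set of a minor. -/
structure IsLinkage (G : SimpleGraph W) (S T : Set W) (P : S → Set W) : Prop where
  connected : ∀ s, (G.induce (P s)).Connected
  mem : ∀ s, ↑s ∈ P s
  inter_nonempty : ∀ s, (P s ∩ T).Nonempty
  disjoint : Pairwise fun s s' => Disjoint (P s) (P s')

namespace IsLinkage

variable {P : S → Set W}

theorem eq_of_mem (h : IsLinkage G S T P) {s s' : S} {w : W} (hs : w ∈ P s) (hs' : w ∈ P s') :
    s = s' :=
  h.disjoint.eq (Set.not_disjoint_iff.2 ⟨w, hs, hs'⟩)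

theorem mono {G' : SimpleGraph W} (hle : G ≤ G') (h : IsLinkage G S T P) : IsLinkage G' S T P :=
  { h with connected := fun s => (h.connected s).mono fun _ _ hab => hle hab }

theorem singleton (G : SimpleGraph W) (hST : S ⊆ T) : IsLinkage G S T fun s => {(s : W)} where
  connected s := induce_singleton_connected G s
  mem _ := rfl
  inter_nonempty s := ⟨s, rfl, hST s.2⟩
  disjoint _ _ hne := Set.disjoint_singleton.2 fun h => hne (Subtype.ext h)

theorem subset_of_spanningCoe_induce {C : Set W} (h : IsLinkage (G.induce C).spanningCoe S T P)
    (hSC : S ⊆ C) (s : S) : P s ⊆ C :=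
  subset_of_spanningCoe_induce_connected (h.connected s) (h.mem s) (hSC s.2)

theorem exists_equiv [Finite W] (h : IsLinkage G S T P) (hcard : T.ncard ≤ S.ncard) :
    ∃ τ : S ≃ T, ∀ s, P s ∩ T = {↑(τ s)} := by
  choose τ hτ using h.inter_nonempty
  let τ' : S → T := fun s => ⟨τ s, (hτ s).2⟩
  have hinj : Function.Injective τ' := by
    intro s s' hss'
    have hτs : τ s = τ s' := Subtype.ext_iff.1 hss'
    exact h.eq_of_mem (hτ s).1 (hτs ▸ (hτ s').1)
  have hbij : Function.Bijective τ' := hinj.bijective_of_nat_card_le hcard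
  refine ⟨Equiv.ofBijective τ' hbij, fun s => Set.Subset.antisymm ?_ ?_⟩
  · rintro w ⟨hws, hwT⟩
    obtain ⟨s', hs'⟩ := hbij.surjective ⟨w, hwT⟩
    obtain rfl : τ s' = w := Subtype.ext_iff.1 hs'
    rw [h.eq_of_mem hws (hτ s').1]
    rfl
  · exact Set.singleton_subset_iff.2 (hτ s)

theorem exists_trans [Finite W] {R : Q → Set W} (hP : IsLinkage G S Q P) (hR : IsLinkage G Q T R)
    (hcard : Q.ncard ≤ S.ncard) (hPR : ∀ s q, P s ∩ R q ⊆ Q) :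
    ∃ P' : S → Set W, IsLinkage G S T P' := by
  obtain ⟨τ, hτ⟩ := hP.exists_equiv hcard
  have hmem (s : S) : ↑(τ s) ∈ P s := ((hτ s).symm.subset rfl).1
  have hcross {s s' : S} {w : W} (hws : w ∈ P s) (hws' : w ∈ R (τ s')) : s = s' := by
    have hwQ : w ∈ Q := hPR s (τ s') ⟨hws, hws'⟩
    have hs : (⟨w, hwQ⟩ : Q) = τ s := Subtype.ext ((hτ s).subset ⟨hws, hwQ⟩)
    have hs' : (⟨w, hwQ⟩ : Q) = τ s' := hR.eq_of_mem (hR.mem _) hws'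
    exact τ.injective (hs.symm.trans hs')
  refine ⟨fun s => P s ∪ R (τ s), fun s => ?_, fun s => .inl (hP.mem s), fun s => ?_,
    fun s s' hne => Set.disjoint_left.2 ?_⟩
  · exact induce_union_connected (hP.connected s).preconnected (hR.connected _).preconnected
      ⟨τ s, hmem s, hR.mem _⟩
  · exact (hR.inter_nonempty (τ s)).mono (Set.inter_subset_inter_left T Set.subset_union_right)
  · rintro w (hw | hw) (hw' | hw')
    · exact hne (hP.eq_of_mem hw hw')
    · exact hne (hcross hw hw')
    · exact hne (hcross hw' hw).symm
    · exact hne (τ.injective (hR.eq_of_mem hw hw'))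

theorem exists_insert_of_adj {x y : W} (h : IsLinkage G S (insert x Q) P) (hxy : G.Adj x y)
    (hy : ∀ s, y ∉ P s) :
    ∃ P' : S → Set W, IsLinkage G S (insert y Q) P' ∧ ∀ s, P' s ⊆ insert y (P s) := by
  have hP' (s : S) (hx : x ∈ P s) : {w | w ∈ P s ∨ x ∈ P s ∧ w = y} = P s ∪ {x, y} := by
    ext w
    simp only [Set.mem_ofPred_eq, hx, true_and, Set.mem_union, Set.mem_insert_iff,
      Set.mem_singleton_iff]
    exact ⟨Or.imp_right .inr, by rintro (hw | rfl | hw) <;> simp_all⟩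
  have hP'' (s : S) (hx : x ∉ P s) : {w | w ∈ P s ∨ x ∈ P s ∧ w = y} = P s := by
    simp [hx]
  refine ⟨fun s => {w | w ∈ P s ∨ x ∈ P s ∧ w = y}, ⟨fun s => ?_, fun s => .inl (h.mem s),
    fun s => ?_, fun s s' hne => Set.disjoint_left.2 ?_⟩, fun s w hw => ?_⟩
  · by_cases hx : x ∈ P s
    · rw [hP' s hx]
      exact induce_union_connected (h.connected s).preconnected
        (induce_pair_connected_of_adj hxy).preconnected ⟨x, hx, .inl rfl⟩
    · rw [hP'' s hx]
      exact h.connected s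
  · obtain ⟨w, hws, rfl | hwQ⟩ := h.inter_nonempty s
    · exact ⟨y, .inr ⟨hws, rfl⟩, .inl rfl⟩
    · exact ⟨w, .inl hws, .inr hwQ⟩
  · rintro w (hw | ⟨hx, rfl⟩) (hw' | ⟨hx', hwy⟩)
    · exact hne (h.eq_of_mem hw hw')
    · exact hy s (hwy ▸ hw)
    · exact hy s' hw'
    · exact hne (h.eq_of_mem hx hx')
  · exact hw.elim .inr fun hw => .inl hw.2

end IsLinkage

/-- Every separation `(A, B)` of `G` with `S ⊆ A` and `T ⊆ B` has order at least `k`: the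
hypothesis of Menger's theorem. -/
def SeparationOrderGE (G : SimpleGraph W) (S T : Set W) (k : ℕ) : Prop :=
  ∀ A B, IsSeparation G A B → S ⊆ A → T ⊆ B → k ≤ (A ∩ B).ncard

theorem SeparationOrderGE.symm {k : ℕ} (h : SeparationOrderGE G S T k) :
    SeparationOrderGE G T S k :=
  fun A B hAB hTA hSB => Set.inter_comm A B ▸ h B A hAB.symm hSB hTA

theorem SeparationOrderGE.subset_of_bot [Finite W]
    (h : SeparationOrderGE (⊥ : SimpleGraph W) S T S.ncard) : S ⊆ T := by
  have hsep : IsSeparation (⊥ : SimpleGraph W) S (Sᶜ ∪ T) :=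
    ⟨by rw [← Set.union_assoc, Set.union_compl_self, Set.univ_union], fun _ _ _ _ => id⟩
  have hle := h S (Sᶜ ∪ T) hsep subset_rfl Set.subset_union_right
  rw [Set.inter_union_distrib_left, Set.inter_compl_self, Set.empty_union] at hle
  exact Set.inter_eq_left.1 (Set.eq_of_subset_of_ncard_le Set.inter_subset_left hle)

section Crossing

variable {C D : Set W} {x y : W}

theorem IsSeparation.exists_crossing_edge (h : IsSeparation (G.deleteEdges {s(x, y)}) C D)
    (hG : ¬ IsSeparation G C D) :
    ∃ a ∈ C \ D, ∃ b ∈ D \ C, G.Adj a b ∧ s(x, y) = s(a, b) := by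
  obtain ⟨a, ha, b, hb, hab⟩ : ∃ a ∈ C \ D, ∃ b ∈ D \ C, G.Adj a b := by
    by_contra! hno
    exact hG ⟨h.1, hno⟩
  refine ⟨a, ha, b, hb, hab, ?_⟩
  by_contra hne
  exact h.2 a ha b hb (deleteEdges_adj.2 ⟨hab, fun he => hne he.symm⟩)

theorem SeparationOrderGE.induce_insert [Finite W] {k : ℕ} (h : SeparationOrderGE G S T k)
    (hsep : IsSeparation (G.deleteEdges {s(x, y)}) C D) (hSC : S ⊆ C) (hTD : T ⊆ D) (hy : y ∈ D) :
    SeparationOrderGE ((G.deleteEdges {s(x, y)}).induce C).spanningCoe S (insert x (C ∩ D)) k := by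
  intro E F hEF hSE hF
  have hsep' : IsSeparation G (E ∩ C) (F ∪ D) :=
    (hsep.inter_union hEF).of_deleteEdges (.inl (hF (Set.mem_insert _ _))) (.inr hy)
  exact (h _ _ hsep' (Set.subset_inter hSE hSC) (hTD.trans Set.subset_union_right)).trans
    (Set.ncard_le_ncard (inter_inter_union_subset ((Set.subset_insert _ _).trans hF)))

theorem SeparationOrderGE.le_ncard_inter_add_one {k : ℕ}
    (h : SeparationOrderGE G S T k) (hsep : IsSeparation (G.deleteEdges {s(x, y)}) C D)
    (hSC : S ⊆ C) (hTD : T ⊆ D) (hx : x ∈ C) (hy : y ∈ D) : k ≤ (C ∩ D).ncard + 1 := by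
  have hsep' : IsSeparation G C (insert x D) :=
    (hsep.insert_right x).of_deleteEdges (.inl rfl) (.inr hy)
  have hle := h _ _ hsep' hSC (hTD.trans (Set.subset_insert _ _))
  rw [Set.inter_insert_of_mem hx] at hle
  exact hle.trans (Set.ncard_insert_le _ _)

theorem IsLinkage.exists_of_crossing_edge [Finite W]
    {P : S → Set W} {R : ↥(insert y (C ∩ D)) → Set W}
    (hP : IsLinkage (G.induce C).spanningCoe S (insert x (C ∩ D)) P)
    (hR : IsLinkage (G.induce D).spanningCoe (insert y (C ∩ D)) T R)
    (hSC : S ⊆ C) (hcard : (insert y (C ∩ D)).ncard ≤ S.ncard)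
    (hxy : G.Adj x y) (hy : y ∈ D \ C) : ∃ P' : S → Set W, IsLinkage G S T P' := by
  have hPC : ∀ s, P s ⊆ C := hP.subset_of_spanningCoe_induce hSC
  have hRD : ∀ q, R q ⊆ D := hR.subset_of_spanningCoe_induce
    (Set.insert_subset hy.1 Set.inter_subset_right)
  obtain ⟨P', hP', hsub⟩ := (hP.mono (spanningCoe_induce_le G C)).exists_insert_of_adj hxy
    fun s hys => hy.2 (hPC s hys)
  refine hP'.exists_trans (hR.mono (spanningCoe_induce_le G D)) hcard ?_
  rintro s q w ⟨hws, hwq⟩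
  exact (hsub s hws).imp_right fun hw => ⟨hPC s hw, hRD q hwq⟩

end Crossing

theorem deleteEdges_singleton_lt {x y : W} (hxy : G.Adj x y) : G.deleteEdges {s(x, y)} < G :=
  lt_of_le_not_ge (deleteEdges_le _) fun hle => (deleteEdges_adj.1 (hle hxy)).2 rfl

/-- **Menger's theorem**. If deleting an edge `ab` creates a separation `(C, D)` of order less than
`|S|`, then the order is `|S| - 1` and `a`, `b` lie on different sides, so that linkages from `S` to
`(C ∩ D) ∪ {a}` and from `(C ∩ D) ∪ {b}` to `T` can be joined along `ab`. -/
theorem exists_isLinkage_of_separationOrderGE [Finite W] (G : SimpleGraph W) {S T : Set W}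
    (h : SeparationOrderGE G S T S.ncard) : ∃ P : S → Set W, IsLinkage G S T P := by
  induction G using WellFoundedLT.induction generalizing S T with
  | ind G ih =>
  by_cases hG : G = ⊥
  · subst hG
    exact ⟨_, .singleton ⊥ h.subset_of_bot⟩
  obtain ⟨x, y, hxy⟩ := ne_bot_iff_exists_adj.1 hG
  by_cases hdel : SeparationOrderGE (G.deleteEdges {s(x, y)}) S T S.ncard
  · obtain ⟨P, hP⟩ := ih _ (deleteEdges_singleton_lt hxy) hdel
    exact ⟨P, hP.mono (deleteEdges_le _)⟩
  obtain ⟨C, D, hsep, hSC, hTD, hlt⟩ : ∃ C D, IsSeparation (G.deleteEdges {s(x, y)}) C D ∧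
      S ⊆ C ∧ T ⊆ D ∧ (C ∩ D).ncard < S.ncard := by
    simpa [SeparationOrderGE] using hdel
  obtain ⟨a, ha, b, hb, hab, he⟩ := hsep.exists_crossing_edge fun hCD =>
    hlt.not_ge (h C D hCD hSC hTD)
  rw [he] at hsep
  have hcard (v : W) (hv : v ∉ C ∩ D) : (insert v (C ∩ D)).ncard = S.ncard := by
    rw [Set.ncard_insert_of_notMem hv]
    exact Nat.le_antisymm hlt (h.le_ncard_inter_add_one hsep hSC hTD ha.1 hb.1)
  have hcardb : (insert b (C ∩ D)).ncard = S.ncard := hcard b fun hbCD => hb.2 hbCD.1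
  have hrestrict (X : Set W) :
      ((G.deleteEdges {s(a, b)}).induce X).spanningCoe < G :=
    (spanningCoe_induce_le _ X).trans_lt (deleteEdges_singleton_lt hab)
  obtain ⟨P, hP⟩ := ih _ (hrestrict C) (h.induce_insert hsep hSC hTD hb.1)
  have hright : SeparationOrderGE ((G.deleteEdges {s(a, b)}).induce D).spanningCoe
      (insert b (C ∩ D)) T S.ncard := by
    rw [Set.inter_comm, Sym2.eq_swap]
    exact (h.symm.induce_insert (Sym2.eq_swap ▸ hsep.symm) hTD hSC ha.1).symm
  obtain ⟨R, hR⟩ := ih _ (hrestrict D) (hcardb ▸ hright)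
  have hle (X : Set W) : ((G.deleteEdges {s(a, b)}).induce X).spanningCoe ≤
      (G.induce X).spanningCoe :=
    fun u v huv => by
      rw [spanningCoe_induce_adj] at huv ⊢
      exact ⟨deleteEdges_le _ huv.1, huv.2⟩
  exact (hP.mono (hle C)).exists_of_crossing_edge (hR.mono (hle D)) hSC hcardb.le hab hb

end Linkages

section WellConnectedSets

variable {W : Type*} {G : SimpleGraph W} {A B S : Set W}

theorem wellConnected_iff [Finite W] : WellConnected G S ↔ S ≠ Set.univ ∧
    ∀ A B, IsSeparation G A B → S ⊆ A → (B \ A).Nonempty → S.ncard ≤ (A ∩ B).ncard := by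
  refine and_congr_right fun _ => ⟨fun h A B hAB hSA hBA => ?_, ?_⟩
  · by_contra! hlt
    have hne : ¬ A ⊆ B := fun hsub =>
      hlt.not_ge (Set.ncard_le_ncard (Set.subset_inter hSA (hSA.trans hsub)))
    exact h ⟨A, B, hAB, Set.sdiff_nonempty.2 hne, hBA, hSA, hlt⟩
  · rintro h ⟨A, B, hAB, -, hBA, hSA, hlt⟩
    exact hlt.not_ge (h A B hAB hSA hBA)

/-- A tight separation for `S`: a nontrivial separation `(A, B)` with `S ⊆ A` of order at most
`|S|`. It obstructs the well-connectedness of the sets `S ∪ {v}`. -/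
def HasTightSeparation (G : SimpleGraph W) (S : Set W) : Prop :=
  ∃ A B, IsSeparation G A B ∧ (A \ B).Nonempty ∧ (B \ A).Nonempty ∧ S ⊆ A ∧
    (A ∩ B).ncard ≤ S.ncard

theorem ncard_preimage_val (B A : Set W) :
    (Subtype.val ⁻¹' A : Set B).ncard = (B ∩ A).ncard := by
  rw [← Set.ncard_image_of_injective _ Subtype.val_injective, Subtype.image_preimage_coe]

theorem ncard_preimage_val_compl_singleton {y : W} (hy : y ∈ S) :
    (Subtype.val ⁻¹' S : Set ↥(Set.univ \ {y})).ncard = S.ncard - 1 := by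
  rw [ncard_preimage_val, Set.sdiff_inter_right_comm, Set.univ_inter,
    Set.ncard_sdiff_singleton_of_mem hy]

theorem IsSeparation.union_image {A' B' : Set B} (h : IsSeparation G A B)
    (h' : IsSeparation (G.induce B) A' B') :
    IsSeparation G (A ∪ Subtype.val '' A') (Subtype.val '' B') := by
  refine ⟨?_, ?_⟩
  · refine Set.eq_univ_of_forall fun w => ?_
    rcases h.mem_or_mem w with hw | hw
    · exact .inl (.inl hw)
    · exact (h'.mem_or_mem ⟨w, hw⟩).imp (fun hw' => .inr ⟨_, hw', rfl⟩) fun hw' => ⟨_, hw', rfl⟩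
  · rintro a ⟨-, haB'⟩ _ ⟨⟨b, hbB', rfl⟩, hb⟩ hab
    have hbA' : b ∉ A' := fun hbA' => hb (.inr ⟨b, hbA', rfl⟩)
    by_cases haB : a ∈ B
    · have haB'' : (⟨a, haB⟩ : B) ∉ B' := fun ha' => haB' ⟨_, ha', rfl⟩
      exact h'.2 ⟨a, haB⟩ ⟨(h'.mem_or_mem _).resolve_right haB'', haB''⟩ b ⟨hbB', hbA'⟩ hab
    · exact h.2 a ⟨(h.mem_or_mem a).resolve_right haB, haB⟩ b ⟨b.2, fun hbA => hb (.inl hbA)⟩ hab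

theorem IsSeparation.insert_image {y : W} {A' B' : Set ↥(Set.univ \ {y})}
    (h : IsSeparation (G.induce (Set.univ \ {y})) A' B') :
    IsSeparation G (insert y (Subtype.val '' A')) (insert y (Subtype.val '' B')) := by
  refine ⟨?_, ?_⟩
  · refine Set.eq_univ_of_forall fun w => ?_
    by_cases hw : w = y
    · exact .inl (.inl hw)
    · exact (h.mem_or_mem ⟨w, trivial, hw⟩).imp (fun hw' => .inr ⟨_, hw', rfl⟩)
        fun hw' => .inr ⟨_, hw', rfl⟩
  · rintro a ⟨rfl | ⟨a, haA', rfl⟩, ha⟩ b ⟨rfl | ⟨b, hbB', rfl⟩, hb⟩ hab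
    · exact ha (.inl rfl)
    · exact ha (.inl rfl)
    · exact hb (.inl rfl)
    · exact h.2 a ⟨haA', fun haB' => ha (.inr ⟨a, haB', rfl⟩)⟩ b
        ⟨hbB', fun hbA' => hb (.inr ⟨b, hbA', rfl⟩)⟩ hab

namespace WellConnected

theorem mono {G' : SimpleGraph W} (hle : G ≤ G') (h : WellConnected G S) : WellConnected G' S :=
  ⟨h.1, fun ⟨A, B, hAB, hrest⟩ => h.2 ⟨A, B, hAB.anti hle, hrest⟩⟩

theorem exists_isLinkage [Finite W] (h : WellConnected G S) (hAB : IsSeparation G A B)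
    (hSA : S ⊆ A) (hBA : (B \ A).Nonempty) :
    ∃ P : S → Set W, IsLinkage G S (A ∩ B) P ∧ ∀ s, P s ⊆ A := by
  have horder : SeparationOrderGE (G.induce A).spanningCoe S (A ∩ B) S.ncard := by
    intro E F hEF hSE hF
    have hne : ((F ∪ B) \ (E ∩ A)).Nonempty :=
      hBA.mono fun w hw => ⟨.inr hw.1, fun hwE => hw.2 hwE.2⟩
    exact ((wellConnected_iff.1 h).2 _ _ (hAB.inter_union hEF) (Set.subset_inter hSE hSA) hne).trans
      (Set.ncard_le_ncard (inter_inter_union_subset hF))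
  obtain ⟨P, hP⟩ := exists_isLinkage_of_separationOrderGE _ horder
  exact ⟨P, hP.mono (spanningCoe_induce_le G A), hP.subset_of_spanningCoe_induce hSA⟩

theorem induce_of_isSeparation [Finite W] (h : WellConnected G S) (hAB : IsSeparation G A B)
    (hSA : S ⊆ A) (hBA : (B \ A).Nonempty) (hcard : (A ∩ B).ncard ≤ S.ncard) :
    WellConnected (G.induce B) (Subtype.val ⁻¹' A) := by
  rw [wellConnected_iff]
  refine ⟨?_, fun A' B' hAB' hAA' hne => ?_⟩
  · obtain ⟨w, hwB, hwA⟩ := hBA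
    exact fun huniv => hwA (huniv.symm.subset (Set.mem_univ ⟨w, hwB⟩))
  have hsep : IsSeparation G (A ∪ Subtype.val '' A') (Subtype.val '' B') :=
    hAB.union_image hAB'
  have hinter : (A ∪ Subtype.val '' A') ∩ Subtype.val '' B' = Subtype.val '' (A' ∩ B') := by
    rw [Set.image_inter Subtype.val_injective, Set.union_inter_distrib_right,
      Set.union_eq_right]
    rintro _ ⟨hwA, w, hwB', rfl⟩
    exact ⟨⟨w, hAA' hwA, rfl⟩, w, hwB', rfl⟩
  have hne' : (Subtype.val '' B' \ (A ∪ Subtype.val '' A')).Nonempty := by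
    obtain ⟨w, hwB', hwA'⟩ := hne
    refine ⟨w, ⟨w, hwB', rfl⟩, ?_⟩
    rintro (hwA | hw)
    exacts [hwA' (hAA' hwA), hwA' (Subtype.val_injective.mem_set_image.1 hw)]
  have hle := (wellConnected_iff.1 h).2 _ _ hsep (hSA.trans Set.subset_union_left) hne'
  rw [hinter, Set.ncard_image_of_injective _ Subtype.val_injective] at hle
  rw [ncard_preimage_val, Set.inter_comm]
  exact hcard.trans hle

theorem induce_compl_singleton [Finite W] (h : WellConnected G S) {y : W} (hy : y ∈ S) :
    WellConnected (G.induce (Set.univ \ {y})) (Subtype.val ⁻¹' S) := by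
  rw [wellConnected_iff]
  refine ⟨fun huniv => h.1 (Set.eq_univ_of_forall fun w => ?_), fun A' B' hAB' hSA' hne => ?_⟩
  · by_cases hw : w = y
    · exact hw ▸ hy
    · exact huniv.symm.subset (Set.mem_univ ⟨w, trivial, hw⟩)
  have hSA : S ⊆ insert y (Subtype.val '' A') := by
    intro w hw
    by_cases hwy : w = y
    · exact .inl hwy
    · exact .inr ⟨⟨w, trivial, hwy⟩, hSA' hw, rfl⟩
  have hne' : (insert y (Subtype.val '' B') \ insert y (Subtype.val '' A')).Nonempty := by
    obtain ⟨w, hwB', hwA'⟩ := hne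
    refine ⟨w, .inr ⟨w, hwB', rfl⟩, ?_⟩
    rintro (hwy | hw)
    exacts [w.2.2 hwy, hwA' (Subtype.val_injective.mem_set_image.1 hw)]
  have hle := (wellConnected_iff.1 h).2 _ _ hAB'.insert_image hSA hne'
  rw [← Set.insert_inter_distrib, ← Set.image_inter Subtype.val_injective] at hle
  have hle' := hle.trans (Set.ncard_insert_le _ _)
  rw [Set.ncard_image_of_injective _ Subtype.val_injective] at hle'
  rw [ncard_preimage_val_compl_singleton hy]
  exact Nat.sub_le_of_le_add hle'

end WellConnected

theorem wellConnected_insert_of_not_hasTightSeparation (h : ¬ HasTightSeparation G S)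
    {v : W} (hne : insert v S ≠ Set.univ) : WellConnected G (insert v S) := by
  refine ⟨hne, fun ⟨A, B, hAB, hA, hB, hSA, hlt⟩ => h ⟨A, B, hAB, hA, hB, ?_, ?_⟩⟩
  · exact (Set.subset_insert v S).trans hSA
  · exact Nat.le_of_lt_succ (hlt.trans_le (Set.ncard_insert_le v S))

theorem hasTightSeparation_of_neighborSet_subset [Finite W] {x : W} (hx : x ∈ S) (hS : S ≠ Set.univ)
    (hnbr : G.neighborSet x ⊆ S) : HasTightSeparation G S := by
  obtain ⟨z, hz⟩ := (Set.ne_univ_iff_exists_notMem S).1 hS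
  have hsep : IsSeparation G S {x}ᶜ := by
    refine ⟨Set.eq_univ_of_forall fun w => ?_, ?_⟩
    · by_cases hw : w = x
      exacts [.inl (hw ▸ hx), .inr hw]
    · rintro a ⟨-, ha⟩ b ⟨-, hb⟩ hab
      obtain rfl : a = x := not_not.1 ha
      exact hb (hnbr hab)
  exact ⟨S, {x}ᶜ, hsep, ⟨x, hx, not_not.2 rfl⟩, ⟨z, fun hzx => hz (hzx ▸ hx), hz⟩, subset_rfl,
    Set.ncard_le_ncard Set.inter_subset_left⟩

end WellConnectedSets

section Minors

variable {W ι U : Type*} {G : SimpleGraph W} {L : SimpleGraph ι} {K : SimpleGraph U}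

theorem IsMinorMap.trans {μ : U → Set ι} {Q : ι → Set W} (hμ : IsMinorMap L K μ)
    (hQ : IsMinorMap G L Q) : IsMinorMap G K fun v => ⋃ z ∈ μ v, Q z := by
  refine ⟨fun v => induce_biUnion_connected (hμ.1 v) (fun z _ => hQ.1 z)
    fun z _ z' _ hzz' => hQ.2.2 hzz', fun v v' hne => ?_, fun v v' hvv' => ?_⟩
  · refine Set.disjoint_iUnion₂_left.2 fun z hz => Set.disjoint_iUnion₂_right.2 fun z' hz' => ?_
    exact hQ.2.1 fun h => Set.disjoint_left.1 (hμ.2.1 hne) hz (h ▸ hz')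
  · obtain ⟨z, hz, z', hz', hzz'⟩ := hμ.2.2 hvv'
    obtain ⟨a, ha, b, hb, hab⟩ := hQ.2.2 hzz'
    exact ⟨a, Set.mem_biUnion hz ha, b, Set.mem_biUnion hz' hb, hab⟩

theorem IsMinorMap.apex {μ : U → Set W} {w : W} (hμ : IsMinorMap G K μ) (hw : ∀ v, w ∉ μ v)
    (hadj : ∀ v, ∃ b ∈ μ v, G.Adj w b) :
    IsMinorMap G (apexGraph K) fun o => o.elim {w} μ := by
  refine ⟨?_, ?_, ?_⟩
  · rintro (_ | v)
    exacts [induce_singleton_connected G w, hμ.1 v]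
  · rintro (_ | v) (_ | v') hne
    · exact absurd rfl hne
    · exact Set.disjoint_singleton_left.2 (hw v')
    · exact Set.disjoint_singleton_right.2 (hw v)
    · exact hμ.2.1 fun h => hne (congrArg some h)
  · rintro (_ | v) (_ | v') h
    · exact absurd rfl h.ne
    · exact ⟨w, rfl, hadj v'⟩
    · obtain ⟨b, hb, hwb⟩ := hadj v
      exact ⟨b, hb, w, rfl, hwb.symm⟩
    · have hvv' : v ≠ v' ∧ K.Adj v v' := by simpa [apexGraph, K.adj_comm] using h
      exact hμ.2.2 hvv'.2

/-- The minor of `G` with branch sets `Q`: distinct indices are adjacent when some edge of `G`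
joins their branch sets. -/
def branchGraph (G : SimpleGraph W) (Q : ι → Set W) : SimpleGraph ι where
  Adj z z' := z ≠ z' ∧ ∃ a ∈ Q z, ∃ b ∈ Q z', G.Adj a b
  symm := ⟨fun _ _ ⟨hne, a, ha, b, hb, hab⟩ => ⟨hne.symm, b, hb, a, ha, hab.symm⟩⟩

theorem isMinorMap_branchGraph {Q : ι → Set W} (hconn : ∀ z, (G.induce (Q z)).Connected)
    (hdisj : Pairwise fun z z' => Disjoint (Q z) (Q z')) : IsMinorMap G (branchGraph G Q) Q :=
  ⟨hconn, hdisj, fun _ _ h => h.2⟩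

theorem induce_le_branchGraph {B : Set W} {Q : B → Set W} (hQ : ∀ z, ↑z ∈ Q z) :
    G.induce B ≤ branchGraph G Q :=
  fun z z' h => ⟨h.ne, z, hQ z, z', hQ z', h⟩

/-- `K` is a minor of `G` in which the vertices outside `R` have singleton branch sets contained
in `V(G) ∖ S`. -/
def IsMinorModulo (K : SimpleGraph U) (R : Set U) (G : SimpleGraph W) (S : Set W) : Prop :=
  ∃ μ : U → Set W, IsMinorMap G K μ ∧ ∀ v ∉ R, ∃ w ∉ S, μ v = {w}

namespace IsMinorModulo

variable {R : Set U} {T : Set ι} {S : Set W}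

theorem trans (h : IsMinorModulo K R L T) (h' : IsMinorModulo L T G S) :
    IsMinorModulo K R G S := by
  obtain ⟨μ, hμ, hμR⟩ := h
  obtain ⟨Q, hQ, hQT⟩ := h'
  refine ⟨_, hμ.trans hQ, fun v hv => ?_⟩
  obtain ⟨z, hz, hvz⟩ := hμR v hv
  obtain ⟨w, hw, hzw⟩ := hQT z hz
  exact ⟨w, hw, by rw [hvz, Set.biUnion_singleton, hzw]⟩

theorem anti {S' : Set W} (hS : S ⊆ S') (h : IsMinorModulo K R G S') : IsMinorModulo K R G S := by
  obtain ⟨μ, hμ, hμR⟩ := h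
  refine ⟨μ, hμ, fun v hv => ?_⟩
  obtain ⟨w, hw, hvw⟩ := hμR v hv
  exact ⟨w, fun hwS => hw (hS hwS), hvw⟩

end IsMinorModulo

end Minors

section SpanningCopies

variable {U W X : Type*} {K : SimpleGraph U} {L : SimpleGraph W} {M : SimpleGraph X}

/-- `L` contains a spanning subgraph isomorphic to `K`. -/
def HasSpanningCopy (K : SimpleGraph U) (L : SimpleGraph W) : Prop :=
  ∃ f : K →g L, Function.Bijective f

namespace HasSpanningCopy

theorem trans (h : HasSpanningCopy K L) (h' : HasSpanningCopy L M) : HasSpanningCopy K M := by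
  obtain ⟨f, hf⟩ := h
  obtain ⟨g, hg⟩ := h'
  exact ⟨g.comp f, hg.comp hf⟩

theorem of_iso (e : K ≃g L) : HasSpanningCopy K L :=
  ⟨e.toHom, e.bijective⟩

theorem card_eq (h : HasSpanningCopy K L) : Nat.card U = Nat.card W := by
  obtain ⟨f, hf⟩ := h
  exact Nat.card_congr (Equiv.ofBijective f hf)

theorem induce_insert {P : Set U} {S : Set W} {u : U} {v : W} {f : K.induce P →g L.induce S}
    (hf : Function.Bijective f) (hu : u ∉ P) (hv : v ∉ S)
    (hadj : ∀ z : P, K.Adj u z → L.Adj v (f z)) :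
    HasSpanningCopy (K.induce (insert u P)) (L.induce (insert v S)) := by
  classical
  let e := (Equiv.Set.insert hu).trans
    (((Equiv.ofBijective f hf).sumCongr (.ofUnique _ _)).trans (Equiv.Set.insert hv).symm)
  have he_inl (z : P) : (e ⟨z, .inr z.2⟩ : W) = f z := by simp [e]
  have he_inr : (e ⟨u, .inl rfl⟩ : W) = v := by simp [e]
  refine ⟨⟨e, fun {z z'} h => ?_⟩, e.bijective⟩
  rw [induce_adj]
  obtain ⟨z, rfl | hz⟩ := z <;> obtain ⟨z', rfl | hz'⟩ := z'
  · exact absurd rfl h.ne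
  · rw [he_inr, he_inl ⟨z', hz'⟩]
    exact hadj ⟨z', hz'⟩ h
  · rw [he_inr, he_inl ⟨z, hz⟩]
    exact (hadj ⟨z, hz⟩ (Adj.symm h)).symm
  · rw [he_inl ⟨z, hz⟩, he_inl ⟨z', hz'⟩]
    exact f.map_rel (a := ⟨z, hz⟩) (b := ⟨z', hz'⟩) h

end HasSpanningCopy

end SpanningCopies

section Reductions

variable {U V W ι : Type*} {G : SimpleGraph W} {S T B : Set W}

/-- The branch set of `z` in the minor of `G` obtained by contracting each of the disjoint
connected sets `P i`: the set `P i` containing `z` if there is one, and `{z}` otherwise. -/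
def thicken (P : ι → Set W) (z : W) : Set W :=
  insert z (⋃ (i) (_ : z ∈ P i), P i)

section Thicken

variable {P : ι → Set W} {z : W}

theorem self_mem_thicken (P : ι → Set W) (z : W) : z ∈ thicken P z :=
  Set.mem_insert z _

theorem subset_thicken {i : ι} (hz : z ∈ P i) : P i ⊆ thicken P z :=
  fun _ hw => .inr (Set.mem_biUnion (s := {i | z ∈ P i}) hz hw)

theorem thicken_of_mem (hP : Pairwise fun i j => Disjoint (P i) (P j)) {i : ι} (hz : z ∈ P i) :
    thicken P z = P i := by
  refine (Set.insert_subset hz (Set.iUnion₂_subset fun j hj => ?_)).antisymm (subset_thicken hz)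
  rw [hP.eq (Set.not_disjoint_iff.2 ⟨z, hj, hz⟩)]

theorem thicken_of_forall_notMem (hz : ∀ i, z ∉ P i) : thicken P z = {z} := by
  simp [thicken, hz]

theorem mem_of_mem_thicken (hP : Pairwise fun i j => Disjoint (P i) (P j)) {i : ι} {w : W}
    (hwz : w ∈ thicken P z) (hw : w ∈ P i) : z ∈ P i := by
  rcases hwz with rfl | hwz
  · exact hw
  · obtain ⟨j, hj, hwj⟩ := Set.mem_iUnion₂.1 hwz
    exact hP.eq (Set.not_disjoint_iff.2 ⟨w, hwj, hw⟩) ▸ hj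

theorem eq_of_mem_thicken {w : W} (hwz : w ∈ thicken P z) (hw : ∀ i, w ∉ P i) : w = z :=
  hwz.resolve_right fun h =>
    have ⟨i, _, hwi⟩ := Set.mem_iUnion₂.1 h
    hw i hwi

theorem isMinorModulo_branchGraph_thicken (hconn : ∀ i, (G.induce (P i)).Connected)
    (hdisj : Pairwise fun i j => Disjoint (P i) (P j)) (hB : ∀ i, (P i ∩ B).Subsingleton)
    (hPT : ∀ i, P i ⊆ T) :
    IsMinorModulo (branchGraph G fun z : B => thicken P z) (Subtype.val ⁻¹' T) G T := by
  refine ⟨_, isMinorMap_branchGraph (fun z => ?_) fun z z' hne => ?_, fun z hz => ?_⟩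
  · by_cases hz : ∃ i, ↑z ∈ P i
    · obtain ⟨i, hi⟩ := hz
      rw [thicken_of_mem hdisj hi]
      exact hconn i
    · rw [thicken_of_forall_notMem (not_exists.1 hz)]
      exact induce_singleton_connected G z
  · refine Set.disjoint_left.2 fun w hw hw' => hne ?_
    by_cases hwP : ∃ i, w ∈ P i
    · obtain ⟨i, hi⟩ := hwP
      exact Subtype.ext (hB i ⟨mem_of_mem_thicken hdisj hw hi, z.2⟩
        ⟨mem_of_mem_thicken hdisj hw' hi, z'.2⟩)
    · have hwP' := not_exists.1 hwP
      exact Subtype.ext ((eq_of_mem_thicken hw hwP').symm.trans (eq_of_mem_thicken hw' hwP'))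
  · exact ⟨z, hz, thicken_of_forall_notMem fun i hi => hz (hPT i hi)⟩

end Thicken

theorem WellConnected.exists_isMinorModulo_apexGraph [Finite W] {K : SimpleGraph U}
    (hS : WellConnected G S) (hK : HasSpanningCopy K (G.induce S)) :
    IsMinorModulo (apexGraph K) (Set.range some) G S := by
  obtain ⟨w, hw⟩ := (Set.ne_univ_iff_exists_notMem S).1 hS.1
  obtain ⟨f, hf⟩ := hK
  obtain ⟨P, hP, hPw⟩ := hS.exists_isLinkage (isSeparation_compl_singleton G w)
    (fun s hs hsw => hw (hsw ▸ hs)) ⟨w, .inl rfl, not_not.2 rfl⟩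
  have hminor : IsMinorMap G K fun u => P (f u) :=
    ⟨fun u => hP.connected _, fun u u' hne => hP.disjoint fun h => hne (hf.1 h),
      fun u u' h => ⟨f u, hP.mem _, f u', hP.mem _, f.map_rel h⟩⟩
  refine ⟨_, hminor.apex (fun u hwu => hPw _ hwu rfl) fun u => ?_, ?_⟩
  · obtain ⟨b, hb, hbw, rfl | hwb⟩ := hP.inter_nonempty (f u)
    exacts [absurd rfl hbw, ⟨b, hb, hwb⟩]
  · rintro (_ | u) ho
    exacts [⟨w, hw, rfl⟩, absurd ⟨u, rfl⟩ ho]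

theorem WellConnected.exists_minor_of_isSeparation [Finite W] {A : Set W} (hS : WellConnected G S)
    (hAB : IsSeparation G A B) (hSA : S ⊆ A) (hBA : (B \ A).Nonempty)
    (hcard : (A ∩ B).ncard ≤ S.ncard) :
    ∃ L : SimpleGraph B, G.induce B ≤ L ∧
      HasSpanningCopy (G.induce S) (L.induce (Subtype.val ⁻¹' A)) ∧
      IsMinorModulo L (Subtype.val ⁻¹' A) G S := by
  obtain ⟨P, hP, hPA⟩ := hS.exists_isLinkage hAB hSA hBA
  obtain ⟨τ, hτ⟩ := hP.exists_equiv hcard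
  have hτP (s : S) : ↑(τ s) ∈ P s := ((hτ s).symm.subset rfl).1
  have hB (s : S) : (P s ∩ B).Subsingleton :=
    (hτ s ▸ Set.subsingleton_singleton : (P s ∩ (A ∩ B)).Subsingleton).anti
      fun w hw => ⟨hw.1, hPA s hw.1, hw.2⟩
  refine ⟨_, induce_le_branchGraph fun z => self_mem_thicken P z, ?_,
    (isMinorModulo_branchGraph_thicken hP.connected hP.disjoint hB hPA).anti hSA⟩
  let e : S ≃ ↥(Subtype.val ⁻¹' A : Set B) :=
    τ.trans ⟨fun q => ⟨⟨q, q.2.2⟩, q.2.1⟩, fun z => ⟨z, z.2, z.1.2⟩, fun _ => rfl, fun _ => rfl⟩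
  refine ⟨⟨e, fun {s s'} hss' => ⟨fun h => hss'.ne (e.injective (Subtype.ext h)), ?_⟩⟩, e.bijective⟩
  exact ⟨s, subset_thicken (hτP s) (hP.mem s), s', subset_thicken (hτP s') (hP.mem s'), hss'⟩

theorem neighborSet_inter_subset_image {L : SimpleGraph B} (hL : G.induce B ≤ L) (z : B) :
    G.neighborSet z ∩ B ⊆ Subtype.val '' L.neighborSet z :=
  fun w hw => ⟨⟨w, hw.2⟩, hL hw.1, rfl⟩

/-- The graph `G / xy`, on the vertex set `V(G) ∖ {y}`, for an edge `xy` of `G`: the vertex `y` is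
merged into `x`. -/
def contractEdge (G : SimpleGraph W) (x y : W) : SimpleGraph ↥(Set.univ \ {y}) :=
  branchGraph G fun z => thicken (fun _ : Unit => {x, y}) z

section ContractEdge

variable {x y : W}

theorem induce_le_contractEdge (G : SimpleGraph W) (x y : W) :
    G.induce (Set.univ \ {y}) ≤ contractEdge G x y :=
  induce_le_branchGraph fun _ => self_mem_thicken _ _

theorem contractEdge_adj_of_adj {z z' : ↥(Set.univ \ {y})} (hz : ↑z = x) (hne : z ≠ z')
    (h : G.Adj y z') : (contractEdge G x y).Adj z z' :=
  ⟨hne, y, subset_thicken (i := ()) (.inl hz) (.inr rfl), z', self_mem_thicken _ _, h⟩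

theorem isMinorModulo_contractEdge (hxy : G.Adj x y) (hx : x ∈ S) (hy : y ∈ S) :
    IsMinorModulo (contractEdge G x y) (Subtype.val ⁻¹' S) G S := by
  refine isMinorModulo_branchGraph_thicken (fun _ => induce_pair_connected_of_adj hxy)
    (fun i j hij => absurd rfl hij) (fun _ => ?_) fun _ => Set.pair_subset hx hy
  refine Set.subsingleton_singleton.anti (?_ : _ ⊆ ({x} : Set W))
  rintro w ⟨hw, -, hwy⟩
  exact hw.resolve_right hwy

theorem ncard_neighborSet_le_contractEdge [Finite W] {w : ↥(Set.univ \ {y})} (hwx : ↑w ≠ x)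
    (hxy : x ≠ y) (hw : ¬ (G.Adj w x ∧ G.Adj w y)) :
    (G.neighborSet w).ncard ≤ ((contractEdge G x y).neighborSet w).ncard := by
  have hsub : G.neighborSet w \ {y} ⊆ Subtype.val '' (contractEdge G x y).neighborSet w :=
    fun z hz => neighborSet_inter_subset_image (induce_le_contractEdge G x y) w
      ⟨hz.1, trivial, hz.2⟩
  rw [← Set.ncard_image_of_injective _ Subtype.val_injective]
  by_cases hwy : G.Adj w y
  · have hx : x ∈ Subtype.val '' (contractEdge G x y).neighborSet w :=
      ⟨⟨x, trivial, hxy⟩,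
        (contractEdge_adj_of_adj rfl (fun h => hwx (Subtype.ext_iff.1 h).symm) hwy.symm).symm, rfl⟩
    have hwx' : x ∉ G.neighborSet w := fun hwx' => hw ⟨hwx', hwy⟩
    rw [← Set.ncard_exchange hwx' hwy]
    exact Set.ncard_le_ncard (Set.insert_subset hx hsub)
  · have hwy' : y ∉ G.neighborSet w := hwy
    rw [Set.sdiff_singleton_eq_self hwy'] at hsub
    exact Set.ncard_le_ncard hsub

theorem hasSpanningCopy_contractOn {K : SimpleGraph V} {Q : Set V}
    {f : K.induce Q →g G.induce S} (hf : Function.Bijective f) (a b : Q) :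
    HasSpanningCopy (contractOn K Q a b)
      ((contractEdge G (f a) (f b)).induce (Subtype.val ⁻¹' S)) := by
  have hfb {z : Q} : (f z : W) = f b ↔ (z : V) = b :=
    Subtype.ext_iff.symm.trans (hf.1.eq_iff.trans Subtype.ext_iff)
  let g (z : ↥(Q \ {↑b})) : ↥(Subtype.val ⁻¹' S : Set ↥(Set.univ \ {(f b : W)})) :=
    ⟨⟨f ⟨z, z.2.1⟩, trivial, fun h => z.2.2 (hfb.1 h)⟩, (f _).2⟩
  have hg : Function.Bijective g := by
    refine ⟨fun z z' h => ?_, fun ⟨⟨w, _, hw⟩, hwS⟩ => ?_⟩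
    · have hzz' : f ⟨z, z.2.1⟩ = f ⟨z', z'.2.1⟩ := by simpa [g, Subtype.ext_iff] using h
      exact Subtype.ext (congrArg (fun z : Q => (z : V)) (hf.1 hzz'))
    · obtain ⟨z, hz⟩ := hf.2 ⟨w, hwS⟩
      have hzw : (f z : W) = w := congrArg Subtype.val hz
      exact ⟨⟨z, z.2, fun hzb => hw (hzw.symm.trans (hfb.2 hzb))⟩, Subtype.ext (Subtype.ext hzw)⟩
  have hmerge {z z' : ↥(Q \ {↑b})} (hzz' : z ≠ z') (hz : (z : V) = a) (h : K.Adj b z') :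
      (contractEdge G (f a) (f b)).Adj (g z) (g z') := by
    have hza : (⟨z, z.2.1⟩ : Q) = a := Subtype.ext hz
    refine contractEdge_adj_of_adj (congrArg (fun z => (f z : W)) hza) (fun he => hzz' ?_) ?_
    · exact hg.1 (Subtype.ext he)
    · exact f.map_rel (a := b) (b := ⟨z', z'.2.1⟩) h
  have hadj {z z' : ↥(Q \ {↑b})} (hzz' : z ≠ z')
      (h : K.Adj z z' ∨ (z : V) = a ∧ K.Adj b z' ∨ (z' : V) = a ∧ K.Adj z b) :
      (contractEdge G (f a) (f b)).Adj (g z) (g z') := by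
    rcases h with h | ⟨hz, h⟩ | ⟨hz', h⟩
    · exact induce_le_contractEdge G _ _
        (f.map_rel (a := ⟨z, z.2.1⟩) (b := ⟨z', z'.2.1⟩) h)
    · exact hmerge hzz' hz h
    · exact (hmerge hzz'.symm hz' h.symm).symm
  refine ⟨⟨g, fun {z z'} h => ?_⟩, hg⟩
  obtain ⟨hzz', h | h⟩ := h
  exacts [hadj hzz' h, (hadj hzz'.symm h).symm]

end ContractEdge

end Reductions

section RecursiveOrderings

variable {V : Type*} {H : SimpleGraph V} {t : ℕ} {ω : Fin t ≃ V}

theorem prevSet_succ (ω : Fin t ≃ V) (s : Fin t) :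
    prevSet ω (s + 1) = insert (ω s) (prevSet ω s) := by
  rw [prevSet, prevSet, ← Set.image_insert_eq]
  congr 1
  ext i
  simp only [Set.mem_ofPred_eq, Set.mem_insert_iff, Fin.ext_iff]
  exact Nat.lt_succ_iff_lt_or_eq.trans or_comm

theorem notMem_prevSet (ω : Fin t ≃ V) (s : Fin t) : ω s ∉ prevSet ω s := by
  rintro ⟨i, hi, his⟩
  exact lt_irrefl (i : ℕ) (ω.injective his ▸ hi)

theorem prevSet_eq_univ (ω : Fin t ≃ V) {s : ℕ} (hs : t ≤ s) : prevSet ω s = Set.univ :=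
  Set.eq_univ_of_forall fun v => ⟨ω.symm v, (ω.symm v).2.trans_le hs, ω.apply_symm_apply v⟩

theorem IsRecursiveOrdering.nbrs_cases [Finite V] (h : IsRecursiveOrdering H ω) (s : Fin t) :
    nbrs H ω s = ∅ ∨ (∃ a, nbrs H ω s = {a}) ∨
      ∃ a b, a ≠ b ∧ nbrs H ω s = {a, b} ∧ H.Adj a b := by
  obtain h0 | h1 | h2 : (nbrs H ω s).ncard = 0 ∨ (nbrs H ω s).ncard = 1 ∨
      (nbrs H ω s).ncard = 2 := by
    have := (h s).1
    lia
  · exact .inl ((Set.ncard_eq_zero).1 h0)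
  · exact .inr (.inl (Set.ncard_eq_one.1 h1))
  · obtain ⟨a, b, hab, hnbrs⟩ := Set.ncard_eq_two.1 h2
    exact .inr (.inr ⟨a, b, hab, hnbrs, (h s).2 a (hnbrs ▸ .inl rfl) b (hnbrs ▸ .inr rfl) hab⟩)

end RecursiveOrderings

section Anchors

variable {V W : Type*} [Fintype V] {H : SimpleGraph V} {Ω : Set (Fin (Fintype.card V) ≃ V)}
  {G : SimpleGraph W} {S : Set W}

/-- The pairs `(G, S)` to which the theorem applies; the proof passes from one such pair to
another. -/
structure IsAnchor (H : SimpleGraph V) (Ω : Set (Fin (Fintype.card V) ≃ V)) (G : SimpleGraph W)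
    (S : Set W) : Prop where
  wellConnected : WellConnected G S
  card_le_degree : ∀ w ∉ S, Fintype.card V ≤ (G.neighborSet w).ncard
  exists_hasSpanningCopy : ∃ ω ∈ Ω, HasSpanningCopy (H.induce (prevSet ω S.ncard)) (G.induce S)

/-- `G` has a minor on fewer vertices that is anchored at a set `T`, the vertices outside `T`
keeping singleton branch sets outside `S`. -/
def HasSmallerAnchor (H : SimpleGraph V) (Ω : Set (Fin (Fintype.card V) ≃ V)) (G : SimpleGraph W)
    (S : Set W) : Prop :=
  ∃ (B : Set W) (L : SimpleGraph B) (T : Set B),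
    B ≠ Set.univ ∧ IsAnchor H Ω L T ∧ IsMinorModulo L T G S

namespace IsAnchor

theorem hasSmallerAnchor_of_hasTightSeparation [Finite W] (h : IsAnchor H Ω G S)
    (htight : HasTightSeparation G S) : HasSmallerAnchor H Ω G S := by
  obtain ⟨A, B, hAB, ⟨w, -, hwB⟩, hBA, hSA, hcard⟩ := htight
  obtain ⟨L, hL, hcopy, hminor⟩ := h.wellConnected.exists_minor_of_isSeparation hAB hSA hBA hcard
  refine ⟨B, L, Subtype.val ⁻¹' A, fun hB => hwB (hB ▸ trivial), ⟨?_, fun z hz => ?_, ?_⟩, hminor⟩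
  · exact (h.wellConnected.induce_of_isSeparation hAB hSA hBA hcard).mono hL
  · have hzB : G.neighborSet z ∩ B = G.neighborSet z :=
      Set.inter_eq_left.2 (hAB.neighborSet_subset ⟨z.2, hz⟩)
    have hsub := neighborSet_inter_subset_image hL z
    rw [hzB] at hsub
    refine (h.card_le_degree z fun hzS => hz (hSA hzS)).trans ((Set.ncard_le_ncard hsub).trans ?_)
    rw [Set.ncard_image_of_injective _ Subtype.val_injective]
  · obtain ⟨ω, hω, hωS⟩ := h.exists_hasSpanningCopy
    have hncard : (Subtype.val ⁻¹' A : Set B).ncard = S.ncard := hcopy.card_eq.symm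
    exact ⟨ω, hω, hncard ▸ hωS.trans hcopy⟩

theorem insert [Finite W] (h : IsAnchor H Ω G S) (htight : ¬ HasTightSeparation G S)
    (ht : S.ncard < Fintype.card V) {ω : Fin (Fintype.card V) ≃ V} (hω : ω ∈ Ω)
    {f : H.induce (prevSet ω S.ncard) →g G.induce S} (hf : Function.Bijective f) {v : W}
    (hv : v ∉ S) (hadj : ∀ z : prevSet ω S.ncard, H.Adj (ω ⟨S.ncard, ht⟩) z → G.Adj v (f z)) :
    IsAnchor H Ω G (insert v S) := by
  refine ⟨wellConnected_insert_of_not_hasTightSeparation htight fun huniv => ?_, fun w hw =>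
    h.card_le_degree w fun hwS => hw (.inr hwS), ω, hω, ?_⟩
  · have hsub : G.neighborSet v ⊆ S := fun w hw =>
      (huniv.symm.subset (Set.mem_univ w)).resolve_left (Adj.ne' hw)
    exact ht.not_ge ((h.card_le_degree v hv).trans (Set.ncard_le_ncard hsub))
  · rw [Set.ncard_insert_of_notMem hv, prevSet_succ ω ⟨S.ncard, ht⟩]
    exact HasSpanningCopy.induce_insert hf (notMem_prevSet ω ⟨S.ncard, ht⟩) hv hadj

theorem contractEdge [Finite W] (h : IsAnchor H Ω G S) {ω ω' : Fin (Fintype.card V) ≃ V}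
    {f : H.induce (prevSet ω S.ncard) →g G.induce S} (hf : Function.Bijective f)
    {a b : prevSet ω S.ncard} (hab : H.Adj a b) (hω' : ω' ∈ Ω)
    (e : H.induce (prevSet ω' (S.ncard - 1)) ≃g contractOn H (prevSet ω S.ncard) a b)
    (hno : ∀ w ∉ S, ¬ (G.Adj w (f a) ∧ G.Adj w (f b))) :
    IsAnchor H Ω (contractEdge G (f a) (f b)) (Subtype.val ⁻¹' S) := by
  have hfab : G.Adj (f a) (f b) := f.map_rel hab
  refine ⟨?_, fun w hw => ?_, ω', hω', ?_⟩
  · exact (h.wellConnected.induce_compl_singleton (f b).2).mono (induce_le_contractEdge G _ _)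
  · exact (h.card_le_degree w hw).trans (ncard_neighborSet_le_contractEdge
      (fun hwa => hw (show ↑w ∈ S from hwa ▸ (f a).2)) hfab.ne (hno w hw))
  · rw [ncard_preimage_val_compl_singleton (f b).2]
    exact (HasSpanningCopy.of_iso e).trans (hasSpanningCopy_contractOn hf a b)

theorem hasSmallerAnchor_of_maximal [Finite W] (hΩ : IsContractibleOrdering H Ω)
    (h : Maximal (IsAnchor H Ω G) S) (ht : S.ncard < Fintype.card V) :
    HasSmallerAnchor H Ω G S := by
  by_cases htight : HasTightSeparation G S
  · exact h.prop.hasSmallerAnchor_of_hasTightSeparation htight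
  obtain ⟨ω, hω, f, hf⟩ := h.prop.exists_hasSpanningCopy
  let s : Fin (Fintype.card V) := ⟨S.ncard, ht⟩
  have hno (v : W) (hv : v ∉ S) : ¬ ∀ z : prevSet ω S.ncard, ↑z ∈ nbrs H ω s → G.Adj v (f z) :=
    fun hadj => hv (h.le_of_ge (h.prop.insert htight ht hω hf hv fun z hz => hadj z ⟨z.2, hz⟩)
      (Set.subset_insert v S) (Set.mem_insert v S))
  obtain hnbrs | ⟨a, hnbrs⟩ | ⟨a, b, hab, hnbrs, habH⟩ := (hΩ.2.1 ω hω).nbrs_cases s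
  · obtain ⟨v, hv⟩ := (Set.ne_univ_iff_exists_notMem S).1 h.prop.wellConnected.1
    exact absurd (fun z hz => absurd hz (hnbrs ▸ Set.notMem_empty _)) (hno v hv)
  · have ha : a ∈ prevSet ω S.ncard := (hnbrs.symm.subset rfl : a ∈ nbrs H ω s).1
    refine absurd (hasTightSeparation_of_neighborSet_subset (f ⟨a, ha⟩).2
      h.prop.wellConnected.1 fun v hv => ?_) htight
    by_contra hvS
    refine hno v hvS fun z hz => ?_
    obtain rfl : z = ⟨a, ha⟩ := Subtype.ext (hnbrs.subset hz)
    exact Adj.symm hv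
  · have ha : a ∈ nbrs H ω s := hnbrs ▸ .inl rfl
    have hb : b ∈ nbrs H ω s := hnbrs ▸ .inr rfl
    obtain ⟨ω', hω', ⟨e⟩⟩ := hΩ.2.2 ω hω s a ha b hb hab
    have hanchor := h.prop.contractEdge hf (a := ⟨a, ha.1⟩) (b := ⟨b, hb.1⟩) habH hω' e
      fun v hv hvab => hno v hv fun z hz => ?_
    · exact ⟨_, _, _, fun huniv => (huniv.symm.subset (Set.mem_univ _)).2 rfl, hanchor,
        isMinorModulo_contractEdge (f.map_rel habH) (f _).2 (f _).2⟩
    · obtain hza | hzb : (z : V) = a ∨ (z : V) = b := hnbrs.subset hz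
      · exact (Subtype.ext hza : z = ⟨a, ha.1⟩) ▸ hvab.1
      · exact (Subtype.ext hzb : z = ⟨b, hb.1⟩) ▸ hvab.2

theorem isMinorModulo_apexGraph [Finite W] (hΩ : IsContractibleOrdering H Ω)
    (h : IsAnchor H Ω G S) : IsMinorModulo (apexGraph H) (Set.range some) G S := by
  induction hn : Nat.card W using Nat.strong_induction_on generalizing W with
  | _ n ih =>
  obtain ⟨S', hSS', hmax⟩ := (Set.toFinite {S' | IsAnchor H Ω G S'}).exists_le_maximal h
  refine IsMinorModulo.anti hSS' ?_
  by_cases ht : S'.ncard < Fintype.card V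
  · obtain ⟨B, L, T, hB, hL, hminor⟩ := hasSmallerAnchor_of_maximal hΩ hmax ht
    have hcard : Nat.card B < n := hn ▸ Set.ncard_lt_card hB
    exact (ih _ hcard hL rfl).trans hminor
  · obtain ⟨ω, -, hω⟩ := hmax.prop.exists_hasSpanningCopy
    rw [prevSet_eq_univ ω (not_lt.1 ht)] at hω
    exact hmax.prop.wellConnected.exists_isMinorModulo_apexGraph
      ((HasSpanningCopy.of_iso (induceUnivIso H).symm).trans hω)

end IsAnchor

end Anchors

/-- Lemma: if `H` has a contractible ordering `Ω`, `S` is well-connected in `G`, every vertex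
outside `S` has degree at least `t = |V(H)|`, and `G[S]` contains a spanning subgraph
isomorphic to `H[ω_{[|S|]}]` for some `ω ∈ Ω`, then `G` contains an `H⁺`-minor whose apex
branch set is a singleton contained in `V(G)∖S`. -/
theorem wellConnected_apex_minor
    {V W : Type*} [Fintype V] [Fintype W]
    (hV : 0 < Fintype.card V)
    (H : SimpleGraph V) (Ω : Set (Fin (Fintype.card V) ≃ V))
    (hΩ : IsContractibleOrdering H Ω)
    (G : SimpleGraph W) (S : Set W) (hwc : WellConnected G S)
    (hdeg : ∀ w ∉ S, Fintype.card V ≤ (G.neighborSet w).ncard)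
    (hsp : ∃ ω ∈ Ω, ∃ φ : ↥(prevSet ω S.ncard) ≃ ↥S,
      ∀ x y : ↥(prevSet ω S.ncard), H.Adj (x : V) (y : V) → G.Adj (φ x : W) (φ y : W)) :
    ∃ μ : Option V → Set W, IsMinorMap G (apexGraph H) μ ∧
      ∃ w : W, w ∉ S ∧ μ none = {w} := by
  obtain ⟨ω, hω, φ, hφ⟩ := hsp
  have hcopy : HasSpanningCopy (H.induce (prevSet ω S.ncard)) (G.induce S) :=
    ⟨⟨φ, fun {x y} => hφ x y⟩, φ.bijective⟩
  have hanchor : IsAnchor H Ω G S := ⟨hwc, hdeg, ω, hω, hcopy⟩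
  obtain ⟨μ, hμ, hμS⟩ := hanchor.isMinorModulo_apexGraph hΩ
  exact ⟨μ, hμ, hμS none fun ⟨_, h⟩ => Option.some_ne_none _ h⟩
end

section
/- Let h be a nonnegative integer, let G be the universal outerplanar graph with height h, let T be the weak dual tree of G, let r be the h-center of T, and let x¹, x², x³ be the three vertices of G incident to the face r. Let H be a maximal outerplanar graph on at least three vertices whose weak dual tree has an h-center r_H, and let x_H¹, x_H², x_H³ be the three vertices of H incident to the face r_H. Then there exists a subgraph embedding φ from H to G (an injection φ : V(H) → V(G) with φ(u)φ(v) ∈ E(G) for every uv ∈ E(H)) such that φ(x_Hⁱ) = xⁱ for all i ∈ {1,2,3}. -/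
open SimpleGraph

attribute [local instance] Classical.propDecidable

section OP

variable {V U : Type*}

/-- A cactus: a connected graph in which every block is an edge or a cycle; equivalently,
a connected graph in which any two cycles sharing an edge have the same edge set. -/
def IsCactus (G : SimpleGraph V) : Prop :=
  G.Connected ∧
    ∀ (u v : V) (c₁ : G.Walk u u) (c₂ : G.Walk v v), c₁.IsCycle → c₂.IsCycle →
      ∀ e, e ∈ c₁.edges → e ∈ c₂.edges → ∀ e', e' ∈ c₁.edges ↔ e' ∈ c₂.edges

/-- Outerplanar graphs, characterized by excluded minors `K₄` and `K_{2,3}`. -/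
def Outerplanar (G : SimpleGraph V) : Prop :=
  (¬ ∃ μ : Fin 4 → Set V, IsMinorMap G (completeGraph (Fin 4)) μ) ∧
  (¬ ∃ μ : (Fin 2 ⊕ Fin 3) → Set V, IsMinorMap G (completeBipartiteGraph (Fin 2) (Fin 3)) μ)

/-- A maximal outerplanar graph: outerplanar, and adding any edge destroys outerplanarity. -/
def MaximalOuterplanar (G : SimpleGraph V) : Prop :=
  Outerplanar G ∧ ∀ G' : SimpleGraph V, G < G' → ¬ Outerplanar G'

/-- The weak dual of a maximal outerplanar graph: vertices are the triangles (which are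
exactly the bounded faces), two triangles being adjacent when they share an edge. -/
def weakDual [DecidableEq V] (G : SimpleGraph V) :
    SimpleGraph {s : Finset V // G.IsNClique 3 s} :=
  SimpleGraph.fromRel fun s t => ((s : Finset V) ∩ (t : Finset V)).card = 2

/-- A (nonempty) path, as a graph: a tree with maximum degree at most two. -/
def IsPathTree (T : SimpleGraph U) : Prop :=
  T.IsTree ∧ ∀ v : U, (T.neighborSet v).ncard ≤ 2

/-- A cubic tree: a one-vertex tree, or a tree all of whose degrees are `1` or `3`. -/
def IsCubicTree (T : SimpleGraph U) [Fintype U] : Prop :=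
  T.IsTree ∧ (Fintype.card U = 1 ∨
    ∀ v : U, (T.neighborSet v).ncard = 1 ∨ (T.neighborSet v).ncard = 3)

/-- The complete cubic tree with height `h`: a cubic tree with a vertex `r` such that every
path from `r` to a vertex of degree at most one has exactly `h` edges. -/
def IsCompleteCubicTree (T : SimpleGraph U) [Fintype U] (h : ℕ) : Prop :=
  IsCubicTree T ∧ ∃ r : U, ∀ v : U, (T.neighborSet v).ncard ≤ 1 → T.dist r v = h

/-- A complete binary tree with height `h ≥ 1` and root `r`: obtained from a complete cubic
tree of height `h` with `h`-center `r` by deleting one component of `T′∖r`; equivalently the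
root has degree `2`, all other degrees are `1` or `3`, and all leaves are at distance exactly
`h` from `r`. -/
def IsCompleteBinaryTree (T : SimpleGraph U) (r : U) (h : ℕ) : Prop :=
  T.IsTree ∧ 1 ≤ h ∧ (T.neighborSet r).ncard = 2 ∧
    (∀ v : U, v ≠ r → (T.neighborSet v).ncard = 1 ∨ (T.neighborSet v).ncard = 3) ∧
    ∀ v : U, (T.neighborSet v).ncard = 1 → T.dist r v = h

end OP

/-- `r` is an `h`-center of `T`: every vertex is joined to `r` by a path with at most `h`
edges. -/
def IsHCenter {U : Type*} (T : SimpleGraph U) (h : ℕ) (r : U) : Prop :=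
  ∀ v : U, T.Reachable r v ∧ T.dist r v ≤ h

/-!
Starting from the root faces, `H` is mapped into `G` greedily, one vertex at a time. A region glued
together from triangles contains, for any three of its vertices, a triangle minor rooted at them;
since `K₄` is excluded, a vertex outside the region therefore has at most two neighbours in it. So a
vertex of `H` glued to an edge `uv` of the region already mapped, and a vertex of `G` glued to the
image of `uv`, have no further neighbours in the region and in its image respectively, and the map
stays an isomorphism onto an induced subgraph. Since `K₂,₃` is excluded, every edge of `G` lies in
at most two triangles; hence the three edges of a triangle of degree three in the weak dual, in
particular of any triangle at distance less than `h` from the root, all lie in a second triangle, so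
`G` always offers the vertex that is needed.

The process exhausts `H` because every vertex of a maximal outerplanar graph lies in a triangle.
This rests on the theorem of Chartrand and Harary that a graph without `K₄` and `K₂,₃` minors has a
noncrossing placement of its vertices on a line: maximality then allows every chord that crosses no
edge to be used as an edge. A placement comes from a Hamiltonian cycle if no vertex separates the
graph, and is otherwise glued from the two sides of a cut vertex.
-/

section BranchSets

variable {V : Type*} {G : SimpleGraph V}

/-- Some edge of `G` joins `X` to `Y`: the relation between branch sets in a minor. -/
def Touches (G : SimpleGraph V) (X Y : Set V) : Prop :=
  ∃ a ∈ X, ∃ b ∈ Y, G.Adj a b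

lemma Touches.symm {X Y : Set V} : Touches G X Y → Touches G Y X :=
  fun ⟨a, ha, b, hb, hab⟩ => ⟨b, hb, a, ha, hab.symm⟩

lemma connected_induce_singleton (a : V) : (G.induce {a}).Connected := by
  rw [induce_singleton_eq_top]
  exact connected_top

lemma Touches.connected_union {X Y : Set V} (hX : (G.induce X).Connected)
    (hY : (G.induce Y).Connected) (hXY : Touches G X Y) : (G.induce (X ∪ Y)).Connected :=
  let ⟨_, ha, _, hb, hab⟩ := hXY
  connected_induce_union hX.preconnected hY.preconnected ha hb hab

lemma forall_mem_of_connected_induce {Y : Set V} (hY : (G.induce Y).Connected) {P : V → Prop}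
    (hP : ∀ x ∈ Y, ∀ y ∈ Y, G.Adj x y → P x → P y) {b d : V} (hb : b ∈ Y) (hd : d ∈ Y)
    (hPb : P b) : P d := by
  obtain ⟨w⟩ := hY.preconnected ⟨b, hb⟩ ⟨d, hd⟩
  by_contra hPd
  obtain ⟨e, -, he₁, he₂⟩ := w.exists_boundary_dart {x | P x} hPb hPd
  exact he₂ (hP _ e.fst.2 _ e.snd.2 e.adj he₁)

namespace Outerplanar

lemma not_four_branch_sets (hG : Outerplanar G) {μ : Fin 4 → Set V}
    (hc : ∀ i, (G.induce (μ i)).Connected)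
    (hμ : ∀ i j, i < j → Disjoint (μ i) (μ j) ∧ Touches G (μ i) (μ j)) : False := by
  refine hG.1 ⟨μ, hc, fun i j hij => ?_, fun i j hij => ?_⟩
  · rcases hij.lt_or_gt with h | h
    exacts [(hμ i j h).1, (hμ j i h).1.symm]
  · rcases (show i ≠ j from hij).lt_or_gt with h | h
    exacts [(hμ i j h).2, (hμ j i h).2.symm]

lemma not_two_three_branch_sets (hG : Outerplanar G) {A : Fin 2 → Set V} {B : Fin 3 → Set V}
    (hAc : ∀ i, (G.induce (A i)).Connected) (hBc : ∀ j, (G.induce (B j)).Connected)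
    (hA : Disjoint (A 0) (A 1)) (hB : ∀ i j, i < j → Disjoint (B i) (B j))
    (hAB : ∀ i j, Disjoint (A i) (B j) ∧ Touches G (A i) (B j)) : False := by
  refine hG.2 ⟨Sum.elim A B, ?_, ?_, ?_⟩
  · rintro (i | j)
    exacts [hAc i, hBc j]
  · rintro (i | i) (j | j) hij
    · fin_cases i <;> fin_cases j
      exacts [absurd rfl hij, hA, hA.symm, absurd rfl hij]
    · exact (hAB i j).1
    · exact (hAB j i).1.symm
    · rcases (ne_of_apply_ne Sum.inr hij).lt_or_gt with h | h
      exacts [hB i j h, (hB j i h).symm]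
  · rintro (i | i) (j | j) hij
    · simp at hij
    · exact (hAB i j).2
    · exact (hAB j i).2.symm
    · simp at hij

lemma not_three_common_neighbors (hG : Outerplanar G) {a b x y z : V} (hab : a ≠ b)
    (hxy : x ≠ y) (hxz : x ≠ z) (hyz : y ≠ z)
    (hx : G.Adj a x ∧ G.Adj b x) (hy : G.Adj a y ∧ G.Adj b y) (hz : G.Adj a z ∧ G.Adj b z) :
    False := by
  refine hG.not_two_three_branch_sets (A := ![{a}, {b}]) (B := ![{x}, {y}, {z}]) ?_ ?_ ?_ ?_ ?_
  · simp [Fin.forall_fin_succ]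
  · simp [Fin.forall_fin_succ]
  · simpa using hab
  · simp [Fin.forall_fin_succ, hxy.symm, hxz.symm, hyz.symm]
  · simp [Fin.forall_fin_succ, Touches, hx, hy, hz, hx.1.ne', hx.2.ne', hy.1.ne', hy.2.ne',
      hz.1.ne', hz.2.ne']

end Outerplanar

end BranchSets

section Placements

variable {V : Type*} {G : SimpleGraph V} {p : V → ℕ}

/-- For vertices placed on a line (or a circle) by `p`, the points `b` and `d` lie on the same side
of the chord `ac`; for distinct positions this says that the chords `ac` and `bd` do not cross. -/
def SameSide (p : V → ℕ) (a c b d : V) : Prop :=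
  (p a < p b ↔ p b < p c) ↔ (p a < p d ↔ p d < p c)

lemma SameSide.trans {a c b d e : V} (h₁ : SameSide p a c b d) (h₂ : SameSide p a c d e) :
    SameSide p a c b e :=
  Iff.trans h₁ h₂

lemma SameSide.swap {a c b d : V} (hp : Function.Injective p) (hab : a ≠ b) (had : a ≠ d)
    (hcb : c ≠ b) (hcd : c ≠ d) (h : SameSide p a c b d) : SameSide p b d a c := by
  have := hp.ne hab
  have := hp.ne had
  have := hp.ne hcb
  have := hp.ne hcd
  unfold SameSide at *
  omega

/-- An outerplanar drawing, as an injective placement of the vertices on a line (or a circle) for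
which disjoint edges do not cross. -/
structure IsNoncrossing (G : SimpleGraph V) (p : V → ℕ) : Prop where
  injective : Function.Injective p
  sameSide : ∀ ⦃a b c d : V⦄, G.Adj a c → G.Adj b d → a ≠ b → a ≠ d → c ≠ b → c ≠ d →
    SameSide p a c b d

namespace IsNoncrossing

lemma sameSide_of_adj (hp : IsNoncrossing G p) {Y : Set V} (hY : (G.induce Y).Connected)
    {a b c d : V} (hac : G.Adj a c) (ha : a ∉ Y) (hc : c ∉ Y) (hb : b ∈ Y) (hd : d ∈ Y) :
    SameSide p a c b d :=
  forall_mem_of_connected_induce hY (P := SameSide p a c b)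
    (fun _ hx _ hy hxy h => h.trans (hp.sameSide hac hxy (ne_of_mem_of_not_mem hx ha).symm
      (ne_of_mem_of_not_mem hy ha).symm (ne_of_mem_of_not_mem hx hc).symm
      (ne_of_mem_of_not_mem hy hc).symm)) hb hd Iff.rfl

lemma sameSide_of_connected (hp : IsNoncrossing G p) {X Y : Set V}
    (hX : (G.induce X).Connected) (hY : (G.induce Y).Connected) (hXY : Disjoint X Y)
    {a b c d : V} (ha : a ∈ X) (hc : c ∈ X) (hb : b ∈ Y) (hd : d ∈ Y) : SameSide p a c b d := by
  have hne {x y : V} (hx : x ∈ X) (hy : y ∈ Y) : x ≠ y := hXY.ne_of_mem hx hy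
  refine SameSide.swap hp.injective (hne ha hb).symm (hne hc hb).symm (hne ha hd).symm
    (hne hc hd).symm (forall_mem_of_connected_induce hX (P := SameSide p b d a) ?_ ha hc Iff.rfl)
  intro x hx y hy hxy h
  exact h.trans ((hp.sameSide_of_adj hY hxy (hXY.notMem_of_mem_left hx)
    (hXY.notMem_of_mem_left hy) hb hd).swap hp.injective (hne hx hb) (hne hx hd) (hne hy hb)
    (hne hy hd))

lemma not_isMinorMap_completeGraph (hp : IsNoncrossing G p) {μ : Fin 4 → Set V} :
    ¬ IsMinorMap G (completeGraph (Fin 4)) μ := by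
  rintro ⟨hc, hd, ht⟩
  choose v hv using fun i => Set.nonempty_coe_sort.1 (hc i).nonempty
  have hne (i j : Fin 4) (hij : i ≠ j) : p (v i) ≠ p (v j) :=
    hp.injective.ne ((hd hij).ne_of_mem (hv i) (hv j))
  have pairing (i j k l : Fin 4) (h : [i, j, k, l].Nodup) :
      SameSide p (v i) (v j) (v k) (v l) := by
    simp only [List.nodup_cons, List.mem_cons, List.not_mem_nil, not_or, or_false] at h
    obtain ⟨⟨hij, hik, hil⟩, ⟨hjk, hjl⟩, hkl, -⟩ := h
    exact hp.sameSide_of_connected (Touches.connected_union (hc i) (hc j) (ht hij))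
      (Touches.connected_union (hc k) (hc l) (ht hkl))
      (Set.disjoint_union_left.2 ⟨Set.disjoint_union_right.2 ⟨hd hik, hd hil⟩,
        Set.disjoint_union_right.2 ⟨hd hjk, hd hjl⟩⟩)
      (.inl (hv i)) (.inr (hv j)) (.inl (hv k)) (.inr (hv l))
  -- Of the three ways to pair up four points on a circle, one gives crossing chords.
  have h₁ := pairing 0 1 2 3 (by simp)
  have h₂ := pairing 0 2 1 3 (by simp)
  have h₃ := pairing 0 3 1 2 (by simp)
  have := hne 0 1 (by simp)
  have := hne 0 2 (by simp)
  have := hne 0 3 (by simp)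
  have := hne 1 2 (by simp)
  have := hne 1 3 (by simp)
  have := hne 2 3 (by simp)
  unfold SameSide at h₁ h₂ h₃
  omega

lemma not_isMinorMap_completeBipartiteGraph (hp : IsNoncrossing G p)
    {μ : Fin 2 ⊕ Fin 3 → Set V} :
    ¬ IsMinorMap G (completeBipartiteGraph (Fin 2) (Fin 3)) μ := by
  rintro ⟨hc, hd, ht⟩
  choose v hv using fun i => Set.nonempty_coe_sort.1 (hc i).nonempty
  have hne (i j : Fin 2 ⊕ Fin 3) (hij : i ≠ j) : p (v i) ≠ p (v j) :=
    hp.injective.ne ((hd hij).ne_of_mem (hv i) (hv j))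
  have pairing {a b : Fin 2} {i j : Fin 3} (hab : a ≠ b) (hij : i ≠ j) :
      SameSide p (v (.inl a)) (v (.inr i)) (v (.inl b)) (v (.inr j)) :=
    hp.sameSide_of_connected (Touches.connected_union (hc _) (hc _) (ht (by simp)))
      (Touches.connected_union (hc _) (hc _) (ht (by simp)))
      (Set.disjoint_union_left.2
        ⟨Set.disjoint_union_right.2 ⟨hd (by simpa using hab), hd (by simp)⟩,
        Set.disjoint_union_right.2 ⟨hd (by simp), hd (by simpa using hij)⟩⟩)
      (.inl (hv _)) (.inr (hv _)) (.inl (hv _)) (.inr (hv _))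
  -- The three points on the large side would be pairwise separated by a single chord.
  have separated (i j : Fin 3) (hij : i ≠ j) :
      ¬ SameSide p (v (.inl 0)) (v (.inl 1)) (v (.inr i)) (v (.inr j)) := by
    have h₁ := pairing zero_ne_one hij
    have h₂ := pairing zero_ne_one hij.symm
    have := hne (.inl 0) (.inl 1) (by simp)
    have := hne (.inl 0) (.inr i) (by simp)
    have := hne (.inl 0) (.inr j) (by simp)
    have := hne (.inl 1) (.inr i) (by simp)
    have := hne (.inl 1) (.inr j) (by simp)
    have := hne (.inr i) (.inr j) (by simpa using hij)
    unfold SameSide at *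
    omega
  have h₀₁ := separated 0 1 (by simp)
  have h₀₂ := separated 0 2 (by simp)
  have h₁₂ := separated 1 2 (by simp)
  unfold SameSide at h₀₁ h₀₂ h₁₂
  tauto

theorem outerplanar (hp : IsNoncrossing G p) : Outerplanar G :=
  ⟨fun ⟨_, hμ⟩ => hp.not_isMinorMap_completeGraph hμ,
    fun ⟨_, hμ⟩ => hp.not_isMinorMap_completeBipartiteGraph hμ⟩

end IsNoncrossing

end Placements

section CyclicLists

open List

variable {V : Type*} {G : SimpleGraph V}

lemma touches_of_isChain_append {l₁ l₂ : List V} (h : (l₁ ++ l₂).IsChain G.Adj) (h₁ : l₁ ≠ [])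
    (h₂ : l₂ ≠ []) : Touches G {x | x ∈ l₁} {x | x ∈ l₂} :=
  ⟨_, getLast_mem h₁, _, head_mem h₂, (isChain_append.1 h).2.2 _
    (getLast?_eq_some_getLast h₁ ▸ rfl) _ (head?_eq_some_head h₂ ▸ rfl)⟩

lemma connected_induce_of_isChain {l : List V} (h : l.IsChain G.Adj) (hl : l ≠ []) :
    (G.induce {x | x ∈ l}).Connected := by
  induction l with
  | nil => exact absurd rfl hl
  | cons a l ih =>
    rcases l with _ | ⟨b, l⟩
    · have hset : {x | x ∈ [a]} = {a} := by ext; simp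
      rw [hset]
      exact connected_induce_singleton a
    · have hset : {x | x ∈ a :: b :: l} = {a} ∪ {x | x ∈ b :: l} := by ext; simp
      rw [hset]
      exact Touches.connected_union (connected_induce_singleton a) (ih h.tail (by simp))
        ⟨a, rfl, b, by simp, (isChain_cons_cons.1 h).1⟩

lemma exists_isChain_through {D : Set V} (hD : (G.induce D).Connected) {p q : V}
    (hp : Touches G {p} D) (hq : Touches G D {q}) :
    ∃ P : List V, P ≠ [] ∧ P.Nodup ∧ (∀ x ∈ P, x ∈ D) ∧ (p :: P ++ [q]).IsChain G.Adj := by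
  obtain ⟨p', hp', a, ha, hpa⟩ := hp
  obtain rfl : p' = p := hp'
  obtain ⟨b, hb, q', hq', hbq⟩ := hq
  obtain rfl : q' = q := hq'
  obtain ⟨w, hw⟩ := (hD.preconnected ⟨a, ha⟩ ⟨b, hb⟩).exists_isPath
  have hne : w.support.map Subtype.val ≠ [] := by
    rw [Ne, map_eq_nil_iff]
    exact w.support_ne_nil
  refine ⟨w.support.map Subtype.val, hne, hw.support_nodup.map Subtype.val_injective, ?_, ?_⟩
  · rintro x hx
    obtain ⟨y, -, rfl⟩ := mem_map.1 hx
    exact y.2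
  · rw [isChain_append, isChain_cons, isChain_map]
    refine ⟨⟨fun y hy => ?_, w.isChain_adj_support⟩, isChain_singleton _, fun x hx y hy => ?_⟩
    · rw [head?_map, head?_eq_some_head w.support_ne_nil, w.head_support] at hy
      obtain rfl : a = y := by simpa using hy
      exact hpa
    · rw [getLast?_cons_of_ne_nil hne, getLast?_map,
        getLast?_eq_some_getLast w.support_ne_nil, w.getLast_support] at hx
      obtain rfl : b = x := by simpa using hx
      obtain rfl : q' = y := by simpa using hy
      exact hbq

/-- An outerplanar drawing as a list, the order of its vertices around the outer circle: no edge
crosses another. -/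
def IsNoncrossingList (G : SimpleGraph V) (l : List V) : Prop :=
  ∀ ⦃a b c d : V⦄, [a, b, c, d] <+ l → G.Adj a c → ¬ G.Adj b d

lemma IsNoncrossingList.of_length_le {l : List V} (hl : l.length ≤ 3) : IsNoncrossingList G l :=
  fun _ _ _ _ h => absurd (h.length_le.trans hl) (by simp)

lemma IsNoncrossingList.rotate {l₁ l₂ : List V} (h : IsNoncrossingList G (l₁ ++ l₂)) :
    IsNoncrossingList G (l₂ ++ l₁) := by
  intro a b c d hs hac hbd
  obtain ⟨r₂, r₁, hr, h₂, h₁⟩ := sublist_append_iff.1 hs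
  have hs' := h₁.append h₂
  rcases r₂ with _ | ⟨_, _ | ⟨_, _ | ⟨_, _ | ⟨_, r₂⟩⟩⟩⟩ <;>
    simp only [nil_append, cons_append, cons.injEq] at hr
  · subst hr
    exact h hs' hac hbd
  · obtain ⟨rfl, rfl⟩ := hr
    exact h hs' hbd hac.symm
  · obtain ⟨rfl, rfl, rfl⟩ := hr
    exact h hs' hac.symm hbd.symm
  · obtain ⟨rfl, rfl, rfl, rfl⟩ := hr
    exact h hs' hbd.symm hac
  · obtain ⟨rfl, rfl, rfl, rfl, hr⟩ := hr
    obtain ⟨rfl, rfl⟩ := append_eq_nil_iff.1 hr.symm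
    exact h hs' hac hbd

lemma IsNoncrossingList.append {l₁ l₂ : List V} (h₁ : IsNoncrossingList G l₁)
    (h₂ : IsNoncrossingList G l₂) (h : ∀ x ∈ l₁, ∀ y ∈ l₂, ¬ G.Adj x y) :
    IsNoncrossingList G (l₁ ++ l₂) := by
  intro a b c d hs hac hbd
  obtain ⟨r₁, r₂, hr, hr₁, hr₂⟩ := sublist_append_iff.1 hs
  have hno : ∀ x ∈ r₁, ∀ y ∈ r₂, ¬ G.Adj x y :=
    fun x hx y hy => h x (hr₁.subset hx) y (hr₂.subset hy)
  rcases r₁ with _ | ⟨_, _ | ⟨_, _ | ⟨_, _ | ⟨_, r₁⟩⟩⟩⟩ <;>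
    simp only [nil_append, cons_append, cons.injEq] at hr
  · subst hr
    exact h₂ hr₂ hac hbd
  · obtain ⟨rfl, rfl⟩ := hr
    exact hno _ (by simp) _ (by simp) hac
  · obtain ⟨rfl, rfl, rfl⟩ := hr
    exact hno _ (by simp) _ (by simp) hac
  · obtain ⟨rfl, rfl, rfl, rfl⟩ := hr
    exact hno _ (by simp) _ (by simp) hbd
  · obtain ⟨rfl, rfl, rfl, rfl, hr⟩ := hr
    obtain ⟨rfl, rfl⟩ := append_eq_nil_iff.1 hr.symm
    exact h₁ hr₁ hac hbd

lemma IsNoncrossingList.glue {v : V} {l₁ l₂ : List V} (h₁ : IsNoncrossingList G (v :: l₁))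
    (h₂ : IsNoncrossingList G (v :: l₂)) (h : ∀ x ∈ l₁, ∀ y ∈ l₂, ¬ G.Adj x y) :
    IsNoncrossingList G (v :: (l₁ ++ l₂)) := by
  intro a b c d hs hac hbd
  rcases sublist_cons_iff.1 hs with hs | ⟨r, hr, hs⟩
  · exact IsNoncrossingList.append (fun _ _ _ _ hs => h₁ (hs.cons v))
      (fun _ _ _ _ hs => h₂ (hs.cons v)) h hs hac hbd
  · obtain ⟨rfl, rfl⟩ := cons.inj hr
    obtain ⟨r₁, r₂, hr, hr₁, hr₂⟩ := sublist_append_iff.1 hs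
    have hno : ∀ x ∈ r₁, ∀ y ∈ r₂, ¬ G.Adj x y :=
      fun x hx y hy => h x (hr₁.subset hx) y (hr₂.subset hy)
    rcases r₁ with _ | ⟨_, _ | ⟨_, _ | ⟨_, r₁⟩⟩⟩ <;>
      simp only [nil_append, cons_append, cons.injEq] at hr
    · subst hr
      exact h₂ (hr₂.cons_cons a) hac hbd
    · obtain ⟨rfl, rfl⟩ := hr
      exact hno _ (by simp) _ (by simp) hbd
    · obtain ⟨rfl, rfl, rfl⟩ := hr
      exact hno _ (by simp) _ (by simp) hbd
    · obtain ⟨rfl, rfl, rfl, hr⟩ := hr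
      obtain ⟨rfl, rfl⟩ := append_eq_nil_iff.1 hr.symm
      exact h₁ (hr₁.cons_cons a) hac hbd

/-- The vertices of a cycle of `G`, listed in order from some starting vertex. The lists `[]` and
`[x, y]` with `x` adjacent to `y` are allowed as degenerate cycles. -/
structure IsCycleList (G : SimpleGraph V) (l : List V) : Prop where
  nodup : l.Nodup
  chain : (l : Cycle V).Chain G.Adj

namespace IsCycleList

lemma rotate {l₁ l₂ : List V} (h : IsCycleList G (l₁ ++ l₂)) : IsCycleList G (l₂ ++ l₁) where
  nodup := nodup_append_comm.1 h.nodup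
  chain := by
    have := h.chain
    rwa [Cycle.coe_eq_coe.2 isRotated_append] at this

lemma isChain {l : List V} (h : IsCycleList G l) : l.IsChain G.Adj := by
  rcases l with _ | ⟨a, l⟩
  · exact isChain_nil
  · exact ((Cycle.chain_coe_cons ..).1 h.chain).left_of_append (l₁ := a :: l)

lemma replace_edge {p q : V} {P m : List V} (h : IsCycleList G (p :: q :: m)) (hP : P.Nodup)
    (hPl : ∀ x ∈ P, x ∉ p :: q :: m) (hPc : (p :: P ++ [q]).IsChain G.Adj) :
    IsCycleList G (p :: (P ++ q :: m)) where
  nodup := by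
    have := h.nodup
    simp only [nodup_cons, mem_cons, nodup_append, mem_append] at this hPl ⊢
    grind
  chain := by
    have := (Cycle.chain_coe_cons ..).1 h.chain
    rw [Cycle.chain_coe_cons, append_assoc, cons_append, ← cons_append, isChain_split]
    exact ⟨hPc, this.tail⟩

end IsCycleList

lemma Outerplanar.isNoncrossingList_of_isCycleList (hG : Outerplanar G) {l : List V}
    (hl : IsCycleList G l) : IsNoncrossingList G l := by
  intro a b c d hs hac hbd
  obtain ⟨r₁, r, rfl, h₁, hs⟩ := cons_sublist_iff.1 hs
  obtain ⟨r₂, r, rfl, h₂, hs⟩ := cons_sublist_iff.1 hs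
  obtain ⟨r₃, r₄, rfl, h₃, hs⟩ := cons_sublist_iff.1 hs
  have h₄ : d ∈ r₄ := singleton_sublist.1 hs
  have n₁ := ne_nil_of_mem h₁
  have n₂ := ne_nil_of_mem h₂
  have n₃ := ne_nil_of_mem h₃
  have n₄ := ne_nil_of_mem h₄
  -- The four arcs of the cycle are the branch sets of a `K₄`.
  have arcs₁₂ : ((r₁ ++ r₂) ++ (r₃ ++ r₄)).IsChain G.Adj := by
    simpa only [append_assoc] using hl.isChain
  have arcs₄₁ : ((r₄ ++ r₁) ++ (r₂ ++ r₃)).IsChain G.Adj := by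
    have : IsCycleList G ((r₁ ++ (r₂ ++ r₃)) ++ r₄) := by simpa only [append_assoc] using hl
    simpa only [append_assoc] using this.rotate.isChain
  have t₁₂ := touches_of_isChain_append arcs₁₂.left_of_append n₁ n₂
  have t₂₃ := touches_of_isChain_append arcs₄₁.right_of_append n₂ n₃
  have t₃₄ := touches_of_isChain_append arcs₁₂.right_of_append n₃ n₄
  have t₄₁ := touches_of_isChain_append arcs₄₁.left_of_append n₄ n₁
  refine hG.not_four_branch_sets
    (μ := ![{x | x ∈ r₁}, {x | x ∈ r₂}, {x | x ∈ r₃}, {x | x ∈ r₄}]) ?_ ?_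
  · simp [Fin.forall_fin_succ,
      connected_induce_of_isChain arcs₁₂.left_of_append.left_of_append n₁,
      connected_induce_of_isChain arcs₁₂.left_of_append.right_of_append n₂,
      connected_induce_of_isChain arcs₁₂.right_of_append.left_of_append n₃,
      connected_induce_of_isChain arcs₁₂.right_of_append.right_of_append n₄]
  · have disjoint := hl.nodup
    simp only [nodup_append', disjoint_append_right] at disjoint
    obtain ⟨-, ⟨-, ⟨-, -, d₃₄⟩, d₂₃, d₂₄⟩, d₁₂, d₁₃, d₁₄⟩ := disjoint
    have hset {l₁ l₂ : List V} (h : l₁.Disjoint l₂) : _root_.Disjoint {x | x ∈ l₁} {x | x ∈ l₂} :=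
      Set.disjoint_left.2 fun _ => @h _
    have t₁₃ : Touches G {x | x ∈ r₁} {x | x ∈ r₃} := ⟨a, h₁, c, h₃, hac⟩
    have t₂₄ : Touches G {x | x ∈ r₂} {x | x ∈ r₄} := ⟨b, h₂, d, h₄, hbd⟩
    simp [Fin.forall_fin_succ, hset, t₁₂, t₂₃, t₃₄, t₄₁.symm, t₁₃, t₂₄, d₁₂, d₁₃, d₁₄, d₂₃, d₂₄,
      d₃₄]

/-- No single vertex of `S` separates a set `D` from the rest of `S`. -/
def HasNoCutVertex (G : SimpleGraph V) (S : Set V) : Prop :=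
  ∀ ⦃v : V⦄, v ∈ S → ∀ ⦃D : Set V⦄, D ⊆ S → D.Nonempty → v ∉ D → (S \ insert v D).Nonempty →
    Touches G D (S \ insert v D)

lemma HasNoCutVertex.exists_isCycleList {S : Set V} (hS : HasNoCutVertex G S)
    (hcard : 2 < S.ncard) : ∃ l, IsCycleList G l ∧ l ≠ [] ∧ {x | x ∈ l} ⊆ S := by
  obtain ⟨u, hu, v, hv, w, hw, huv, huw, hvw⟩ :=
    (Set.two_lt_ncard (Set.finite_of_ncard_pos (by omega))).1 hcard
  obtain ⟨x, hx, y, hy, hxy⟩ := hS hv (Set.singleton_subset_iff.2 hu) (Set.singleton_nonempty u)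
    (by simpa using huv.symm) ⟨w, hw, by simp [huw.symm, hvw.symm]⟩
  obtain rfl : x = u := hx
  refine ⟨[x, y], ⟨by simpa using hxy.ne, ?_⟩, by simp, ?_⟩
  · simpa [Cycle.chain_coe_cons, hxy.symm] using hxy
  · rintro z hz
    rcases (by simpa using hz : z = x ∨ z = y) with rfl | rfl
    exacts [hu, hy.1]

lemma IsCycleList.exists_ne {l : List V} (hl : IsCycleList G l) {v : V} (hv : v ∈ l) :
    ∃ u ∈ l, u ≠ v := by
  by_contra! hall
  obtain rfl : l = [v] := perm_singleton.1 <|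
    (perm_ext_iff_of_nodup hl.nodup (nodup_singleton v)).2 fun u => by
      simpa using ⟨hall u, fun h => h ▸ hv⟩
  simpa [Cycle.chain_coe_cons] using hl.chain

lemma IsCycleList.exists_attached [Finite V] {S : Set V} (hS : HasNoCutVertex G S) {l : List V}
    (hl : IsCycleList G l) (hne : l ≠ []) (hlS : {x | x ∈ l} ⊆ S) {x : V} (hx : x ∈ S)
    (hxl : x ∉ l) : ∃ D ⊆ S, (G.induce D).Connected ∧ (∀ d ∈ D, d ∉ l) ∧
      ∃ p ∈ l, ∃ q ∈ l, p ≠ q ∧ Touches G D {p} ∧ Touches G D {q} := by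
  obtain ⟨D, -, ⟨hDS, hDl, hDc⟩, hmax⟩ := Finite.exists_le_maximal
    (p := fun D : Set V => D ⊆ S ∧ (∀ d ∈ D, d ∉ l) ∧ (G.induce D).Connected)
    (⟨Set.singleton_subset_iff.2 hx, by simpa using hxl, connected_induce_singleton x⟩)
  have hDne : D.Nonempty := Set.nonempty_coe_sort.1 hDc.nonempty
  have mem_of_adj {d y : V} (hd : d ∈ D) (hy : y ∈ S) (hyD : y ∉ D) (hdy : G.Adj d y) : y ∈ l := by
    by_contra hyl
    have hins : insert y D = D ∪ {y} := by rw [Set.union_singleton]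
    refine hyD (hmax ⟨Set.insert_subset hy hDS, ?_, ?_⟩ (Set.subset_insert y D)
      (Set.mem_insert y D))
    · simpa [hyl] using hDl
    · rw [hins]
      exact Touches.connected_union hDc (connected_induce_singleton y) ⟨d, hd, y, rfl, hdy⟩
  have attached {v : V} (hv : v ∈ l) : ∃ p ∈ l, v ≠ p ∧ Touches G D {p} := by
    obtain ⟨u, hu, huv⟩ := hl.exists_ne hv
    have hv' : v ∉ D := fun h => hDl v h hv
    have hu' : u ∉ D := fun h => hDl u h hu
    obtain ⟨d, hd, p, hp, hdp⟩ := hS (hlS hv) hDS hDne hv' ⟨u, hlS hu, by simp [huv, hu']⟩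
    simp only [Set.mem_sdiff, Set.mem_insert_iff, not_or] at hp
    exact ⟨p, mem_of_adj hd hp.1 hp.2.2 hdp, Ne.symm hp.2.1, d, hd, p, rfl, hdp⟩
  obtain ⟨u, hu⟩ := exists_mem_of_ne_nil l hne
  obtain ⟨p, hp, -, htp⟩ := attached hu
  obtain ⟨q, hq, hpq, htq⟩ := attached hp
  exact ⟨D, hDS, hDc, hDl, p, hp, q, hq, hpq, htp, htq⟩

lemma IsCycleList.exists_replace_edge {D : Set V} {p q : V} {m : List V}
    (hl : IsCycleList G (p :: q :: m)) (hD : (G.induce D).Connected)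
    (hDl : ∀ d ∈ D, d ∉ p :: q :: m) (hp : Touches G D {p}) (hq : Touches G D {q}) :
    ∃ P ≠ [], (∀ x ∈ P, x ∈ D) ∧ IsCycleList G (p :: (P ++ q :: m)) := by
  obtain ⟨P, hP, hPn, hPD, hPc⟩ := exists_isChain_through hD hp.symm hq
  exact ⟨P, hP, hPD, hl.replace_edge hPn (fun x hx => hDl x (hPD x hx)) hPc⟩

lemma IsCycleList.arc {p q : V} {m₁ m₂ : List V} (hl : IsCycleList G (p :: (m₁ ++ q :: m₂)))
    (hm₁ : m₁ ≠ []) : (G.induce {x | x ∈ m₁}).Connected ∧ Touches G {p} {x | x ∈ m₁} ∧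
      Touches G {q} {x | x ∈ m₁} := by
  have arc : (([p] ++ m₁) ++ ([q] ++ m₂)).IsChain G.Adj := by simpa using hl.isChain
  have arc' : ((m₁ ++ [q]) ++ m₂).IsChain G.Adj := by simpa using hl.isChain.tail
  have hp : {x | x ∈ [p]} = {p} := by ext; simp
  have hq : {x | x ∈ [q]} = {q} := by ext; simp
  have tp := touches_of_isChain_append arc.left_of_append (by simp) hm₁
  have tq := touches_of_isChain_append arc'.left_of_append hm₁ (by simp)
  rw [hp] at tp
  rw [hq] at tq
  exact ⟨connected_induce_of_isChain arc.left_of_append.right_of_append hm₁, tp, tq.symm⟩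

lemma Outerplanar.eq_nil_of_attached (hG : Outerplanar G) {D : Set V} {p q : V} {m₁ m₂ : List V}
    (hl : IsCycleList G (p :: (m₁ ++ q :: m₂))) (hD : (G.induce D).Connected)
    (hDl : ∀ d ∈ D, d ∉ p :: (m₁ ++ q :: m₂)) (hDp : Touches G D {p}) (hDq : Touches G D {q}) :
    m₁ = [] ∨ m₂ = [] := by
  by_contra! hm
  -- `p` and `q` against `D` and the two arcs between them form a `K₂,₃`.
  obtain ⟨hm₁, hpm₁, hqm₁⟩ := hl.arc hm.1
  obtain ⟨hm₂, hqm₂, hpm₂⟩ := (hl.rotate (l₁ := p :: m₁)).arc hm.2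
  have hn := hl.nodup
  simp only [nodup_cons, mem_append, mem_cons, nodup_append', not_or, disjoint_cons_right] at hn hDl
  obtain ⟨⟨hp₁, hpq, hp₂⟩, -, ⟨hq₂, -⟩, hq₁, h₁₂⟩ := hn
  have hpD : p ∉ D := fun h => (hDl p h).1 rfl
  have hqD : q ∉ D := fun h => (hDl q h).2.2.1 rfl
  have hD₁ : _root_.Disjoint D {x | x ∈ m₁} := Set.disjoint_left.2 fun x hx => (hDl x hx).2.1
  have hD₂ : _root_.Disjoint D {x | x ∈ m₂} := Set.disjoint_left.2 fun x hx => (hDl x hx).2.2.2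
  have h₁₂' : _root_.Disjoint {x | x ∈ m₁} {x | x ∈ m₂} := Set.disjoint_left.2 fun x hx => @h₁₂ x hx
  refine hG.not_two_three_branch_sets (A := ![{p}, {q}]) (B := ![D, {x | x ∈ m₁}, {x | x ∈ m₂}])
    ?_ ?_ (by simpa using hpq) ?_ ?_
  · simp [Fin.forall_fin_succ]
  · simp [Fin.forall_fin_succ, hD, hm₁, hm₂]
  · simp [Fin.forall_fin_succ, hD₁, hD₂, h₁₂']
  · simp [Fin.forall_fin_succ, hDp.symm, hDq.symm, hpm₁, hqm₁, hpm₂, hqm₂, hp₁, hp₂, hq₁, hq₂, hpD,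
      hqD]

lemma Outerplanar.exists_isCycleList_perm (hG : Outerplanar G) {D : Set V} {l : List V}
    (hl : IsCycleList G l) (hD : (G.induce D).Connected) (hDl : ∀ d ∈ D, d ∉ l) {p q : V}
    (hp : p ∈ l) (hq : q ∈ l) (hpq : p ≠ q) (hDp : Touches G D {p}) (hDq : Touches G D {q}) :
    ∃ P ≠ [], (∀ x ∈ P, x ∈ D) ∧ ∃ l', IsCycleList G l' ∧ l' ~ P ++ l := by
  obtain ⟨s, t, rfl⟩ := append_of_mem hp
  obtain ⟨m₁, m₂, hm⟩ := append_of_mem (a := q) (l := t ++ s)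
    (by simp only [mem_append, mem_cons] at hq ⊢; tauto)
  have hperm : s ++ p :: t ~ p :: (m₁ ++ q :: m₂) := hm ▸ perm_append_comm
  have hl' : IsCycleList G (p :: (m₁ ++ q :: m₂)) := hm ▸ hl.rotate
  simp only [hperm.mem_iff] at hDl
  rcases hG.eq_nil_of_attached hl' hD hDl hDp hDq with rfl | rfl
  · obtain ⟨P, hP, hPD, hP'⟩ := hl'.exists_replace_edge hD hDl hDp hDq
    exact ⟨P, hP, hPD, _, hP', perm_middle.symm.trans (hperm.symm.append_left P)⟩
  · have hl'' : IsCycleList G (q :: p :: m₁) := IsCycleList.rotate (l₁ := p :: m₁) (l₂ := [q]) hl'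
    have hperm' : s ++ p :: t ~ q :: p :: m₁ :=
      hperm.trans (perm_append_comm (l₁ := p :: m₁) (l₂ := [q]))
    obtain ⟨P, hP, hPD, hP'⟩ := hl''.exists_replace_edge hD
      (fun d hd => by rw [← hperm'.mem_iff, hperm.mem_iff]; exact hDl d hd) hDq hDp
    exact ⟨P, hP, hPD, _, hP', perm_middle.symm.trans (hperm'.symm.append_left P)⟩

theorem Outerplanar.exists_hamiltonian_isCycleList [Finite V] (hG : Outerplanar G) {S : Set V}
    (hS : HasNoCutVertex G S) (hcard : 2 < S.ncard) : ∃ l, IsCycleList G l ∧ {x | x ∈ l} = S := by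
  obtain ⟨l₀, hl₀, hne₀, hl₀S⟩ := hS.exists_isCycleList hcard
  obtain ⟨_, -, ⟨l, hl, hne, rfl, hlS⟩, hmax⟩ := Finite.exists_le_maximal
    (p := fun T : Set V => ∃ l, IsCycleList G l ∧ l ≠ [] ∧ {x | x ∈ l} = T ∧ T ⊆ S)
    ⟨l₀, hl₀, hne₀, rfl, hl₀S⟩
  refine ⟨l, hl, hlS.antisymm fun x hx => ?_⟩
  by_contra hxl
  obtain ⟨D, hDS, hD, hDl, p, hp, q, hq, hpq, hDp, hDq⟩ :=
    hl.exists_attached hS hne hlS hx hxl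
  obtain ⟨P, hP, hPD, l', hl', hperm⟩ := hG.exists_isCycleList_perm hl hD hDl hp hq hpq hDp hDq
  obtain ⟨y, hy⟩ := exists_mem_of_ne_nil P hP
  have hmem (z : V) : z ∈ l' ↔ z ∈ P ∨ z ∈ l := hperm.mem_iff.trans mem_append
  refine hDl y (hPD y hy) (hmax ⟨l', hl', ne_nil_of_mem ((hmem y).2 (.inl hy)), rfl, ?_⟩
    (fun z hz => (hmem z).2 (.inr hz)) ((hmem y).2 (.inl hy)))
  rintro z hz
  exact ((hmem z).1 hz).elim (fun h => hDS (hPD z h)) (fun h => hlS h)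

lemma exists_isNoncrossingList_of_not_touches {S D : Set V} {v : V} (hDS : D ⊆ S)
    (hsep : ¬ Touches G D (S \ insert v D))
    (h₁ : ∃ l, (v :: l).Nodup ∧ {x | x ∈ v :: l} = insert v D ∧ IsNoncrossingList G (v :: l))
    (h₂ : ∃ l, (v :: l).Nodup ∧ {x | x ∈ v :: l} = S \ D ∧ IsNoncrossingList G (v :: l)) :
    ∃ l, (v :: l).Nodup ∧ {x | x ∈ v :: l} = S ∧ IsNoncrossingList G (v :: l) := by
  obtain ⟨l₁, hn₁, hl₁, hl₁'⟩ := h₁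
  obtain ⟨l₂, hn₂, hl₂, hl₂'⟩ := h₂
  have mem₁ (x : V) : x = v ∨ x ∈ l₁ ↔ x = v ∨ x ∈ D := by simpa using Set.ext_iff.1 hl₁ x
  have mem₂ (x : V) : x = v ∨ x ∈ l₂ ↔ x ∈ S ∧ x ∉ D := by simpa using Set.ext_iff.1 hl₂ x
  rw [nodup_cons] at hn₁ hn₂
  have hD (x : V) (hx : x ∈ l₁) : x ∈ D := by
    have := mem₁ x
    grind
  have hR (x : V) (hx : x ∈ l₂) : x ∈ S \ insert v D := by
    have := mem₂ x
    grind
  refine ⟨l₁ ++ l₂, ?_, ?_, hl₁'.glue hl₂' fun x hx y hy h => hsep ⟨x, hD x hx, y, hR y hy, h⟩⟩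
  · simp only [nodup_cons, mem_append, nodup_append]
    grind
  · ext x
    have := mem₁ x
    have := mem₂ x
    have := @hDS x
    simp only [Set.mem_ofPred_eq, mem_cons, mem_append]
    grind

lemma IsNoncrossingList.exists_cons {S : Set V} {v : V} (hv : v ∈ S)
    (h : ∃ l, l.Nodup ∧ {x | x ∈ l} = S ∧ IsNoncrossingList G l) :
    ∃ l, (v :: l).Nodup ∧ {x | x ∈ v :: l} = S ∧ IsNoncrossingList G (v :: l) := by
  obtain ⟨l, hn, rfl, hl⟩ := h
  obtain ⟨s, t, rfl⟩ := append_of_mem hv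
  exact ⟨t ++ s, nodup_append_comm.1 hn, Set.ext fun x =>
    (perm_append_comm (l₁ := v :: t) (l₂ := s)).mem_iff, hl.rotate⟩

theorem Outerplanar.exists_isNoncrossingList [Finite V] (hG : Outerplanar G) (S : Set V) :
    ∃ l, l.Nodup ∧ {x | x ∈ l} = S ∧ IsNoncrossingList G l := by
  induction S using WellFoundedLT.induction with
  | _ S ih =>
  by_cases hcard : 2 < S.ncard
  · by_cases hS : HasNoCutVertex G S
    · obtain ⟨l, hl, hlS⟩ := hG.exists_hamiltonian_isCycleList hS hcard
      exact ⟨l, hl.nodup, hlS, hG.isNoncrossingList_of_isCycleList hl⟩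
    · unfold HasNoCutVertex at hS
      push Not at hS
      obtain ⟨v, hv, D, hDS, ⟨d, hd⟩, hvD, ⟨e, heS, he⟩, hsep⟩ := hS
      have h₁ := ih (insert v D) (Set.ssubset_iff_exists.2 ⟨Set.insert_subset hv hDS, e, heS, he⟩)
      have h₂ := ih (S \ D)
        (Set.ssubset_iff_exists.2 ⟨Set.sdiff_subset, d, hDS hd, fun h => h.2 hd⟩)
      obtain ⟨l, hl⟩ := exists_isNoncrossingList_of_not_touches hDS hsep
        (IsNoncrossingList.exists_cons (Set.mem_insert v D) h₁)
        (IsNoncrossingList.exists_cons ⟨hv, hvD⟩ h₂)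
      exact ⟨_, hl⟩
  · have hfin := S.toFinite
    refine ⟨hfin.toFinset.toList, Finset.nodup_toList _, by ext; simp, .of_length_le ?_⟩
    rw [Finset.length_toList, ← Set.ncard_eq_toFinset_card S hfin]
    omega

lemma IsNoncrossing.of_not_crossing {p : V → ℕ} (hp : Function.Injective p)
    (h : ∀ ⦃a b c d : V⦄, G.Adj a c → G.Adj b d → ¬ (p a < p b ∧ p b < p c ∧ p c < p d)) :
    IsNoncrossing G p where
  injective := hp
  sameSide := by
    intro a b c d hac hbd hab had hcb hcd
    have := hp.ne hab
    have := hp.ne had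
    have := hp.ne hcb
    have := hp.ne hcd
    have := h hac hbd
    have := h hac hbd.symm
    have := h hac.symm hbd
    have := h hac.symm hbd.symm
    have := h hbd hac
    have := h hbd hac.symm
    have := h hbd.symm hac
    have := h hbd.symm hac.symm
    unfold SameSide
    omega

lemma IsNoncrossingList.isNoncrossing_idxOf [DecidableEq V] {l : List V}
    (hl : IsNoncrossingList G l) (hmem : ∀ x, x ∈ l) : IsNoncrossing G (l.idxOf ·) := by
  refine .of_not_crossing (fun x y h => (idxOf_inj (hmem x)).1 h) ?_
  rintro a b c d hac hbd ⟨hab, hbc, hcd⟩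
  have hlt (x : V) : l.idxOf x < l.length := idxOf_lt_length_iff.2 (hmem x)
  refine hl (sublist_iff_exists_fin_orderEmbedding_get_eq.2
    ⟨OrderEmbedding.ofStrictMono ![⟨_, hlt a⟩, ⟨_, hlt b⟩, ⟨_, hlt c⟩, ⟨_, hlt d⟩] ?_, ?_⟩) hac hbd
  · simp [Fin.strictMono_iff_lt_succ, Fin.forall_fin_succ, hab, hbc, hcd]
  · simp [Fin.forall_fin_succ]

theorem Outerplanar.exists_isNoncrossing [Finite V] (hG : Outerplanar G) (x : V) :
    ∃ p, IsNoncrossing G p ∧ ∀ y, p x ≤ p y := by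
  obtain ⟨l, -, hl, hl'⟩ := IsNoncrossingList.exists_cons (Set.mem_univ x)
    (hG.exists_isNoncrossingList Set.univ)
  refine ⟨_, hl'.isNoncrossing_idxOf fun y => ?_, fun y => by simp⟩
  exact Set.eq_univ_iff_forall.1 hl y

end CyclicLists

section MaximalOuterplanar

variable {V : Type*} {G : SimpleGraph V} {p : V → ℕ}

lemma IsNoncrossing.sup_edge (hp : IsNoncrossing G p) {a b : V}
    (hab : ∀ ⦃x y : V⦄, G.Adj x y → x ≠ a → x ≠ b → y ≠ a → y ≠ b → SameSide p a b x y) :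
    IsNoncrossing (G ⊔ edge a b) p := by
  refine .of_not_crossing hp.injective ?_
  rintro x y z w hxz hyw ⟨hxy, hyz, hzw⟩
  have ne_of_lt {s t : V} (h : p s < p t) : s ≠ t := ne_of_apply_ne p h.ne
  have hxy' := ne_of_lt hxy
  have hyz' := ne_of_lt hyz
  have hzw' := ne_of_lt hzw
  have hxw' := ne_of_lt (hxy.trans (hyz.trans hzw))
  simp only [sup_adj, edge_adj] at hxz hyw
  unfold SameSide at hab
  rcases hxz with hxz | ⟨⟨rfl, rfl⟩ | ⟨rfl, rfl⟩, -⟩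
  · rcases hyw with hyw | ⟨⟨rfl, rfl⟩ | ⟨rfl, rfl⟩, -⟩
    · have := hp.sameSide hxz hyw hxy' hxw' hyz'.symm hzw'
      unfold SameSide at this
      omega
    · have := hab hxz hxy' hxw' hyz'.symm hzw'
      omega
    · have := hab hxz hxw' hxy' hzw' hyz'.symm
      omega
  · have hyw : G.Adj y w := by grind
    have := hab hyw hxy'.symm hyz' hxw'.symm hzw'.symm
    omega
  · have hyw : G.Adj y w := by grind
    have := hab hyw hyz' hxy'.symm hzw'.symm hxw'.symm
    omega

lemma IsNoncrossing.sameSide_of_last_neighbor (hp : IsNoncrossing G p) {x w z : V}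
    (hx : ∀ v, p x ≤ p v) (hz : ∀ v, p v ≤ p z) (hxw : G.Adj x w)
    (hw : ∀ v, G.Adj x v → v ≠ z → p v ≤ p w) ⦃a b : V⦄ (hab : G.Adj a b) (haw : a ≠ w)
    (haz : a ≠ z) (hbw : b ≠ w) (hbz : b ≠ z) : SameSide p w z a b := by
  have lt_of_ne {s t : V} (hne : s ≠ t) (h : p s ≤ p t) : p s < p t :=
    h.lt_of_ne (hp.injective.ne hne)
  have hlt := lt_of_ne hxw.ne (hx w)
  have hbefore {c d : V} (hcd : G.Adj c d) (hcw : c ≠ w) (hdw : d ≠ w) (hdz : d ≠ z)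
      (hc : p c < p w) : p d < p w := by
    rcases eq_or_ne c x with rfl | hcx
    · exact lt_of_ne hdw (hw d hcd hdz)
    · rcases eq_or_ne d x with rfl | hdx
      · exact hlt
      · have := lt_of_ne hcx.symm (hx c)
        have := lt_of_ne hdx.symm (hx d)
        have := hp.sameSide hxw hcd hcx.symm hdx.symm hcw.symm hdw.symm
        unfold SameSide at this
        omega
  have := lt_of_ne haz (hz a)
  have := lt_of_ne hbz (hz b)
  have hiff : p a < p w ↔ p b < p w := ⟨hbefore hab haw hbw hbz, hbefore hab.symm hbw haw haz⟩
  have := hp.injective.ne haw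
  have := hp.injective.ne hbw
  unfold SameSide
  omega

namespace MaximalOuterplanar

lemma adj_of_forall_sameSide (hG : MaximalOuterplanar G) (hp : IsNoncrossing G p) {a b : V}
    (hne : a ≠ b)
    (hab : ∀ ⦃x y : V⦄, G.Adj x y → x ≠ a → x ≠ b → y ≠ a → y ≠ b → SameSide p a b x y) :
    G.Adj a b := by
  by_contra h
  exact hG.2 _ (lt_sup_edge G a b hne h) (hp.sup_edge hab).outerplanar

/-- With `x` placed first and `z` last, `x` is adjacent to `z` and to its successor, and the last
neighbour `w` of `x` before `z` is adjacent to `z`. -/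
theorem exists_mem_triangle [Finite V] (hG : MaximalOuterplanar G) (hcard : 3 ≤ ENat.card V)
    (x : V) : ∃ s, G.IsNClique 3 s ∧ x ∈ s := by
  obtain ⟨p, hp, hpx⟩ := hG.1.exists_isNoncrossing x
  have lt_of_ne {s t : V} (hne : s ≠ t) (h : p s ≤ p t) : p s < p t :=
    h.lt_of_ne (hp.injective.ne hne)
  obtain ⟨z, -, hz⟩ := Set.exists_max_image Set.univ p Set.finite_univ ⟨x, trivial⟩
  obtain ⟨v, hvx, hvz⟩ := ENat.exists_ne_ne_of_three_le hcard x z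
  have hxz : x ≠ z := by
    rintro rfl
    exact (hz v trivial).not_gt (lt_of_ne hvx.symm (hpx v))
  have hadjz : G.Adj x z := hG.adj_of_forall_sameSide hp hxz fun a b _ hax haz hbx hbz => by
    have := lt_of_ne hax.symm (hpx a)
    have := lt_of_ne haz (hz a trivial)
    have := lt_of_ne hbx.symm (hpx b)
    have := lt_of_ne hbz (hz b trivial)
    unfold SameSide
    omega
  obtain ⟨y, ⟨hyx, hyz⟩, hymin⟩ := Set.exists_min_image {y | y ≠ x ∧ y ≠ z} p (Set.toFinite _)
    ⟨v, hvx, hvz⟩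
  have hadjy : G.Adj x y := hG.adj_of_forall_sameSide hp hyx.symm fun a b _ hax _ hbx _ => by
    have := lt_of_ne hyx.symm (hpx y)
    have not_between {c : V} (hcx : c ≠ x) : p y ≤ p c :=
      (eq_or_ne c z).elim (fun h => h ▸ hz y trivial) fun h => hymin c ⟨hcx, h⟩
    have := not_between hax
    have := not_between hbx
    unfold SameSide
    omega
  obtain ⟨w, ⟨hxw, hwz⟩, hwmax⟩ := Set.exists_max_image {w | G.Adj x w ∧ w ≠ z} p (Set.toFinite _)
    ⟨y, hadjy, hyz⟩
  have hadjw : G.Adj w z := hG.adj_of_forall_sameSide hp hwz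
    (hp.sameSide_of_last_neighbor hpx (hz · trivial) hxw fun v hxv hvz => hwmax v ⟨hxv, hvz⟩)
  exact ⟨{x, w, z}, is3Clique_triple_iff.2 ⟨hxw, hadjz, hadjw⟩, by simp⟩

end MaximalOuterplanar

end MaximalOuterplanar

section TwoTrees

variable {V : Type*} {G : SimpleGraph V}

lemma IsMinorMap.update_insert {ι : Type*} [DecidableEq ι] {H : SimpleGraph ι} {μ : ι → Set V}
    (hμ : IsMinorMap G H μ) {i : ι} {x z : V} (hx : x ∈ μ i) (hxz : G.Adj x z)
    (hz : ∀ j, z ∉ μ j) : IsMinorMap G H (Function.update μ i (insert z (μ i))) := by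
  obtain ⟨hc, hd, ht⟩ := hμ
  have hsub (j : ι) : μ j ⊆ Function.update μ i (insert z (μ i)) j := by
    rcases eq_or_ne j i with rfl | hji
    · simp
    · rw [Function.update_of_ne hji]
  refine ⟨fun j => ?_, fun j k hjk => ?_, fun j k hjk => ?_⟩
  · rcases eq_or_ne j i with rfl | hji
    · rw [Function.update_self, ← Set.union_singleton]
      exact Touches.connected_union (hc j) (connected_induce_singleton z) ⟨x, hx, z, rfl, hxz⟩
    · rw [Function.update_of_ne hji]
      exact hc j
  · rcases eq_or_ne j i with rfl | hji
    · rw [Function.update_self, Function.update_of_ne hjk.symm]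
      exact Set.disjoint_insert_left.2 ⟨hz k, hd hjk⟩
    · rw [Function.update_of_ne hji]
      rcases eq_or_ne k i with rfl | hki
      · rw [Function.update_self]
        exact Set.disjoint_insert_right.2 ⟨hz j, hd hjk⟩
      · rw [Function.update_of_ne hki]
        exact hd hjk
  · obtain ⟨a, ha, b, hb, hab⟩ := ht hjk
    exact ⟨a, hsub j ha, b, hsub k hb, hab⟩

/-- `H` is a minor of `G` with branch sets inside `S`, the one of `i` containing the root `v i`. -/
def HasRootedMinor {ι : Type*} (G : SimpleGraph V) (H : SimpleGraph ι) (S : Set V) (v : ι → V) :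
    Prop :=
  ∃ μ, IsMinorMap G H μ ∧ ∀ i, v i ∈ μ i ∧ μ i ⊆ S

namespace HasRootedMinor

variable {ι : Type*} {H : SimpleGraph ι} {S T : Set V} {v : ι → V}

lemma mono (h : HasRootedMinor G H S v) (hST : S ⊆ T) : HasRootedMinor G H T v :=
  let ⟨μ, hμ, hv⟩ := h
  ⟨μ, hμ, fun i => ⟨(hv i).1, (hv i).2.trans hST⟩⟩

lemma absorb [DecidableEq ι] {i : ι} {x : V}
    (h : HasRootedMinor G H S (Function.update v i x)) (hi : v i ∉ S)
    (hx : G.Adj x (v i)) : HasRootedMinor G H (insert (v i) S) v := by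
  obtain ⟨μ, hμ, hv⟩ := h
  have hxμ : x ∈ μ i := by simpa using (hv i).1
  refine ⟨_, hμ.update_insert hxμ hx fun j hj => hi ((hv j).2 hj), fun j => ?_⟩
  rcases eq_or_ne j i with rfl | hji
  · rw [Function.update_self]
    exact ⟨Set.mem_insert _ _, Set.insert_subset_insert (hv j).2⟩
  · rw [Function.update_of_ne hji]
    exact ⟨by simpa [hji] using (hv j).1, (hv j).2.trans (Set.subset_insert _ _)⟩

lemma of_adj (hv : ∀ ⦃i j⦄, H.Adj i j → G.Adj (v i) (v j)) (hinj : Function.Injective v)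
    (hS : ∀ i, v i ∈ S) : HasRootedMinor G H S v :=
  ⟨fun i => {v i}, ⟨fun i => connected_induce_singleton _, fun i j hij => by
    simpa using hinj.ne hij, fun i j hij => ⟨v i, rfl, v j, rfl, hv hij⟩⟩,
    fun i => ⟨rfl, Set.singleton_subset_iff.2 (hS i)⟩⟩

end HasRootedMinor

/-- `S` is the vertex set of a (not necessarily induced) 2-tree in `G`: it arises from an edge by
repeatedly adding a vertex adjacent to both ends of an edge inside the set. -/
inductive SpannedByTwoTree (G : SimpleGraph V) : Set V → Prop
  | edge {x y : V} (hxy : G.Adj x y) : SpannedByTwoTree G {x, y}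
  | glue {S : Set V} {x y z : V} (hS : SpannedByTwoTree G S) (hx : x ∈ S) (hy : y ∈ S)
      (hxy : G.Adj x y) (hxz : G.Adj x z) (hyz : G.Adj y z) : SpannedByTwoTree G (insert z S)

namespace SpannedByTwoTree

lemma image {U : Type*} {K : SimpleGraph U} {S : Set V} (hS : SpannedByTwoTree G S) {φ : V → U}
    (hφ : ∀ x ∈ S, ∀ y ∈ S, G.Adj x y → K.Adj (φ x) (φ y)) : SpannedByTwoTree K (φ '' S) := by
  induction hS with
  | edge hxy =>
    rw [Set.image_pair]
    exact .edge (hφ _ (by simp) _ (by simp) hxy)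
  | @glue S x y z _ hx hy hxy hxz hyz ih =>
    have hx' := Set.mem_insert_of_mem z hx
    have hy' := Set.mem_insert_of_mem z hy
    have hz := Set.mem_insert z S
    rw [Set.image_insert_eq]
    exact .glue (ih fun a ha b hb => hφ a (.inr ha) b (.inr hb)) (Set.mem_image_of_mem φ hx)
      (Set.mem_image_of_mem φ hy) (hφ _ hx' _ hy' hxy) (hφ _ hx' _ hz hxz) (hφ _ hy' _ hz hyz)

/-- When the last vertex `z` is a root, it is absorbed by the branch set of an end of its gluing
edge, unless both of these ends are roots as well. -/
lemma hasRootedMinor {S : Set V} (hS : SpannedByTwoTree G S) {v : Fin 3 → V}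
    (hv : Function.Injective v) (hvS : ∀ i, v i ∈ S) :
    HasRootedMinor G (completeGraph (Fin 3)) S v := by
  induction hS generalizing v with
  | @edge x y _ =>
    have h₀₁ := hv.ne (show (0 : Fin 3) ≠ 1 by simp)
    have h₀₂ := hv.ne (show (0 : Fin 3) ≠ 2 by simp)
    have h₁₂ := hv.ne (show (1 : Fin 3) ≠ 2 by simp)
    have h₀ := hvS 0
    have h₁ := hvS 1
    have h₂ := hvS 2
    grind
  | @glue S x y z _ hx hy hxy hxz hyz ih =>
    by_cases hvS' : ∀ i, v i ∈ S
    · exact (ih hv hvS').mono (Set.subset_insert z S)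
    push Not at hvS'
    obtain ⟨i, hi⟩ := hvS'
    obtain rfl : v i = z := (hvS i).resolve_right hi
    have absorb {e : V} (he : e ∈ S) (hez : G.Adj e (v i)) (hev : ∀ j, v j ≠ e) :
        HasRootedMinor G (completeGraph (Fin 3)) (insert (v i) S) v := by
      refine .absorb (ih (v := Function.update v i e) (fun j k h => ?_) fun j => ?_) hi hez
      · have := @hv j k
        grind
      · have := hvS j
        have := @hv j i
        grind
    by_cases hxv : ∃ j, v j = x
    · by_cases hyv : ∃ j, v j = y
      · obtain ⟨j, rfl⟩ := hxv
        obtain ⟨k, rfl⟩ := hyv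
        refine .of_adj (fun l m hlm => ?_) hv hvS
        have hlm : l ≠ m := hlm
        have hjk := ne_of_apply_ne v hxy.ne
        have hji := ne_of_apply_ne v hxz.ne
        have hki := ne_of_apply_ne v hyz.ne
        have hl : l = j ∨ l = k ∨ l = i := by omega
        have hm : m = j ∨ m = k ∨ m = i := by omega
        grind [G.adj_comm]
      · exact absorb hy hyz (not_exists.1 hyv)
    · exact absorb hx hxz (not_exists.1 hxv)

end SpannedByTwoTree

namespace Outerplanar

lemma not_forall_adj_of_hasRootedMinor (hG : Outerplanar G) {S : Set V} {v : Fin 3 → V} {z : V}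
    (h : HasRootedMinor G (completeGraph (Fin 3)) S v) (hz : z ∉ S) : ¬ ∀ i, G.Adj z (v i) := by
  rintro hzv
  obtain ⟨μ, ⟨hc, hd, ht⟩, hμ⟩ := h
  have hzμ (i : Fin 3) : z ∉ μ i := fun h => hz ((hμ i).2 h)
  have hzt (i : Fin 3) : Touches G {z} (μ i) := ⟨z, rfl, v i, (hμ i).1, hzv i⟩
  refine hG.not_four_branch_sets (μ := Fin.cons {z} μ)
    (Fin.cases (connected_induce_singleton z) hc) fun i j hij => ?_
  cases j using Fin.cases with
  | zero => exact absurd hij (Fin.not_lt_zero i)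
  | succ j =>
    cases i using Fin.cases with
    | zero => exact ⟨Set.disjoint_singleton_left.2 (hzμ j), hzt j⟩
    | succ i =>
      have hne : i ≠ j := (Fin.succ_lt_succ_iff.1 hij).ne
      exact ⟨hd hne, ht hne⟩

theorem eq_or_eq_of_adj (hG : Outerplanar G) {S : Set V} (hS : SpannedByTwoTree G S) {x y w z : V}
    (hz : z ∉ S) (hx : x ∈ S) (hy : y ∈ S) (hw : w ∈ S) (hxy : x ≠ y) (hzx : G.Adj z x)
    (hzy : G.Adj z y) (hzw : G.Adj z w) : w = x ∨ w = y := by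
  by_contra! h
  have hinj : Function.Injective ![x, y, w] := by
    intro i j hij
    fin_cases i <;> fin_cases j <;> simp_all
  exact hG.not_forall_adj_of_hasRootedMinor
    (hS.hasRootedMinor hinj (by simp [Fin.forall_fin_succ, hx, hy, hw])) hz
    (by simp [Fin.forall_fin_succ, hzx, hzy, hzw])

end Outerplanar

end TwoTrees

section WeakDual

variable {V : Type*} [DecidableEq V] {G : SimpleGraph V}

lemma weakDual_adj {s t : {s : Finset V // G.IsNClique 3 s}} :
    (weakDual G).Adj s t ↔ (s.1 ∩ t.1).card = 2 := by
  simp only [weakDual, fromRel_adj, Finset.inter_comm t.1 s.1, or_self, and_iff_right_iff_imp]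
  rintro h rfl
  simp [s.2.card_eq] at h

lemma exists_eq_insert_of_inter_eq {s t : {s : Finset V // G.IsNClique 3 s}} {u v : V}
    (huv : u ≠ v) (hst : s.1 ∩ t.1 = {u, v}) : ∃ w ∉ s.1, t.1 = {u, v, w} := by
  have hcard : (t.1 \ s.1).card = 1 := by
    have := Finset.card_sdiff_add_card_inter t.1 s.1
    rw [Finset.inter_comm, hst, Finset.card_pair huv, t.2.card_eq] at this
    omega
  obtain ⟨w, hw⟩ := Finset.card_eq_one.1 hcard
  have hws : w ∈ t.1 \ s.1 := hw ▸ Finset.mem_singleton_self w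
  refine ⟨w, (Finset.mem_sdiff.1 hws).2, ?_⟩
  rw [← Finset.sdiff_union_inter t.1 s.1, hw, Finset.inter_comm, hst]
  ext
  simp only [Finset.mem_union, Finset.mem_insert, Finset.mem_singleton]
  tauto

namespace Outerplanar

lemma eq_of_inter_eq (hG : Outerplanar G) {s s' t : {s : Finset V // G.IsNClique 3 s}}
    (hs : (weakDual G).Adj t s) (h : t.1 ∩ s.1 = t.1 ∩ s'.1) : s = s' := by
  obtain ⟨u, v, huv, hts⟩ := Finset.card_eq_two.1 (weakDual_adj.1 hs)
  obtain ⟨w, hw, hsw⟩ := exists_eq_insert_of_inter_eq huv hts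
  obtain ⟨w', hw', hsw'⟩ := exists_eq_insert_of_inter_eq huv (h ▸ hts)
  obtain ⟨x, -, htx⟩ := exists_eq_insert_of_inter_eq huv (Finset.inter_comm t.1 s.1 ▸ hts)
  have hxt : x ∈ t.1 := by simp [htx]
  by_contra hne
  obtain ⟨-, hux, hvx⟩ := is3Clique_triple_iff.1 (htx ▸ t.2)
  obtain ⟨-, huw, hvw⟩ := is3Clique_triple_iff.1 (hsw ▸ s.2)
  obtain ⟨-, huw', hvw'⟩ := is3Clique_triple_iff.1 (hsw' ▸ s'.2)
  refine hG.not_three_common_neighbors huv (ne_of_mem_of_not_mem hxt hw)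
    (ne_of_mem_of_not_mem hxt hw') ?_ ⟨hux, hvx⟩ ⟨huw, hvw⟩ ⟨huw', hvw'⟩
  rintro rfl
  exact hne (Subtype.ext (hsw.trans hsw'.symm))

theorem exists_weakDual_adj (hG : Outerplanar G) {t : {s : Finset V // G.IsNClique 3 s}}
    (ht : ((weakDual G).neighborSet t).ncard = 3) {u v : V} (hu : u ∈ t.1) (hv : v ∈ t.1)
    (huv : u ≠ v) : ∃ s, (weakDual G).Adj t s ∧ t.1 ∩ s.1 = {u, v} := by
  have hcard : (Finset.powersetCard 2 t.1 : Set (Finset V)).ncard = 3 := by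
    simp only [Set.ncard_coe_finset, Finset.card_powersetCard, t.2.card_eq]
    rfl
  obtain ⟨s, hs, hst⟩ := Set.surj_on_of_inj_on_of_ncard_le (t := Finset.powersetCard 2 t.1)
    (fun s _ => t.1 ∩ s.1)
    (fun s hs => Finset.mem_powersetCard.2 ⟨Finset.inter_subset_left, weakDual_adj.1 hs⟩)
    (fun s s' hs _ h => hG.eq_of_inter_eq hs h) (hcard.trans ht.symm).le (Finset.finite_toSet _)
    {u, v} (by simp [Finset.insert_subset_iff, hu, hv, Finset.card_pair huv])
  exact ⟨s, hs, hst.symm⟩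

end Outerplanar

end WeakDual

section Centers

variable {U : Type*} {T : SimpleGraph U}

lemma exists_adj_dist_eq_add_one {r v : U} (hrv : T.Reachable r v) (hne : v ≠ r) :
    ∃ u, T.Adj u v ∧ T.dist r v = T.dist r u + 1 := by
  obtain ⟨q, hq⟩ := hrv.exists_walk_length_eq_dist
  have hnil : ¬ q.Nil := Walk.not_nil_of_ne hne.symm
  have hadj := q.adj_penultimate hnil
  refine ⟨_, hadj, le_antisymm ?_ ?_⟩
  · exact dist_eq_one_iff_adj.2 hadj ▸ q.dropLast.reachable.dist_triangle_left v
  · rw [← hq, ← Walk.length_dropLast_add_one hnil]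
    exact Nat.add_le_add_right (dist_le q.dropLast) 1

lemma exists_adj_mem_notMem_dist_eq_add_one {A : Set U} {r v : U} (hr : r ∈ A) (hv : v ∉ A)
    (hrv : T.Reachable r v) :
    ∃ s ∈ A, ∃ t ∉ A, T.Adj s t ∧ T.dist r t = T.dist r s + 1 := by
  induction hn : T.dist r v generalizing v with
  | zero => exact absurd (hrv.dist_eq_zero_iff.1 hn ▸ hr) hv
  | succ n ih =>
    obtain ⟨u, huv, hd⟩ := exists_adj_dist_eq_add_one hrv fun h => hv (h ▸ hr)
    by_cases hu : u ∈ A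
    · exact ⟨u, hu, v, hv, huv, hd⟩
    · exact ih hu (hrv.trans huv.symm.reachable) (by omega)

lemma eq_of_adj_of_dist_eq_add_one (hT : T.IsTree) {r u v w : U} (hu : T.Adj v u)
    (hw : T.Adj v w) (hdu : T.dist r v = T.dist r u + 1) (hdw : T.dist r v = T.dist r w + 1) :
    u = w := by
  have exists_isPath {x : U} (hx : T.Adj v x) (hdx : T.dist r v = T.dist r x + 1) :
      ∃ q : T.Walk r v, q.IsPath ∧ q.penultimate = x := by
    obtain ⟨q, hq⟩ := hT.connected.exists_walk_length_eq_dist r x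
    exact ⟨q.concat hx.symm, Walk.isPath_of_length_eq_dist _ (by rw [Walk.length_concat, hq, hdx]),
      Walk.penultimate_concat _ _⟩
  obtain ⟨q, hq, rfl⟩ := exists_isPath hu hdu
  obtain ⟨q', hq', rfl⟩ := exists_isPath hw hdw
  rw [(hT.existsUnique_path r v).unique hq hq']

lemma exists_adj_dist_eq_add_one_of_two_le_ncard (hT : T.IsTree) (r : U) {v : U}
    (hv : 2 ≤ (T.neighborSet v).ncard) : ∃ w, T.Adj v w ∧ T.dist r w = T.dist r v + 1 := by
  obtain ⟨a, ha, b, hb, hab⟩ := (Set.one_lt_ncard (Set.finite_of_ncard_pos (by omega))).1 hv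
  by_contra! hw
  exact hab (eq_of_adj_of_dist_eq_add_one hT ha hb
    ((hT.dist_eq_dist_add_one_of_adj r ha).resolve_right (hw a ha))
    ((hT.dist_eq_dist_add_one_of_adj r hb).resolve_right (hw b hb)))

/-- A leaf beyond `r₀` as seen from `r` is at distance `h` from `r₀`, hence farther from `r` unless
`r = r₀`. -/
lemma eq_of_forall_leaf_dist_eq [Finite U] (hT : T.IsTree) {h : ℕ} {r r₀ : U}
    (hr : ∀ v, T.dist r v ≤ h)
    (hr₀ : ∀ v, (T.neighborSet v).ncard ≤ 1 → T.dist r₀ v = h) : r = r₀ := by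
  obtain ⟨v, hv, hmax⟩ := Set.exists_max_image {v | T.dist r v = T.dist r r₀ + T.dist r₀ v}
    (T.dist r₀) (Set.toFinite _) ⟨r₀, by simp⟩
  simp only [Set.mem_ofPred_eq] at hv hmax
  by_cases hleaf : (T.neighborSet v).ncard ≤ 1
  · have := hr₀ v hleaf
    have := hr v
    exact hT.connected.dist_eq_zero_iff.1 (by omega)
  · obtain ⟨w, hvw, hw⟩ := exists_adj_dist_eq_add_one_of_two_le_ncard hT r (v := v) (by omega)
    have := hT.connected.dist_triangle (u := r) (v := r₀) (w := w)
    have := hT.connected.dist_triangle (u := r₀) (v := v) (w := w)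
    have := dist_eq_one_iff_adj.2 hvw
    have := hmax w (by omega)
    omega

theorem IsCompleteCubicTree.ncard_neighborSet_eq_three [Fintype U] {h : ℕ} {r : U}
    (hT : IsCompleteCubicTree T h) (hr : IsHCenter T h r) {v : U} (hv : T.dist r v < h) :
    (T.neighborSet v).ncard = 3 := by
  obtain ⟨⟨hTree, hdeg⟩, r₀, hr₀⟩ := hT
  obtain rfl := eq_of_forall_leaf_dist_eq hTree (fun v => (hr v).2) hr₀
  have hv1 : 1 < (T.neighborSet v).ncard := by
    by_contra! hle
    exact hv.ne (hr₀ v hle)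
  rcases hdeg with hdeg | hdeg
  · have := Set.ncard_le_ncard (Set.subset_univ (T.neighborSet v))
    rw [Set.ncard_univ, Nat.card_eq_fintype_card] at this
    omega
  · exact (hdeg v).resolve_left hv1.ne'

end Centers

section PartialEmbeddings

variable {V W : Type*} [DecidableEq V] [DecidableEq W] {G : SimpleGraph V} {H : SimpleGraph W}
  {r : {s : Finset V // G.IsNClique 3 s}} {rH : {s : Finset W // H.IsNClique 3 s}} {S : Set W}
  {φ : W → V}

lemma eq_of_mem_of_subset_insert {s t : {s : Finset W // H.IsNClique 3 s}} {u v w : W}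
    (hw : ∀ x ∈ S, H.Adj w x → x = u ∨ x = v) (ht : t.1 = {u, v, w}) (hws : w ∈ s.1)
    (hsS : ↑s.1 ⊆ insert w S) : s = t := by
  refine Subtype.ext (Finset.eq_of_subset_of_card_le (fun x hx => ?_)
    (by rw [s.2.card_eq, t.2.card_eq]))
  rw [ht]
  rcases eq_or_ne w x with rfl | hwx
  · simp
  · have hxS := (hsS hx).resolve_left hwx.symm
    rcases hw x hxS (s.2.isClique hws hx hwx) with rfl | rfl <;> simp

/-- A partial embedding of `H` into `G`, defined by `φ` on a region `S` glued together from
triangles: it is an isomorphism onto the induced image which carries the triangles of `H` in `S` to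
triangles of `G`, without increasing the distance to the root triangle in the weak dual. -/
structure IsPartialEmbedding (H : SimpleGraph W) (G : SimpleGraph V)
    (rH : {s : Finset W // H.IsNClique 3 s}) (r : {s : Finset V // G.IsNClique 3 s}) (S : Set W)
    (φ : W → V) : Prop where
  spanned : SpannedByTwoTree H S
  injOn : Set.InjOn φ S
  adj_iff : ∀ ⦃x⦄, x ∈ S → ∀ ⦃y⦄, y ∈ S → (G.Adj (φ x) (φ y) ↔ H.Adj x y)
  exists_triangle : ∀ s : {s : Finset W // H.IsNClique 3 s}, ↑s.1 ⊆ S →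
    ∃ t : {s : Finset V // G.IsNClique 3 s}, t.1 = s.1.image φ ∧
      (weakDual G).dist r t ≤ (weakDual H).dist rH s

namespace IsPartialEmbedding

lemma of_image_eq (h : rH.1.image φ = r.1) : IsPartialEmbedding H G rH r ↑rH.1 φ := by
  have hinj : Set.InjOn φ ↑rH.1 := Finset.card_image_iff.1 (by rw [h, r.2.card_eq, rH.2.card_eq])
  have hφ {x : W} (hx : x ∈ rH.1) : φ x ∈ r.1 := h ▸ Finset.mem_image_of_mem φ hx
  refine ⟨?_, hinj, fun x hx y hy => ⟨fun hadj => ?_, fun hadj => ?_⟩, fun s hs => ?_⟩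
  · obtain ⟨x, y, z, hxy, hxz, hyz, hrH⟩ := is3Clique_iff.1 rH.2
    have hset : (rH.1 : Set W) = insert z {x, y} := by
      rw [hrH, Finset.coe_insert, Finset.coe_pair, Set.pair_comm, Set.insert_comm]
    rw [hset]
    exact .glue (.edge hxy) (by simp) (by simp) hxy hxz hyz
  · exact rH.2.isClique hx hy (ne_of_apply_ne φ hadj.ne)
  · exact r.2.isClique (hφ hx) (hφ hy) (hinj.ne hx hy hadj.ne)
  · obtain rfl : s = rH := Subtype.ext <| Finset.eq_of_subset_of_card_le (Finset.coe_subset.1 hs)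
      (by rw [s.2.card_eq, rH.2.card_eq])
    exact ⟨r, h.symm, by simp⟩

lemma update_insert (hφ : IsPartialEmbedding H G rH r S φ) {t : {s : Finset W // H.IsNClique 3 s}}
    {t' : {s : Finset V // G.IsNClique 3 s}} {u v w : W} {w' : V} (hu : u ∈ S) (hv : v ∈ S)
    (hw : w ∉ S) (hw' : ∀ x ∈ S, φ x ≠ w') (ht : t.1 = {u, v, w}) (ht' : t'.1 = {φ u, φ v, w'})
    (hH : ∀ x ∈ S, H.Adj w x → x = u ∨ x = v) (hG : ∀ x ∈ S, G.Adj w' (φ x) → x = u ∨ x = v)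
    (hdist : (weakDual G).dist r t' ≤ (weakDual H).dist rH t) :
    IsPartialEmbedding H G rH r (insert w S) (Function.update φ w w') := by
  obtain ⟨huv, huw, hvw⟩ := is3Clique_triple_iff.1 (ht ▸ t.2)
  obtain ⟨-, huw', hvw'⟩ := is3Clique_triple_iff.1 (ht' ▸ t'.2)
  have hφw {x : W} (hx : x ∈ S) : Function.update φ w w' x = φ x :=
    Function.update_of_ne (ne_of_mem_of_not_mem hx hw) _ _
  have hadj {x : W} (hx : x ∈ S) : G.Adj w' (φ x) ↔ H.Adj w x := by
    refine ⟨fun h => ?_, fun h => ?_⟩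
    · rcases hG x hx h with rfl | rfl
      exacts [huw.symm, hvw.symm]
    · rcases hH x hx h with rfl | rfl
      exacts [huw'.symm, hvw'.symm]
  refine ⟨.glue hφ.spanned hu hv huv huw hvw, ?_, ?_, fun s hs => ?_⟩
  · rw [Set.injOn_insert hw, Function.update_self]
    refine ⟨hφ.injOn.congr fun x hx => (hφw hx).symm, ?_⟩
    rintro ⟨x, hx, hxw'⟩
    exact hw' x hx (hφw hx ▸ hxw')
  · rintro x (rfl | hx) y (rfl | hy)
    · simp
    · rw [Function.update_self, hφw hy, hadj hy]
    · rw [Function.update_self, hφw hx, G.adj_comm, H.adj_comm, hadj hx]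
    · rw [hφw hx, hφw hy, hφ.adj_iff hx hy]
  by_cases hws : w ∈ s.1
  · obtain rfl : s = t := eq_of_mem_of_subset_insert hH ht hws hs
    refine ⟨t', ?_, hdist⟩
    rw [ht, ht', Finset.image_insert, Finset.image_insert, Finset.image_singleton, hφw hu, hφw hv,
      Function.update_self]
  · have hsS : (s.1 : Set W) ⊆ S := fun x hx =>
      (hs hx).resolve_left (ne_of_mem_of_not_mem hx hws)
    obtain ⟨s', hs', hdist'⟩ := hφ.exists_triangle s hsS
    exact ⟨s', hs'.trans (Finset.image_congr fun x hx => (hφw (hsS hx)).symm), hdist'⟩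

/-- Otherwise the new vertex of `t'`, the new vertex of `t` and the third vertex of `s` would
correspond to three common neighbours of `u` and `v` in `H`. -/
lemma image_ne_of_inter_eq (hφ : IsPartialEmbedding H G rH r S φ) (hH : Outerplanar H)
    {s t : {s : Finset W // H.IsNClique 3 s}} {s' t' : {s : Finset V // G.IsNClique 3 s}}
    (hsS : ↑s.1 ⊆ S) (hs' : s'.1 = s.1.image φ) {u v w : W} {w' : V} (huv : u ≠ v)
    (hst : s.1 ∩ t.1 = {u, v}) (ht : t.1 = {u, v, w}) (hw : w ∉ S) (ht' : t'.1 = {φ u, φ v, w'})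
    (hw' : w' ∉ s'.1) : ∀ y ∈ S, φ y ≠ w' := by
  rintro y hy rfl
  obtain ⟨x, -, hsx⟩ := exists_eq_insert_of_inter_eq huv (Finset.inter_comm s.1 t.1 ▸ hst)
  have hmem {z : W} (hz : z ∈ s.1) : z ∈ S := hsS hz
  have hus : u ∈ s.1 := by simp [hsx]
  have hvs : v ∈ s.1 := by simp [hsx]
  have hxs : x ∈ s.1 := by simp [hsx]
  have hys : y ∉ s.1 := fun h => hw' (hs' ▸ Finset.mem_image_of_mem φ h)
  obtain ⟨-, hux, hvx⟩ := is3Clique_triple_iff.1 (hsx ▸ s.2)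
  obtain ⟨-, huw, hvw⟩ := is3Clique_triple_iff.1 (ht ▸ t.2)
  obtain ⟨-, huy, hvy⟩ := is3Clique_triple_iff.1 (ht' ▸ t'.2)
  rw [hφ.adj_iff (hmem hus) hy] at huy
  rw [hφ.adj_iff (hmem hvs) hy] at hvy
  exact hH.not_three_common_neighbors huv (ne_of_mem_of_not_mem (hmem hxs) hw)
    (ne_of_mem_of_not_mem hxs hys) (ne_of_mem_of_not_mem hy hw).symm ⟨hux, hvx⟩ ⟨huw, hvw⟩
    ⟨huy, hvy⟩

theorem exists_extension {h : ℕ} (hφ : IsPartialEmbedding H G rH r S φ) (hG : Outerplanar G)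
    (hr : ∀ s, (weakDual G).Reachable r s)
    (hdeg : ∀ s, (weakDual G).dist r s < h → ((weakDual G).neighborSet s).ncard = 3)
    (hH : Outerplanar H) (hrH : IsHCenter (weakDual H) h rH)
    {s t : {s : Finset W // H.IsNClique 3 s}} (hst : (weakDual H).Adj s t) (hsS : ↑s.1 ⊆ S)
    (htS : ¬ ↑t.1 ⊆ S) (hdist : (weakDual H).dist rH t = (weakDual H).dist rH s + 1) :
    ∃ w ∉ S, ∃ φ', IsPartialEmbedding H G rH r (insert w S) φ' ∧ Set.EqOn φ' φ S := by
  obtain ⟨u, v, huv, hst_inter⟩ := Finset.card_eq_two.1 (weakDual_adj.1 hst)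
  obtain ⟨w, -, ht⟩ := exists_eq_insert_of_inter_eq huv hst_inter
  have hmem {x : W} (hx : x ∈ ({u, v} : Finset W)) : x ∈ s.1 :=
    Finset.mem_of_mem_inter_left (hst_inter ▸ hx)
  have hus : u ∈ s.1 := hmem (by simp)
  have hvs : v ∈ s.1 := hmem (by simp)
  have hw : w ∉ S := fun hw => htS <| by
    simp [ht, Set.insert_subset_iff, hw, hsS hus, hsS hvs]
  obtain ⟨s', hs', hds'⟩ := hφ.exists_triangle s hsS
  have hφuv : φ u ≠ φ v := hφ.injOn.ne (hsS hus) (hsS hvs) huv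
  obtain ⟨t', hst', hst'_inter⟩ := hG.exists_weakDual_adj
    (hdeg s' (by have := (hrH t).2; omega))
    (hs' ▸ Finset.mem_image_of_mem φ hus) (hs' ▸ Finset.mem_image_of_mem φ hvs) hφuv
  obtain ⟨w', hw's', ht'⟩ := exists_eq_insert_of_inter_eq hφuv hst'_inter
  have hw' := hφ.image_ne_of_inter_eq hH hsS hs' huv hst_inter ht hw ht' hw's'
  obtain ⟨-, huw, hvw⟩ := is3Clique_triple_iff.1 (ht ▸ t.2)
  obtain ⟨-, huw', hvw'⟩ := is3Clique_triple_iff.1 (ht' ▸ t'.2)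
  have himage : SpannedByTwoTree G (φ '' S) :=
    hφ.spanned.image fun x hx y hy => (hφ.adj_iff hx hy).2
  refine ⟨w, hw, _, hφ.update_insert (hsS hus) (hsS hvs) hw hw' ht ht' (fun x hx hwx => ?_)
    (fun x hx hwx => ?_) ?_, fun x hx => Function.update_of_ne (ne_of_mem_of_not_mem hx hw) _ _⟩
  · exact hH.eq_or_eq_of_adj hφ.spanned hw (hsS hus) (hsS hvs) hx huv huw.symm hvw.symm hwx
  · rw [← hφ.injOn.eq_iff hx (hsS hus), ← hφ.injOn.eq_iff hx (hsS hvs)]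
    exact hG.eq_or_eq_of_adj himage (by rintro ⟨y, hy, hyw'⟩; exact hw' y hy hyw')
      (Set.mem_image_of_mem φ (hsS hus)) (Set.mem_image_of_mem φ (hsS hvs))
      (Set.mem_image_of_mem φ hx) hφuv huw'.symm hvw'.symm hwx
  · have := (hr s').dist_triangle_left t'
    have := dist_eq_one_iff_adj.2 hst'
    omega

theorem exists_univ [Finite W] {h : ℕ} (hφ : IsPartialEmbedding H G rH r S φ) (hS : ↑rH.1 ⊆ S)
    (hG : Outerplanar G) (hr : ∀ s, (weakDual G).Reachable r s)
    (hdeg : ∀ s, (weakDual G).dist r s < h → ((weakDual G).neighborSet s).ncard = 3)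
    (hH : Outerplanar H) (hcover : ∀ x, ∃ s, H.IsNClique 3 s ∧ x ∈ s)
    (hrH : IsHCenter (weakDual H) h rH) :
    ∃ ψ, IsPartialEmbedding H G rH r Set.univ ψ ∧ Set.EqOn ψ φ S := by
  obtain ⟨T, hST, ⟨ψ, hψ, hψφ⟩, hmax⟩ := Finite.exists_le_maximal
    (p := fun T : Set W => ∃ ψ, IsPartialEmbedding H G rH r T ψ ∧ Set.EqOn ψ φ S)
    ⟨φ, hφ, Set.eqOn_refl φ S⟩
  suffices hT : T = Set.univ from ⟨ψ, hT ▸ hψ, hψφ⟩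
  refine Set.eq_univ_of_forall fun x => by_contra fun hx => ?_
  obtain ⟨s, hs, hxs⟩ := hcover x
  obtain ⟨s, hsT, t, htT, hst, hdist⟩ := exists_adj_mem_notMem_dist_eq_add_one
    (A := {s | ↑s.1 ⊆ T}) (hS.trans hST) (fun h : ↑s ⊆ T => hx (h hxs)) (hrH ⟨s, hs⟩).1
  obtain ⟨w, hw, ψ', hψ', hψψ'⟩ := hψ.exists_extension hG hr hdeg hH hrH hst hsT htT hdist
  exact hw (hmax ⟨ψ', hψ', (hψψ'.mono hST).trans hψφ⟩ (Set.subset_insert w T)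
    (Set.mem_insert w T))

end IsPartialEmbedding

end PartialEmbeddings

theorem universal_outerplanar_subgraph_embedding_general
    {V W : Type*} [DecidableEq V] [Finite W] [DecidableEq W]
    (h : ℕ) (G : SimpleGraph V) (H : SimpleGraph W) [Fintype {s : Finset V // G.IsNClique 3 s}]
    (hG : Outerplanar G) (hGdual : IsCompleteCubicTree (weakDual G) h)
    (r : {s : Finset V // G.IsNClique 3 s}) (hr : IsHCenter (weakDual G) h r)
    (hH : MaximalOuterplanar H)
    (rH : {s : Finset W // H.IsNClique 3 s}) (hrH : IsHCenter (weakDual H) h rH)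
    (x1 x2 x3 : W) (y1 y2 y3 : V)
    (hx : (rH : Finset W) = {x1, x2, x3}) (hy : (r : Finset V) = {y1, y2, y3}) :
    ∃ φ : W → V, Function.Injective φ ∧ (∀ ⦃a b : W⦄, H.Adj a b → G.Adj (φ a) (φ b)) ∧
      φ x1 = y1 ∧ φ x2 = y2 ∧ φ x3 = y3 := by
  obtain ⟨h12, h13, h23⟩ := is3Clique_triple_iff.1 (hx ▸ rH.2)
  let φ₀ : W → V := fun x => if x = x1 then y1 else if x = x2 then y2 else y3
  have hφ₁ : φ₀ x1 = y1 := by simp [φ₀]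
  have hφ₂ : φ₀ x2 = y2 := by simp [φ₀, h12.ne']
  have hφ₃ : φ₀ x3 = y3 := by simp [φ₀, h13.ne', h23.ne']
  have hφ₀ : IsPartialEmbedding H G rH r ↑rH.1 φ₀ :=
    .of_image_eq (by simp [hx, hy, Finset.image_insert, hφ₁, hφ₂, hφ₃])
  have hcard : 3 ≤ ENat.card W := by
    have := Set.encard_le_encard (Set.subset_univ (rH.1 : Set W))
    rwa [Set.encard_coe_eq_coe_finsetCard, rH.2.card_eq, Set.encard_univ] at this
  obtain ⟨φ, hφ, hφφ₀⟩ := hφ₀.exists_univ subset_rfl hG (fun s => (hr s).1)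
    (fun s => hGdual.ncard_neighborSet_eq_three hr) hH.1 (hH.exists_mem_triangle hcard) hrH
  exact ⟨φ, Set.injOn_univ.1 hφ.injOn, fun a b => (hφ.adj_iff trivial trivial).2,
    (hφφ₀ (by simp [hx])).trans hφ₁, (hφφ₀ (by simp [hx])).trans hφ₂,
    (hφφ₀ (by simp [hx])).trans hφ₃⟩

/-- Let `G` be the universal outerplanar graph with height `h` (the maximal outerplanar graph
whose weak dual tree is the complete cubic tree with height `h`), with `h`-center `r`, whose
incident vertices are `y1, y2, y3`. Let `H` be a maximal outerplanar graph on at least three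
vertices whose weak dual tree has an `h`-center `r_H`, with incident vertices `x1, x2, x3`.
Then there is a subgraph embedding `φ` of `H` into `G` with `φ xᵢ = yᵢ` for `i ∈ {1,2,3}`. -/
theorem universal_outerplanar_subgraph_embedding
    {V W : Type*} [Fintype V] [DecidableEq V] [Fintype W] [DecidableEq W]
    (h : ℕ) (G : SimpleGraph V) (H : SimpleGraph W)
    (hG : MaximalOuterplanar G) (hGdual : IsCompleteCubicTree (weakDual G) h)
    (r : {s : Finset V // G.IsNClique 3 s}) (hr : IsHCenter (weakDual G) h r)
    (hH : MaximalOuterplanar H) (hWcard : 3 ≤ Fintype.card W)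
    (rH : {s : Finset W // H.IsNClique 3 s}) (hrH : IsHCenter (weakDual H) h rH)
    (x1 x2 x3 : W) (y1 y2 y3 : V)
    (hx : (rH : Finset W) = {x1, x2, x3}) (hy : (r : Finset V) = {y1, y2, y3})
    (hx12 : x1 ≠ x2) (hx13 : x1 ≠ x3) (hx23 : x2 ≠ x3)
    (hy12 : y1 ≠ y2) (hy13 : y1 ≠ y3) (hy23 : y2 ≠ y3) :
    ∃ φ : W → V, Function.Injective φ ∧ (∀ ⦃a b : W⦄, H.Adj a b → G.Adj (φ a) (φ b)) ∧
      φ x1 = y1 ∧ φ x2 = y2 ∧ φ x3 = y3 := by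
  exact universal_outerplanar_subgraph_embedding_general h G H hG.1 hGdual r hr hH rH hrH
    x1 x2 x3 y1 y2 y3 hx hy
end
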